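/- For the exponential random graph model with parameter β in the subcritical region, let H be a fixed finite simple graph with v vertices and e ≥ 1 edges, and define W_H = (|Hom(H, G_Y)| − E|Hom(H, G_Y)|)/(2 n^{v−2} e p^{e−1} σ_n). Then there exists a constant C > 0, depending only on β₁,…,β_k, H₁,…,H_k and H, such that for all n ≥ 2, d_Wass(W_H, Z) ≤ C n^{−1/4}, where Z is a standard normal random variable. -/

import Mathlib

open MeasureTheory ProbabilityTheory Real Finset

noncomputable section

/-- The index set `I = {(i,j) : 1 ≤ i < j ≤ n}` of potential edges on `n` labeled vertices. -/
def EdgeIdx (n : ℕ) : Type := {p : Fin n × Fin n // p.1 < p.2}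

instance (n : ℕ) : Fintype (EdgeIdx n) := by unfold EdgeIdx; infer_instance
instance (n : ℕ) : DecidableEq (EdgeIdx n) := by unfold EdgeIdx; infer_instance

/-- Adjacency of the graph `G_y` encoded by the edge-indicator vector `y`. -/
def yAdj {n : ℕ} (y : EdgeIdx n → Bool) (a b : Fin n) : Bool :=
  if h : a < b then y ⟨(a, b), h⟩ else if h' : b < a then y ⟨(b, a), h'⟩ else false

/-- The number of edges of a graph `H`. -/
def eCount {V : Type} [Fintype V] (H : SimpleGraph V) : ℕ :=
  Nat.card H.edgeSet

/-- `|Hom(H, G_y)|`: the number of injective maps from the vertex set of `H` to `Fin n`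
mapping every edge of `H` to an edge of `G_y`. -/
def homCount {V : Type} [Fintype V] {n : ℕ} (H : SimpleGraph V) (y : EdgeIdx n → Bool) : ℕ :=
  Nat.card {φ : V → Fin n //
    Function.Injective φ ∧ ∀ a b, H.Adj a b → yAdj y (φ a) (φ b) = true}

/-- `|Hom(H, G_y, s)|`: the number of pairs `(φ, (u, v))` where `φ` is injective, `(u, v)` is
an ordered pair of adjacent vertices of `H` with `{φ u, φ v} = s`, and every edge of `H` other
than `{u, v}` is mapped by `φ` to an edge of `G_y` (regardless of whether the edge `s` is
present in `G_y`). -/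
def homCountAt {V : Type} [Fintype V] {n : ℕ} (H : SimpleGraph V) (y : EdgeIdx n → Bool)
    (s : EdgeIdx n) : ℕ :=
  Nat.card {t : (V → Fin n) × V × V //
    Function.Injective t.1 ∧ H.Adj t.2.1 t.2.2 ∧
    Sym2.mk (t.1 t.2.1, t.1 t.2.2) = Sym2.mk (s.1.1, s.1.2) ∧
    ∀ a b, H.Adj a b → Sym2.mk (a, b) ≠ Sym2.mk (t.2.1, t.2.2) →
      yAdj y (t.1 a) (t.1 b) = true}

section ERGM

variable {k : ℕ} (β : Fin (k + 1) → ℝ) (v : Fin (k + 1) → ℕ)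
  (H : ∀ j : Fin (k + 1), SimpleGraph (Fin (v j)))

/-- The (unnormalized) ERGM weight `exp (Σ_j β_j n^{2−v_j} |Hom(H_j, G_y)|)`. -/
def ergmWeight (n : ℕ) (y : EdgeIdx n → Bool) : ℝ :=
  Real.exp (∑ j, β j * (n : ℝ) ^ ((2 : ℤ) - (v j : ℤ)) * (homCount (H j) y : ℝ))

/-- The ERGM normalizing constant. -/
def ergmZ (n : ℕ) : ℝ := ∑ y : EdgeIdx n → Bool, ergmWeight β v H n y

/-- The ERGM probability of the configuration `y`. -/
def ergmProb (n : ℕ) (y : EdgeIdx n → Bool) : ℝ := ergmWeight β v H n y / ergmZ β v H n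

/-- Expectation of `G(Y)` under the ERGM. -/
def ergmExp (n : ℕ) (G : (EdgeIdx n → Bool) → ℝ) : ℝ :=
  ∑ y : EdgeIdx n → Bool, ergmProb β v H n y * G y

/-- Variance of `G(Y)` under the ERGM. -/
def ergmVar (n : ℕ) (G : (EdgeIdx n → Bool) → ℝ) : ℝ :=
  ergmExp β v H n (fun y => (G y - ergmExp β v H n G) ^ 2)

/-- The total number of edges of `G_y`. -/
def edgeSum {n : ℕ} (y : EdgeIdx n → Bool) : ℝ :=
  ∑ s : EdgeIdx n, (if y s then (1 : ℝ) else 0)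

/-- `Φ_β(a) = Σ_j β_j e_j a^{e_j − 1}`. -/
def PhiFn : ℝ → ℝ := fun a =>
  ∑ j, β j * (eCount (H j) : ℝ) * a ^ (eCount (H j) - 1)

/-- `φ_β(a) = e^{2Φ_β(a)} / (e^{2Φ_β(a)} + 1)`. -/
def phiFn : ℝ → ℝ := fun a =>
  Real.exp (2 * PhiFn β v H a) / (Real.exp (2 * PhiFn β v H a) + 1)

/-- `σ_n² = N p (1−p) / (1 − 2 p (1−p) Φ_β'(p))` with `N = n(n−1)/2`. -/
def sigmaSq (p : ℝ) (n : ℕ) : ℝ :=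
  ((n : ℝ) * ((n : ℝ) - 1) / 2) * p * (1 - p) /
    (1 - 2 * p * (1 - p) * deriv (PhiFn β v H) p)

/-- `μ_n = E Σ_{s ∈ I} Y_s`. -/
def muN (n : ℕ) : ℝ := ergmExp β v H n (edgeSum)

/-- The standardized number of edges `W_n`. -/
def Wn (p : ℝ) (n : ℕ) (y : EdgeIdx n → Bool) : ℝ :=
  (edgeSum y - muN β v H n) / Real.sqrt (sigmaSq β v H p n)

end ERGM

/-! ### Weighted averages on the discrete cube -/

/-- The real-valued indicator of a Boolean. -/
def bval (b : Bool) : ℝ := if b then 1 else 0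

@[simp] lemma bval_true : bval true = 1 := rfl
@[simp] lemma bval_false : bval false = 0 := rfl

lemma bval_nonneg (b : Bool) : 0 ≤ bval b := by cases b <;> simp

lemma bval_le_one (b : Bool) : bval b ≤ 1 := by cases b <;> simp

section Cube

variable {I : Type} [Fintype I] [DecidableEq I]

/-- The average of `f` with respect to the weights `μ`. -/
def wexp (μ f : (I → Bool) → ℝ) : ℝ := ∑ y, μ y * f y

/-- The variance of `f` with respect to the probability weights `μ`. -/
def wvar (μ f : (I → Bool) → ℝ) : ℝ := wexp μ (fun y => f y ^ 2) - wexp μ f ^ 2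

/-- The probability of `s` with respect to the weights `μ`. -/
def wprob (μ : (I → Bool) → ℝ) (s : Set (I → Bool)) : ℝ := wexp μ (s.indicator 1)

/-- `μ` is a probability weight on the cube, and `σ t` is the conditional probability that the
coordinate `t` is `true` given all the others. -/
structure IsCondModel (μ : (I → Bool) → ℝ) (σ : I → (I → Bool) → ℝ) : Prop where
  nonneg : ∀ y, 0 ≤ μ y
  sum_one : ∑ y, μ y = 1
  cond_nonneg : ∀ t y, 0 ≤ σ t y
  cond_le_one : ∀ t y, σ t y ≤ 1
  cond_update : ∀ t y b, σ t (Function.update y t b) = σ t y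
  wexp_cond : ∀ t (h : (I → Bool) → ℝ), (∀ y b, h (Function.update y t b) = h y) →
    wexp μ (fun y => (bval (y t) - σ t y) * h y) = 0

section Basic

variable {μ : (I → Bool) → ℝ}

lemma wexp_add (f g : (I → Bool) → ℝ) :
    wexp μ (fun y => f y + g y) = wexp μ f + wexp μ g := by
  simp [wexp, mul_add, sum_add_distrib]

lemma wexp_sub (f g : (I → Bool) → ℝ) :
    wexp μ (fun y => f y - g y) = wexp μ f - wexp μ g := by
  simp [wexp, mul_sub, sum_sub_distrib]

lemma wexp_const_mul (c : ℝ) (f : (I → Bool) → ℝ) :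
    wexp μ (fun y => c * f y) = c * wexp μ f := by
  simp only [wexp, mul_sum]
  exact sum_congr rfl fun y _ => by ring

lemma wexp_sum {J : Type*} (s : Finset J) (f : J → (I → Bool) → ℝ) :
    wexp μ (fun y => ∑ i ∈ s, f i y) = ∑ i ∈ s, wexp μ (f i) := by
  simp only [wexp, mul_sum]
  exact sum_comm

lemma wexp_const (h1 : ∑ y, μ y = 1) (c : ℝ) : wexp μ (fun _ => c) = c := by
  simp [wexp, ← sum_mul, h1]

lemma wexp_mono (h0 : ∀ y, 0 ≤ μ y) {f g : (I → Bool) → ℝ} (h : ∀ y, f y ≤ g y) :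
    wexp μ f ≤ wexp μ g :=
  sum_le_sum fun y _ => mul_le_mul_of_nonneg_left (h y) (h0 y)

lemma wexp_nonneg (h0 : ∀ y, 0 ≤ μ y) {f : (I → Bool) → ℝ} (h : ∀ y, 0 ≤ f y) :
    0 ≤ wexp μ f :=
  sum_nonneg fun y _ => mul_nonneg (h0 y) (h y)

lemma abs_wexp_le (h0 : ∀ y, 0 ≤ μ y) (f : (I → Bool) → ℝ) :
    |wexp μ f| ≤ wexp μ (fun y => |f y|) := by
  refine (abs_sum_le_sum_abs _ _).trans (le_of_eq (sum_congr rfl fun y _ => ?_))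
  rw [abs_mul, abs_of_nonneg (h0 y)]

lemma wexp_sq_sub (h1 : ∑ y, μ y = 1) (f : (I → Bool) → ℝ) (c : ℝ) :
    wexp μ (fun y => (f y - c) ^ 2) = wvar μ f + (wexp μ f - c) ^ 2 := by
  have : (fun y => (f y - c) ^ 2) = fun y => (f y ^ 2 - (2 * c) * f y) + c ^ 2 := by
    ext y; ring
  rw [this, wexp_add, wexp_sub, wexp_const_mul, wexp_const h1, wvar]
  ring

lemma wexp_sq_sub_wexp (h1 : ∑ y, μ y = 1) (f : (I → Bool) → ℝ) :
    wexp μ (fun y => (f y - wexp μ f) ^ 2) = wvar μ f := by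
  rw [wexp_sq_sub h1]; ring

lemma wvar_nonneg (h0 : ∀ y, 0 ≤ μ y) (h1 : ∑ y, μ y = 1) (f : (I → Bool) → ℝ) :
    0 ≤ wvar μ f := by
  rw [← wexp_sq_sub_wexp h1]
  exact wexp_nonneg h0 fun y => sq_nonneg _

lemma sq_wexp_le (h0 : ∀ y, 0 ≤ μ y) (h1 : ∑ y, μ y = 1) (f : (I → Bool) → ℝ) :
    wexp μ f ^ 2 ≤ wexp μ (fun y => f y ^ 2) := by
  have := wvar_nonneg h0 h1 f
  unfold wvar at this
  linarith

lemma wexp_le_sqrt (h0 : ∀ y, 0 ≤ μ y) (h1 : ∑ y, μ y = 1) (f : (I → Bool) → ℝ) {a : ℝ}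
    (ha : 0 ≤ a) (h : wexp μ (fun y => f y ^ 2) ≤ a ^ 2) : wexp μ (fun y => |f y|) ≤ a := by
  refine abs_le_of_sq_le_sq' ?_ ha |>.2
  refine (sq_wexp_le h0 h1 _).trans ?_
  simpa using h

lemma wprob_nonneg (h0 : ∀ y, 0 ≤ μ y) (s : Set (I → Bool)) : 0 ≤ wprob μ s :=
  wexp_nonneg h0 fun y => Set.indicator_nonneg (fun _ _ => zero_le_one) y

lemma wprob_mono (h0 : ∀ y, 0 ≤ μ y) {s t : Set (I → Bool)} (h : s ⊆ t) :
    wprob μ s ≤ wprob μ t :=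
  wexp_mono h0 fun y => Set.indicator_le_indicator_of_subset h (fun _ => zero_le_one) y

lemma wprob_biUnion_le (h0 : ∀ y, 0 ≤ μ y) {J : Type*} (T : Finset J)
    (s : J → Set (I → Bool)) : wprob μ (⋃ i ∈ T, s i) ≤ ∑ i ∈ T, wprob μ (s i) := by
  unfold wprob
  rw [← wexp_sum]
  refine wexp_mono h0 fun y => ?_
  by_cases hy : y ∈ ⋃ i ∈ T, s i
  · obtain ⟨i, hi, hyi⟩ := Set.mem_iUnion₂.1 hy
    rw [Set.indicator_of_mem hy]
    refine le_trans (le_of_eq ?_) (single_le_sum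
      (fun j _ => Set.indicator_nonneg (fun _ _ => zero_le_one) y) hi)
    rw [Set.indicator_of_mem hyi, Pi.one_apply]
  · rw [Set.indicator_of_notMem hy]
    exact sum_nonneg fun j _ => Set.indicator_nonneg (fun _ _ => zero_le_one) y

lemma wprob_abs_gt_le (h0 : ∀ y, 0 ≤ μ y) (f : (I → Bool) → ℝ) {a : ℝ} (ha : 0 < a) (m : ℕ) :
    wprob μ {y | a < |f y|} ≤ wexp μ (fun y => f y ^ (2 * m)) / a ^ (2 * m) := by
  rw [div_eq_inv_mul, ← wexp_const_mul]
  refine wexp_mono h0 fun y => ?_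
  by_cases hy : y ∈ {y | a < |f y|}
  · rw [Set.indicator_of_mem hy, Pi.one_apply, ← div_eq_inv_mul, one_le_div (by positivity),
      ← (even_two_mul m).pow_abs (f y)]
    exact pow_le_pow_left₀ ha.le (le_of_lt hy) _
  · rw [Set.indicator_of_notMem hy]
    have := (even_two_mul m).pow_nonneg (f y)
    positivity

end Basic

section Noise

variable {μ : (I → Bool) → ℝ} {σ : I → (I → Bool) → ℝ}

lemma IsCondModel.wexp_cond_mul (M : IsCondModel μ σ) (t : I) {w : (I → Bool) → ℝ}
    (hw : ∀ y b, w (Function.update y t b) = w y) (h : (I → Bool) → ℝ) :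
    wexp μ (fun y => w y * (bval (y t) - σ t y) * h y) =
      wexp μ (fun y => w y * (bval (y t) - σ t y) *
        (h y - h (Function.update y t false))) := by
  have := M.wexp_cond t (fun y => w y * h (Function.update y t false)) (fun y b => by
    simp [hw])
  rw [← sub_zero (wexp μ _), ← this, ← wexp_sub]
  congr 1
  ext y
  ring

lemma IsCondModel.abs_bval_sub_le (M : IsCondModel μ σ) (t : I) (y : I → Bool) :
    |bval (y t) - σ t y| ≤ 1 := by
  have := M.cond_nonneg t y
  have := M.cond_le_one t y
  have := bval_nonneg (y t)
  have := bval_le_one (y t)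
  rw [abs_le]; constructor <;> linarith

/-- Constants in the moment bounds for sums of conditionally centred terms. -/
def noiseConst (C : ℝ) : ℕ → ℝ
  | 0 => 1
  | m + 1 => C * ((2 * m + 1) * 2 ^ (2 * m)) * (noiseConst C m + 1)

lemma abs_odd_pow_sub_le {a b D : ℝ} (h : |a - b| ≤ D) (m : ℕ) :
    |a ^ (2 * m + 1) - b ^ (2 * m + 1)| ≤
      (2 * m + 1) * 2 ^ (2 * m) * D * (a ^ (2 * m) + D ^ (2 * m)) := by
  have hD : 0 ≤ D := (abs_nonneg _).trans h
  have h1 := abs_pow_sub_pow_le (a := a) (b := b) (n := 2 * m + 1)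
  have hb : |b| ≤ |a| + D := by
    have := abs_sub_abs_le_abs_sub b a
    rw [abs_sub_comm] at this; linarith
  have hm : max |a| |b| ≤ |a| + D := max_le (by linarith) hb
  have h2 : (|a| + D) ^ (2 * m) ≤ 2 ^ (2 * m) * (a ^ (2 * m) + D ^ (2 * m)) := by
    have := add_pow_le (abs_nonneg a) hD (2 * m)
    rw [(even_two_mul m).pow_abs] at this
    refine this.trans (mul_le_mul_of_nonneg_right ?_ ?_)
    · exact pow_le_pow_right₀ (by norm_num) (Nat.sub_le _ _)
    · have := (even_two_mul m).pow_nonneg a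
      positivity
  have h3 : max |a| |b| ^ (2 * m) ≤ (|a| + D) ^ (2 * m) :=
    pow_le_pow_left₀ (le_max_of_le_left (abs_nonneg a)) hm _
  calc _ ≤ |a - b| * ((2 * m + 1 : ℕ) : ℝ) * max |a| |b| ^ (2 * m) := by simpa using h1
    _ ≤ D * ((2 * m + 1 : ℕ) : ℝ) * (2 ^ (2 * m) * (a ^ (2 * m) + D ^ (2 * m))) := by
        gcongr
        exact h3.trans h2
    _ = _ := by push_cast; ring

lemma noiseConst_nonneg {C : ℝ} (hC : 0 ≤ C) (m : ℕ) : 0 ≤ noiseConst C m := by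
  induction m with
  | zero => simp [noiseConst]
  | succ m ih => simp only [noiseConst]; positivity

/-- Moment bounds for a normalised sum of conditionally centred terms with bounded influences. -/
lemma IsCondModel.wexp_noise_pow_le (M : IsCondModel μ σ) {J : Type*} (S : Finset J)
    {κ C D : ℝ} (hκ : 0 ≤ κ) (hD : 0 ≤ D) (hD1 : D ≤ 1) (hC : κ * #S ≤ C)
    (τ : J → I) (w : J → (I → Bool) → ℝ) (hw1 : ∀ i y, |w i y| ≤ 1)
    (hw : ∀ i ∈ S, ∀ y b, w i (Function.update y (τ i) b) = w i y) {G : (I → Bool) → ℝ}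
    (hG : ∀ y, G y = κ * ∑ i ∈ S, w i y * (bval (y (τ i)) - σ (τ i) y))
    (hGD : ∀ t y, |G y - G (Function.update y t false)| ≤ D) (m : ℕ) :
    wexp μ (fun y => G y ^ (2 * m)) ≤ noiseConst C m * D ^ m := by
  have hC0 : 0 ≤ C := le_trans (by positivity) hC
  induction m with
  | zero => simp [noiseConst, wexp_const M.sum_one]
  | succ m ih =>
    have e1 : (fun y => G y ^ (2 * (m + 1))) = fun y =>
        κ * ∑ i ∈ S, w i y * (bval (y (τ i)) - σ (τ i) y) * G y ^ (2 * m + 1) := by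
      ext y
      rw [← sum_mul, ← mul_assoc, ← hG]; ring
    rw [e1, wexp_const_mul, wexp_sum]
    set A : ℝ := (2 * m + 1) * 2 ^ (2 * m) * D *
      (wexp μ (fun y => G y ^ (2 * m)) + D ^ (2 * m)) with hA
    have hterm : ∀ i ∈ S, wexp μ (fun y => w i y * (bval (y (τ i)) - σ (τ i) y) *
        G y ^ (2 * m + 1)) ≤ A := by
      intro i hi
      rw [M.wexp_cond_mul (τ i) (hw i hi) (fun y => G y ^ (2 * m + 1))]
      have hA' : A = wexp μ (fun y => (2 * m + 1) * 2 ^ (2 * m) * D *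
          (G y ^ (2 * m) + D ^ (2 * m))) := by
        rw [wexp_const_mul, wexp_add, wexp_const M.sum_one]
      rw [hA']
      refine wexp_mono M.nonneg fun y => (le_abs_self _).trans ?_
      rw [abs_mul, abs_mul]
      have h1 := hw1 i y
      have h2 := M.abs_bval_sub_le (τ i) y
      have h3 := abs_odd_pow_sub_le (hGD (τ i) y) m
      have h4 : |w i y| * |bval (y (τ i)) - σ (τ i) y| ≤ 1 := mul_le_one₀ h1 (abs_nonneg _) h2
      calc _ ≤ 1 * _ := mul_le_mul_of_nonneg_right h4 (abs_nonneg _)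
        _ ≤ _ := by rw [one_mul]; exact h3
    have hA0 : 0 ≤ wexp μ (fun y => G y ^ (2 * m)) :=
      wexp_nonneg M.nonneg fun y => (even_two_mul m).pow_nonneg _
    have hAn : 0 ≤ A := by positivity
    have hDD : D ^ (2 * m) ≤ D ^ m := pow_le_pow_of_le_one hD hD1 (by omega)
    calc κ * ∑ i ∈ S, wexp μ (fun y => w i y * (bval (y (τ i)) - σ (τ i) y) *
            G y ^ (2 * m + 1))
        ≤ κ * ∑ _i ∈ S, A := mul_le_mul_of_nonneg_left (sum_le_sum hterm) hκ
      _ = κ * #S * A := by rw [sum_const, nsmul_eq_mul, mul_assoc]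
      _ ≤ C * A := mul_le_mul_of_nonneg_right hC hAn
      _ ≤ C * ((2 * m + 1) * 2 ^ (2 * m) * D * (noiseConst C m * D ^ m + D ^ m)) := by
          rw [hA]; gcongr
      _ = noiseConst C (m + 1) * D ^ (m + 1) := by simp only [noiseConst]; ring

end Noise

section Correlation

variable {μ : (I → Bool) → ℝ}

/-- The smallest nonnegative increasing function above `U` on `Γ` (for `U ≥ 0`). -/
def monoExt (Γ : Set (I → Bool)) (U : (I → Bool) → ℝ) (y : I → Bool) : ℝ :=
  ⨆ z : {z // z ∈ Γ ∧ z ≤ y}, U z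

lemma monoExt_nonneg {Γ : Set (I → Bool)} {U : (I → Bool) → ℝ} (hU : ∀ y, 0 ≤ U y)
    (y : I → Bool) : 0 ≤ monoExt Γ U y :=
  Real.iSup_nonneg fun z => hU z

lemma monoExt_le {Γ : Set (I → Bool)} {U : (I → Bool) → ℝ} {B : ℝ} (hB : 0 ≤ B)
    (hU : ∀ y, U y ≤ B) (y : I → Bool) : monoExt Γ U y ≤ B :=
  Real.iSup_le (fun z => hU z) hB

lemma monoExt_monotone {Γ : Set (I → Bool)} {U : (I → Bool) → ℝ} (hU : ∀ y, 0 ≤ U y) :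
    Monotone (monoExt Γ U) := fun _ b hab =>
  Real.iSup_le (fun z => le_ciSup (f := fun z : {z // z ∈ Γ ∧ z ≤ b} => U z)
    (Set.finite_range _).bddAbove ⟨z.1, z.2.1, z.2.2.trans hab⟩) (monoExt_nonneg hU b)

lemma monoExt_eq {Γ : Set (I → Bool)} {U : (I → Bool) → ℝ} (hU : ∀ y, 0 ≤ U y)
    (hΓ : MonotoneOn U Γ) {y : I → Bool} (hy : y ∈ Γ) : monoExt Γ U y = U y := by
  refine le_antisymm (Real.iSup_le (fun z => hΓ z.2.1 hy z.2.2) (hU y)) ?_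
  exact le_ciSup (f := fun z : {z // z ∈ Γ ∧ z ≤ y} => U z)
    (Set.finite_range _).bddAbove ⟨y, hy, le_rfl⟩

lemma abs_wexp_sub_le_of_eqOn (h0 : ∀ y, 0 ≤ μ y) {Γ : Set (I → Bool)}
    {f g : (I → Bool) → ℝ} {B : ℝ} (hf : ∀ y, f y ∈ Set.Icc 0 B) (hg : ∀ y, g y ∈ Set.Icc 0 B)
    (hfg : ∀ y ∈ Γ, f y = g y) : |wexp μ f - wexp μ g| ≤ B * wprob μ Γᶜ := by
  rw [← wexp_sub, wprob, ← wexp_const_mul]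
  refine (abs_wexp_le h0 _).trans (wexp_mono h0 fun y => ?_)
  by_cases hy : y ∈ Γ
  · simp [hfg y hy, hy]
  · have hy' : y ∈ Γᶜ := hy
    rw [Set.indicator_of_mem hy', Pi.one_apply, mul_one, abs_le]
    have := hf y
    have := hg y
    simp only [Set.mem_Icc] at *
    constructor <;> linarith

/-- The FKG inequality for functions that are only increasing on a set `Γ`. -/
lemma wexp_mul_ge_of_monotoneOn (h0 : ∀ y, 0 ≤ μ y) (h1 : ∑ y, μ y = 1)
    (hμ : ∀ a b, μ a * μ b ≤ μ (a ⊓ b) * μ (a ⊔ b)) {Γ : Set (I → Bool)}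
    {U V : (I → Bool) → ℝ} {B : ℝ} (hU : ∀ y, U y ∈ Set.Icc 0 B) (hV : ∀ y, V y ∈ Set.Icc 0 B)
    (hUΓ : MonotoneOn U Γ) (hVΓ : MonotoneOn V Γ) :
    wexp μ U * wexp μ V - 3 * B ^ 2 * wprob μ Γᶜ ≤ wexp μ (fun y => U y * V y) := by
  have hB : 0 ≤ B := (hU fun _ => false).1.trans (hU fun _ => false).2
  set U' := monoExt Γ U
  set V' := monoExt Γ V
  have hU' : ∀ y, U' y ∈ Set.Icc 0 B := fun y =>
    ⟨monoExt_nonneg (fun y => (hU y).1) y, monoExt_le hB (fun y => (hU y).2) y⟩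
  have hV' : ∀ y, V' y ∈ Set.Icc 0 B := fun y =>
    ⟨monoExt_nonneg (fun y => (hV y).1) y, monoExt_le hB (fun y => (hV y).2) y⟩
  have key : wexp μ U' * wexp μ V' ≤ wexp μ (fun y => U' y * V' y) := by
    have := fkg (μ := μ) (f := U') (g := V') (fun y => h0 y) (fun y => (hU' y).1)
      (fun y => (hV' y).1) (monoExt_monotone fun y => (hU y).1)
      (monoExt_monotone fun y => (hV y).1) hμ
    rwa [h1, one_mul] at this
  have eU := abs_wexp_sub_le_of_eqOn h0 hU' hU fun y hy => monoExt_eq (fun y => (hU y).1) hUΓ hy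
  have eV := abs_wexp_sub_le_of_eqOn h0 hV' hV fun y hy => monoExt_eq (fun y => (hV y).1) hVΓ hy
  have eUV := abs_wexp_sub_le_of_eqOn (μ := μ) (Γ := Γ) (B := B ^ 2) h0
    (f := fun y => U' y * V' y) (g := fun y => U y * V y)
    (fun y => ⟨mul_nonneg (hU' y).1 (hV' y).1, by
      rw [sq]; exact mul_le_mul (hU' y).2 (hV' y).2 (hV' y).1 hB⟩)
    (fun y => ⟨mul_nonneg (hU y).1 (hV y).1, by
      rw [sq]; exact mul_le_mul (hU y).2 (hV y).2 (hV y).1 hB⟩)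
    (fun y hy => by
      simp only [U', V', monoExt_eq (fun y => (hU y).1) hUΓ hy,
        monoExt_eq (fun y => (hV y).1) hVΓ hy])
  have bV' : wexp μ V' ∈ Set.Icc 0 B := ⟨wexp_nonneg h0 fun y => (hV' y).1,
    (wexp_mono h0 fun y => (hV' y).2).trans_eq (wexp_const h1 B)⟩
  have bU : wexp μ U ∈ Set.Icc 0 B := ⟨wexp_nonneg h0 fun y => (hU y).1,
    (wexp_mono h0 fun y => (hU y).2).trans_eq (wexp_const h1 B)⟩
  have hP := wprob_nonneg h0 Γᶜ
  set q := wprob μ Γᶜ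
  rw [abs_le] at eU eV eUV
  have i1 : (wexp μ U - wexp μ U') * wexp μ V' ≤ B * q * B := by
    refine (mul_le_mul_of_nonneg_right (by linarith) bV'.1).trans
      (mul_le_mul_of_nonneg_left bV'.2 (by positivity))
  have i2 : wexp μ U * (wexp μ V - wexp μ V') ≤ B * (B * q) := by
    refine (mul_le_mul_of_nonneg_left (by linarith) bU.1).trans
      (mul_le_mul_of_nonneg_right bU.2 (by positivity))
  nlinarith

lemma monotoneOn_of_update {Γ : Set (I → Bool)} (hΓ : Γ.OrdConnected) {U : (I → Bool) → ℝ}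
    (h : ∀ t y, y t = false → y ∈ Γ → Function.update y t true ∈ Γ →
      U y ≤ U (Function.update y t true)) : MonotoneOn U Γ := by
  suffices H : ∀ (m : ℕ) (a b : I → Bool), a ∈ Γ → b ∈ Γ → a ≤ b →
      #{t | a t ≠ b t} = m → U a ≤ U b from fun a ha b hb hab => H _ a b ha hb hab rfl
  intro m
  induction m with
  | zero =>
    intro a b _ _ _ h0
    have : a = b := by
      ext1 t
      by_contra hne
      rw [card_eq_zero, filter_eq_empty_iff] at h0
      exact h0 (mem_univ t) hne
    rw [this]
  | succ m ih =>
    intro a b ha hb hab hcard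
    obtain ⟨t, ht⟩ : ({t | a t ≠ b t} : Finset I).Nonempty := by
      rw [← card_pos]; omega
    have hne : a t ≠ b t := (mem_filter.1 ht).2
    have hle : a t ≤ b t := hab t
    have hat : a t = false := by
      revert hne hle; cases a t <;> cases b t <;> simp
    have hbt : b t = true := by
      revert hne; rw [hat]; cases b t <;> simp
    have h1 : a ≤ Function.update a t true := by
      intro s
      by_cases hs : s = t
      · subst hs; simp [hat]
      · simp [hs]
    have h2 : Function.update a t true ≤ b := by
      intro s
      by_cases hs : s = t
      · subst hs; simp [hbt]
      · simpa [hs] using hab s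
    have hmem : Function.update a t true ∈ Γ := hΓ.out ha hb ⟨h1, h2⟩
    refine (h t a hat ha hmem).trans (ih _ b hmem hb h2 ?_)
    have : ({s | Function.update a t true s ≠ b s} : Finset I) =
        ({s | a s ≠ b s} : Finset I).erase t := by
      ext s
      by_cases hs : s = t
      · subst hs; simp [hbt]
      · simp [hs]
    rw [this, card_erase_of_mem ht, hcard]
    rfl

/-- A function whose discrete derivatives are dominated, on an order-connected set of large
probability, by those of `l` times the number of `true` coordinates has its variance dominated
accordingly. -/
lemma wvar_le_of_update_le (h0 : ∀ y, 0 ≤ μ y) (h1 : ∑ y, μ y = 1)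
    (hμ : ∀ a b, μ a * μ b ≤ μ (a ⊓ b) * μ (a ⊔ b)) {Γ : Set (I → Bool)}
    (hΓ : Γ.OrdConnected) {F : (I → Bool) → ℝ} {B l : ℝ} (hl : 0 ≤ l) (hF : ∀ y, |F y| ≤ B)
    (h : ∀ t y, y t = false → y ∈ Γ → Function.update y t true ∈ Γ →
      |F (Function.update y t true) - F y| ≤ l) :
    wvar μ F ≤ l ^ 2 * wvar μ (fun y => ∑ s, bval (y s)) +
      3 * (2 * B + l * Fintype.card I) ^ 2 * wprob μ Γᶜ := by
  set S : (I → Bool) → ℝ := fun y => ∑ s, bval (y s)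
  have hS : ∀ y, S y ∈ Set.Icc (0 : ℝ) (Fintype.card I) := fun y =>
    ⟨sum_nonneg fun s _ => bval_nonneg _, by
      have := sum_le_card_nsmul univ (fun s => bval (y s)) 1 fun s _ => bval_le_one _
      simpa using this⟩
  have hSup : ∀ t y, y t = false → S (Function.update y t true) = S y + 1 := by
    intro t y hy
    simp only [S]
    rw [← add_sum_erase _ _ (mem_univ t), ← add_sum_erase univ (fun s => bval (y s)) (mem_univ t),
      sum_congr rfl fun s hs => by rw [Function.update_of_ne (ne_of_mem_erase hs)]]
    simp [hy]; ring
  have hSB : ∀ y, 0 ≤ l * S y ∧ l * S y ≤ l * Fintype.card I := fun y =>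
    ⟨mul_nonneg hl (hS y).1, mul_le_mul_of_nonneg_left (hS y).2 hl⟩
  have key := wexp_mul_ge_of_monotoneOn (U := fun y => l * S y + F y + B)
    (V := fun y => l * S y - F y + B) (B := 2 * B + l * Fintype.card I) (Γ := Γ) h0 h1 hμ
    (fun y => by
      have := abs_le.1 (hF y); have := hSB y
      constructor <;> linarith)
    (fun y => by
      have := abs_le.1 (hF y); have := hSB y
      constructor <;> linarith)
    (monotoneOn_of_update hΓ fun t y hy h1 h2 => by
      have := abs_le.1 (h t y hy h1 h2)
      rw [hSup t y hy]; linarith)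
    (monotoneOn_of_update hΓ fun t y hy h1 h2 => by
      have := abs_le.1 (h t y hy h1 h2)
      rw [hSup t y hy]; linarith)
  have e1 : wexp μ (fun y => l * S y + F y + B) = l * wexp μ S + wexp μ F + B := by
    rw [wexp_add (fun y => l * S y + F y), wexp_add, wexp_const_mul, wexp_const h1]
  have e2 : wexp μ (fun y => l * S y - F y + B) = l * wexp μ S - wexp μ F + B := by
    rw [wexp_add (fun y => l * S y - F y), wexp_sub, wexp_const_mul, wexp_const h1]
  have e3 : wexp μ (fun y => (l * S y + F y + B) * (l * S y - F y + B)) =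
      l ^ 2 * wexp μ (fun y => S y ^ 2) - wexp μ (fun y => F y ^ 2) + 2 * B * (l * wexp μ S)
        + B ^ 2 := by
    have : (fun y => (l * S y + F y + B) * (l * S y - F y + B)) = fun y =>
        l ^ 2 * S y ^ 2 - F y ^ 2 + 2 * B * (l * S y) + B ^ 2 := by ext y; ring
    rw [this, wexp_add (fun y => l ^ 2 * S y ^ 2 - F y ^ 2 + 2 * B * (l * S y)),
      wexp_add (fun y => l ^ 2 * S y ^ 2 - F y ^ 2), wexp_sub, wexp_const_mul, wexp_const_mul,
      wexp_const_mul, wexp_const h1]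
  rw [e1, e2, e3] at key
  simp only [wvar]
  nlinarith

end Correlation

end Cube

/-! ### Edge maps, monomials and counts of embeddings -/

section Combinatorics

variable {v n : ℕ}

/-- The smaller endpoint of a potential edge. -/
def EdgeIdx.lo (s : EdgeIdx n) : Fin n := s.1.1

/-- The larger endpoint of a potential edge. -/
def EdgeIdx.hi (s : EdgeIdx n) : Fin n := s.1.2

/-- The potential edge with endpoints `a < b`. -/
def EdgeIdx.mk (a b : Fin n) (h : a < b) : EdgeIdx n := ⟨(a, b), h⟩

@[simp] lemma EdgeIdx.lo_mk (a b : Fin n) (h : a < b) : (EdgeIdx.mk a b h).lo = a := rfl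

@[simp] lemma EdgeIdx.hi_mk (a b : Fin n) (h : a < b) : (EdgeIdx.mk a b h).hi = b := rfl

lemma EdgeIdx.lo_lt_hi (s : EdgeIdx n) : s.lo < s.hi := s.2

lemma EdgeIdx.eq_iff {s t : EdgeIdx n} : s = t ↔ s.lo = t.lo ∧ s.hi = t.hi :=
  Subtype.ext_iff.trans Prod.ext_iff

lemma lt_or_gt_embedding (φ : Fin v ↪ Fin n) (e : EdgeIdx v) :
    φ e.lo < φ e.hi ∨ φ e.hi < φ e.lo :=
  lt_or_gt_of_ne fun h => e.lo_lt_hi.ne (φ.injective h)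

/-- The image of the potential edge `e` under an injective map of vertices. -/
def edgeMap (φ : Fin v ↪ Fin n) (e : EdgeIdx v) : EdgeIdx n :=
  if h : φ e.lo < φ e.hi then EdgeIdx.mk (φ e.lo) (φ e.hi) h
  else EdgeIdx.mk (φ e.hi) (φ e.lo) ((lt_or_gt_embedding φ e).resolve_left h)

lemma edgeMap_of_lt {φ : Fin v ↪ Fin n} {e : EdgeIdx v} (h : φ e.lo < φ e.hi) :
    edgeMap φ e = EdgeIdx.mk (φ e.lo) (φ e.hi) h := dif_pos h

lemma edgeMap_of_gt {φ : Fin v ↪ Fin n} {e : EdgeIdx v} (h : φ e.hi < φ e.lo) :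
    edgeMap φ e = EdgeIdx.mk (φ e.hi) (φ e.lo) h := dif_neg h.not_gt

lemma edgeMap_eq_iff {φ : Fin v ↪ Fin n} {e : EdgeIdx v} {s : EdgeIdx n} :
    edgeMap φ e = s ↔ (φ e.lo = s.lo ∧ φ e.hi = s.hi) ∨
      (φ e.lo = s.hi ∧ φ e.hi = s.lo) := by
  have hs : s.lo < s.hi := s.lo_lt_hi
  rcases lt_or_gt_embedding φ e with h | h
  · rw [edgeMap_of_lt h, EdgeIdx.eq_iff]
    refine ⟨Or.inl, ?_⟩
    rintro (h1 | ⟨h1, h2⟩)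
    · exact h1
    · rw [h1, h2] at h; exact absurd hs h.not_gt
  · rw [edgeMap_of_gt h, EdgeIdx.eq_iff]
    refine ⟨fun h1 => Or.inr ⟨h1.2, h1.1⟩, ?_⟩
    rintro (⟨h1, h2⟩ | ⟨h1, h2⟩)
    · rw [h1, h2] at h; exact absurd hs h.not_gt
    · exact ⟨h2, h1⟩

lemma edgeMap_injective (φ : Fin v ↪ Fin n) : Function.Injective (edgeMap φ) := by
  intro e e' h
  have he : e.lo < e.hi := e.lo_lt_hi
  have he' : e'.lo < e'.hi := e'.lo_lt_hi
  rw [EdgeIdx.eq_iff]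
  rcases lt_or_gt_embedding φ e with h1 | h1 <;> rcases lt_or_gt_embedding φ e' with h2 | h2
  · rw [edgeMap_of_lt h1, edgeMap_of_lt h2, EdgeIdx.eq_iff] at h
    exact ⟨φ.injective h.1, φ.injective h.2⟩
  · rw [edgeMap_of_lt h1, edgeMap_of_gt h2, EdgeIdx.eq_iff] at h
    have h3 := φ.injective h.1
    have h4 := φ.injective h.2
    rw [h3, h4] at he
    exact absurd he he'.not_gt
  · rw [edgeMap_of_gt h1, edgeMap_of_lt h2, EdgeIdx.eq_iff] at h
    have h3 := φ.injective h.1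
    have h4 := φ.injective h.2
    rw [h3, h4] at he
    exact absurd he he'.not_gt
  · rw [edgeMap_of_gt h1, edgeMap_of_gt h2, EdgeIdx.eq_iff] at h
    exact ⟨φ.injective h.2, φ.injective h.1⟩

lemma yAdj_comm (y : EdgeIdx n → Bool) (a b : Fin n) : yAdj y a b = yAdj y b a := by
  unfold yAdj
  rcases lt_trichotomy a b with h | h | h
  · simp [h, h.not_gt]
  · simp [h]
  · simp [h, h.not_gt]

lemma yAdj_edgeMap (y : EdgeIdx n → Bool) (φ : Fin v ↪ Fin n) (e : EdgeIdx v) :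
    yAdj y (φ e.lo) (φ e.hi) = y (edgeMap φ e) := by
  unfold yAdj
  rcases lt_or_gt_embedding φ e with h | h
  · rw [edgeMap_of_lt h, dif_pos h]; rfl
  · rw [edgeMap_of_gt h, dif_neg h.not_gt, dif_pos h]; rfl

/-- The monomial indicating that all edges of `A` are mapped to edges of `G_y`. -/
def mono (φ : Fin v ↪ Fin n) (A : Finset (EdgeIdx v)) (y : EdgeIdx n → Bool) : ℝ :=
  ∏ e ∈ A, bval (y (edgeMap φ e))

lemma mono_nonneg (φ : Fin v ↪ Fin n) (A : Finset (EdgeIdx v)) (y : EdgeIdx n → Bool) :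
    0 ≤ mono φ A y := prod_nonneg fun _ _ => bval_nonneg _

lemma mono_le_one (φ : Fin v ↪ Fin n) (A : Finset (EdgeIdx v)) (y : EdgeIdx n → Bool) :
    mono φ A y ≤ 1 := prod_le_one (fun _ _ => bval_nonneg _) fun _ _ => bval_le_one _

@[simp] lemma mono_empty (φ : Fin v ↪ Fin n) (y : EdgeIdx n → Bool) : mono φ ∅ y = 1 := by
  simp [mono]

lemma bval_mono {a b : Bool} (h : a ≤ b) : bval a ≤ bval b := by
  revert h; cases a <;> cases b <;> simp

lemma mono_monotone (φ : Fin v ↪ Fin n) (A : Finset (EdgeIdx v)) : Monotone (mono φ A) :=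
  fun _ _ h => prod_le_prod (fun _ _ => bval_nonneg _) fun _ _ => bval_mono (h _)

lemma mono_erase (φ : Fin v ↪ Fin n) {A : Finset (EdgeIdx v)} {e : EdgeIdx v} (he : e ∈ A)
    (y : EdgeIdx n → Bool) :
    mono φ A y = mono φ (A.erase e) y * bval (y (edgeMap φ e)) := by
  unfold mono
  rw [prod_erase_mul _ _ he]

lemma mono_eq_zero_or_one (φ : Fin v ↪ Fin n) (A : Finset (EdgeIdx v))
    (y : EdgeIdx n → Bool) : mono φ A y = 0 ∨ mono φ A y = 1 := by
  unfold mono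
  by_cases h : ∃ e ∈ A, y (edgeMap φ e) = false
  · obtain ⟨e, he, h⟩ := h
    exact Or.inl (prod_eq_zero he (by simp [h]))
  · push Not at h
    exact Or.inr (prod_eq_one fun e he => by simp [h e he])

lemma mono_eq_ite (φ : Fin v ↪ Fin n) (A : Finset (EdgeIdx v)) (y : EdgeIdx n → Bool) :
    mono φ A y = if ∀ e ∈ A, y (edgeMap φ e) = true then 1 else 0 := by
  unfold mono
  split_ifs with h
  · exact prod_eq_one fun e he => by simp [h e he]
  · push Not at h
    obtain ⟨e, he, h⟩ := h
    exact prod_eq_zero he (by simp [h])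

lemma mono_update_of_forall_ne {φ : Fin v ↪ Fin n} {A : Finset (EdgeIdx v)} {t : EdgeIdx n}
    (h : ∀ e ∈ A, edgeMap φ e ≠ t) (y : EdgeIdx n → Bool) (b : Bool) :
    mono φ A (Function.update y t b) = mono φ A y :=
  prod_congr rfl fun e he => by rw [Function.update_of_ne (h e he)]

lemma mono_update_sub (φ : Fin v ↪ Fin n) (A : Finset (EdgeIdx v)) (t : EdgeIdx n)
    (y : EdgeIdx n → Bool) :
    mono φ A (Function.update y t true) - mono φ A (Function.update y t false) =
      ∑ e ∈ A, if edgeMap φ e = t then mono φ (A.erase e) y else 0 := by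
  by_cases h : ∃ e ∈ A, edgeMap φ e = t
  · obtain ⟨e, he, rfl⟩ := h
    have h' : ∀ e' ∈ A.erase e, edgeMap φ e' ≠ edgeMap φ e := fun e' he' heq =>
      (ne_of_mem_erase he') (edgeMap_injective φ heq)
    rw [mono_erase φ he, mono_erase φ he, mono_update_of_forall_ne h',
      mono_update_of_forall_ne h', ← add_sum_erase A _ he, sum_eq_zero fun e' he' => ?_]
    · simp
    · rw [if_neg (h' e' he')]
  · push Not at h
    rw [mono_update_of_forall_ne h, mono_update_of_forall_ne h, sub_self,
      sum_eq_zero fun e he => if_neg (h e he)]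

/-- The edges of `H`, as a set of potential edges. -/
def edges (H : SimpleGraph (Fin v)) : Finset (EdgeIdx v) := by
  classical exact univ.filter fun e => H.Adj e.lo e.hi

lemma mem_edges {H : SimpleGraph (Fin v)} {e : EdgeIdx v} :
    e ∈ edges H ↔ H.Adj e.lo e.hi := by simp [edges]

lemma eCount_eq_card_edges (H : SimpleGraph (Fin v)) : eCount H = #(edges H) := by
  classical
  unfold eCount
  rw [← Fintype.card_coe, ← Nat.card_eq_fintype_card]
  symm
  refine Nat.card_eq_of_bijective
    (fun e => ⟨s(e.1.lo, e.1.hi), mem_edges.1 e.2⟩ : edges H → H.edgeSet) ⟨?_, ?_⟩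
  · rintro ⟨e, he⟩ ⟨e', he'⟩ h
    have h1 : e.lo < e.hi := e.lo_lt_hi
    have h2 : e'.lo < e'.hi := e'.lo_lt_hi
    replace h := Sym2.eq_iff.1 (congrArg Subtype.val h)
    apply Subtype.ext
    rw [EdgeIdx.eq_iff]
    rcases h with h | ⟨h3, h4⟩
    · exact h
    · rw [h3, h4] at h1; exact absurd h1 h2.not_gt
  · rintro ⟨z, hz⟩
    induction z using Sym2.ind with
    | _ a b =>
      have hab : H.Adj a b := hz
      rcases lt_or_gt_of_ne hab.ne with h | h
      · exact ⟨⟨EdgeIdx.mk a b h, mem_edges.2 hab⟩, rfl⟩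
      · exact ⟨⟨EdgeIdx.mk b a h, mem_edges.2 hab.symm⟩, Subtype.ext Sym2.eq_swap⟩

lemma homCount_eq_sum (H : SimpleGraph (Fin v)) (y : EdgeIdx n → Bool) :
    (homCount H y : ℝ) = ∑ φ : Fin v ↪ Fin n, mono φ (edges H) y := by
  classical
  simp_rw [mono_eq_ite]
  rw [← Finset.sum_filter, sum_const, nsmul_eq_mul, mul_one, homCount, Nat.cast_inj,
    ← Fintype.card_subtype, ← Nat.card_eq_fintype_card]
  refine Nat.card_congr ⟨fun φ => ⟨⟨φ.1, φ.2.1⟩, fun e he => ?_⟩,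
    fun φ => ⟨φ.1, φ.1.injective, fun a b hab => ?_⟩, fun _ => rfl, fun _ => rfl⟩
  · exact (yAdj_edgeMap y ⟨φ.1, φ.2.1⟩ e).symm.trans (φ.2.2 _ _ (mem_edges.1 he))
  · rcases lt_or_gt_of_ne hab.ne with h | h
    · exact (yAdj_edgeMap y φ.1 (EdgeIdx.mk a b h)).trans (φ.2 _ (mem_edges.2 hab))
    · rw [yAdj_comm]
      exact (yAdj_edgeMap y φ.1 (EdgeIdx.mk b a h)).trans (φ.2 _ (mem_edges.2 hab.symm))

end Combinatorics

section Counts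

variable {v n : ℕ}

/-- The endpoints of a potential edge. -/
def EdgeIdx.ends (s : EdgeIdx n) : Finset (Fin n) := {s.lo, s.hi}

lemma EdgeIdx.mem_ends {s : EdgeIdx n} {x : Fin n} : x ∈ s.ends ↔ x = s.lo ∨ x = s.hi := by
  simp [EdgeIdx.ends]

lemma EdgeIdx.card_ends (s : EdgeIdx n) : #s.ends = 2 := card_pair s.lo_lt_hi.ne

lemma EdgeIdx.ends_injective : Function.Injective (EdgeIdx.ends (n := n)) := by
  intro s t h
  have h1 : s.lo ∈ t.ends := h ▸ EdgeIdx.mem_ends.2 (Or.inl rfl)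
  have h2 : s.hi ∈ t.ends := h ▸ EdgeIdx.mem_ends.2 (Or.inr rfl)
  rw [EdgeIdx.mem_ends] at h1 h2
  have hs := s.lo_lt_hi
  have ht := t.lo_lt_hi
  rw [EdgeIdx.eq_iff]
  rcases h1 with h1 | h1 <;> rcases h2 with h2 | h2 <;> rw [h1, h2] at hs
  · exact absurd hs (lt_irrefl _)
  · exact ⟨h1, h2⟩
  · exact absurd hs ht.not_gt
  · exact absurd hs (lt_irrefl _)

lemma apply_mem_ends {φ : Fin v ↪ Fin n} {e : EdgeIdx v} {x : Fin v} (hx : x ∈ e.ends) :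
    φ x ∈ (edgeMap φ e).ends := by
  have := (edgeMap_eq_iff (φ := φ) (e := e)).1 rfl
  rw [EdgeIdx.mem_ends] at *
  rcases hx with rfl | rfl <;> rcases this with h | h <;> simp [h.1, h.2]

lemma card_edgeMap_pair_le (hn : 2 ≤ n) {e e' : EdgeIdx v} (h : e ≠ e') (s t : EdgeIdx n) :
    (#{φ : Fin v ↪ Fin n | edgeMap φ e = s ∧ edgeMap φ e' = t} : ℝ) ≤
      8 * (n : ℝ) ^ ((v : ℤ) - 3) := by
  classical
  obtain ⟨U, hU, hU3⟩ : ∃ U ⊆ e.ends ∪ e'.ends, #U = 3 := by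
    refine exists_subset_card_eq ?_
    by_contra hlt
    push Not at hlt
    have h1 : #(e.ends ∪ e'.ends) ≤ #e.ends := by rw [e.card_ends]; omega
    have h2 : #(e.ends ∪ e'.ends) ≤ #e'.ends := by rw [e'.card_ends]; omega
    have h3 := eq_of_subset_of_card_le subset_union_left h1
    have h4 := eq_of_subset_of_card_le subset_union_right h2
    exact h (EdgeIdx.ends_injective (h3.trans h4.symm))
  have hv : 3 ≤ v := by
    rw [← hU3]; exact (card_le_univ U).trans_eq (Fintype.card_fin v)
  set T : Fin v → Finset (Fin n) := fun x =>
    if x ∈ e.ends then s.ends else if x ∈ e'.ends then t.ends else univ with hT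
  have h1 : #{φ : Fin v ↪ Fin n | edgeMap φ e = s ∧ edgeMap φ e' = t} ≤
      #(Fintype.piFinset T) := by
    refine card_le_card_of_injOn (fun φ => φ) (fun φ hφ => ?_)
      (fun φ _ φ' _ hh => DFunLike.coe_injective hh)
    have hφ' : edgeMap φ e = s ∧ edgeMap φ e' = t := by simpa using hφ
    simp only [mem_coe, Fintype.mem_piFinset, hT]
    intro x
    split_ifs with h1 h2
    · rw [← hφ'.1]; exact apply_mem_ends h1
    · rw [← hφ'.2]; exact apply_mem_ends h2
    · exact mem_univ _
  have h2 : #(Fintype.piFinset T) ≤ ∏ x, if x ∈ U then 2 else n := by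
    rw [Fintype.card_piFinset]
    refine prod_le_prod' fun x _ => ?_
    simp only [hT]
    split_ifs with h1 h2 h3 h4 h5
    · exact s.card_ends.le
    · rw [s.card_ends]; exact hn
    · exact t.card_ends.le
    · rw [t.card_ends]; exact hn
    · rcases mem_union.1 (hU h5) with h | h <;> contradiction
    · simp
  have h3 : (∏ x : Fin v, if x ∈ U then 2 else n) = 8 * n ^ (v - 3) := by
    rw [prod_ite, prod_const, prod_const, filter_mem_eq_inter, univ_inter, hU3, filter_not,
      filter_mem_eq_inter, univ_inter, ← compl_eq_univ_sdiff, card_compl, hU3, Fintype.card_fin]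
    norm_num
  have h4 := (h1.trans h2).trans_eq h3
  have h5 : ((v : ℤ) - 3) = ((v - 3 : ℕ) : ℤ) := by omega
  rw [h5, zpow_natCast]
  exact_mod_cast h4

/-- The action of a permutation of the vertices on potential edges. -/
def edgePerm (ρ : Equiv.Perm (Fin n)) (s : EdgeIdx n) : EdgeIdx n := edgeMap ρ.toEmbedding s

lemma edgeMap_trans (φ : Fin v ↪ Fin n) (ρ : Equiv.Perm (Fin n)) (e : EdgeIdx v) :
    edgeMap (φ.trans ρ.toEmbedding) e = edgePerm ρ (edgeMap φ e) := by
  have h := (edgeMap_eq_iff (φ := φ) (e := e)).1 rfl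
  have h' := (edgeMap_eq_iff (φ := ρ.toEmbedding) (e := edgeMap φ e)).1 rfl
  rw [edgePerm, edgeMap_eq_iff]
  simp only [Function.Embedding.trans_apply]
  rcases h with ⟨h1, h2⟩ | ⟨h1, h2⟩ <;> rw [h1, h2]
  · exact h'
  · exact h'.symm.imp And.symm And.symm

lemma exists_edgePerm (s t : EdgeIdx n) : ∃ ρ : Equiv.Perm (Fin n), edgePerm ρ s = t := by
  refine ⟨(Equiv.swap s.lo t.lo).trans
    (Equiv.swap ((Equiv.swap s.lo t.lo) s.hi) t.hi), ?_⟩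
  rw [edgePerm, edgeMap_eq_iff]
  left
  constructor
  · simp only [Equiv.coe_toEmbedding, Equiv.trans_apply, Equiv.swap_apply_left]
    refine Equiv.swap_apply_of_ne_of_ne ?_ t.lo_lt_hi.ne
    intro h
    rw [← Equiv.swap_apply_left s.lo t.lo] at h
    exact s.lo_lt_hi.ne ((Equiv.swap (s.lo) t.lo).injective (by simpa using h))
  · simp

lemma card_edgeMap_eq (e : EdgeIdx v) (s t : EdgeIdx n) :
    #{φ : Fin v ↪ Fin n | edgeMap φ e = s} = #{φ : Fin v ↪ Fin n | edgeMap φ e = t} := by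
  have key : ∀ s t : EdgeIdx n, #{φ : Fin v ↪ Fin n | edgeMap φ e = s} ≤
      #{φ : Fin v ↪ Fin n | edgeMap φ e = t} := by
    intro s t
    obtain ⟨ρ, hρ⟩ := exists_edgePerm s t
    refine card_le_card_of_injOn (fun φ => φ.trans ρ.toEmbedding) (fun φ hφ => ?_)
      (fun φ _ φ' _ hh => ?_)
    · have : edgeMap φ e = s := by simpa using hφ
      simp [edgeMap_trans, this, hρ]
    · ext x
      have := DFunLike.congr_fun hh x
      simp only [Function.Embedding.trans_apply, Equiv.coe_toEmbedding,
        EmbeddingLike.apply_eq_iff_eq] at this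
      rw [this]
  exact le_antisymm (key s t) (key t s)

lemma card_edgeIdx (n : ℕ) : (Fintype.card (EdgeIdx n) : ℝ) = n * ((n : ℝ) - 1) / 2 := by
  have h : Fintype.card (EdgeIdx n) = #((univ : Finset (Fin n × Fin n)).filter
      fun p => p.1 < p.2) := Fintype.card_subtype _
  have h1 : #((univ : Finset (Fin n × Fin n)).filter fun p => p.1 < p.2) =
      ∑ b : Fin n, (b : ℕ) := by
    rw [card_filter, ← univ_product_univ, sum_product_right]
    refine sum_congr rfl fun b _ => ?_
    rw [← card_filter]
    simp only
    rw [filter_gt_eq_Iio, Fin.card_Iio]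
  rw [h, h1, Fin.sum_univ_eq_sum_range (fun i => i)]
  rw [eq_div_iff two_ne_zero]
  have := Finset.sum_range_id_mul_two n
  rcases n with _ | n
  · simp
  · have h2 : ((∑ i ∈ range (n + 1), i : ℕ) : ℝ) * 2 = ((n + 1) * (n + 1 - 1) : ℕ) := by
      exact_mod_cast this
    rw [h2]; push_cast; simp

lemma card_edgeMap_mul (e : EdgeIdx v) (s : EdgeIdx n) :
    (#{φ : Fin v ↪ Fin n | edgeMap φ e = s} : ℝ) * (n * ((n : ℝ) - 1) / 2) =
      n.descFactorial v := by
  rw [← card_edgeIdx, mul_comm]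
  have h1 : Fintype.card (EdgeIdx n) * #{φ : Fin v ↪ Fin n | edgeMap φ e = s} =
      n.descFactorial v := by
    have := card_eq_sum_card_fiberwise (f := fun φ : Fin v ↪ Fin n => edgeMap φ e)
      (s := univ) (t := univ) (fun _ _ => mem_coe.2 (mem_univ _))
    rw [card_univ, Fintype.card_embedding_eq, Fintype.card_fin, Fintype.card_fin,
      sum_congr rfl fun t _ => card_edgeMap_eq e t s, sum_const, smul_eq_mul, card_univ] at this
    exact this.symm
  exact_mod_cast h1

/-- The normalisation `n^{2-v}`. -/
def scale (v n : ℕ) : ℝ := (n : ℝ) ^ ((2 : ℤ) - (v : ℤ))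

lemma scale_nonneg : 0 ≤ scale v n := zpow_nonneg (Nat.cast_nonneg _) _

lemma scale_mul_pow (hn : n ≠ 0) : scale v n * (n : ℝ) ^ v = (n : ℝ) ^ 2 := by
  have : (n : ℝ) ≠ 0 := by exact_mod_cast hn
  rw [scale, ← zpow_natCast, ← zpow_add₀ this]
  norm_num

lemma scale_mul_card_edgeMap_le (hn : 2 ≤ n) (e : EdgeIdx v) (s : EdgeIdx n) :
    scale v n * #{φ : Fin v ↪ Fin n | edgeMap φ e = s} ≤ 2 + 4 / n := by
  have hn' : (2 : ℝ) ≤ n := by exact_mod_cast hn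
  have h1 := card_edgeMap_mul e s
  have h2 : (n.descFactorial v : ℝ) ≤ (n : ℝ) ^ v := by
    exact_mod_cast Nat.descFactorial_le_pow n v
  rw [← h1] at h2
  have h3 := mul_le_mul_of_nonneg_left h2 (scale_nonneg (v := v) (n := n))
  rw [scale_mul_pow (by omega)] at h3
  set c := scale v n * #{φ : Fin v ↪ Fin n | edgeMap φ e = s}
  have h4 : c * (n * (n - 1) / 2) ≤ n ^ 2 := by
    rw [show c * (n * ((n : ℝ) - 1) / 2) = scale v n *
      (#{φ : Fin v ↪ Fin n | edgeMap φ e = s} * (n * ((n : ℝ) - 1) / 2)) by simp only [c]; ring]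
    exact h3
  have h5 : c * (n - 1) ≤ 2 * n := by
    by_contra hlt
    push Not at hlt
    nlinarith
  have h6 : c ≤ 2 * n / (n - 1) := by rw [le_div_iff₀ (by linarith)]; exact h5
  refine h6.trans ?_
  rw [show 2 + 4 / (n : ℝ) = (2 * n + 4) / n by field_simp, div_le_div_iff₀] <;> nlinarith

lemma le_scale_mul_card_edgeMap (hn : 2 ≤ n) (e : EdgeIdx v) (s : EdgeIdx n) :
    2 - 2 * (v : ℝ) ^ 2 / n ≤ scale v n * #{φ : Fin v ↪ Fin n | edgeMap φ e = s} := by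
  have hn' : (2 : ℝ) ≤ n := by exact_mod_cast hn
  have hc0 : 0 ≤ scale v n * #{φ : Fin v ↪ Fin n | edgeMap φ e = s} :=
    mul_nonneg scale_nonneg (Nat.cast_nonneg _)
  by_cases hvn : n < v
  · have : (n : ℝ) < v := by exact_mod_cast hvn
    refine le_trans ?_ hc0
    rw [sub_nonpos, le_div_iff₀ (by linarith)]
    nlinarith
  push Not at hvn
  have hvn' : (v : ℝ) ≤ n := by exact_mod_cast hvn
  have hv : 1 ≤ v := Fin.pos e.lo
  have hv' : (1 : ℝ) ≤ v := by exact_mod_cast hv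
  have h1 := card_edgeMap_mul e s
  have h2 : ((n : ℝ) + 1 - v) ^ v ≤ n.descFactorial v := by
    have h := Nat.pow_sub_le_descFactorial n v
    have h' : (((n + 1 - v : ℕ) : ℝ)) ^ v ≤ n.descFactorial v := by exact_mod_cast h
    rwa [Nat.cast_sub (by omega), Nat.cast_add, Nat.cast_one] at h'
  have h3 : (n : ℝ) ^ v * (1 - v * (v - 1) / n) ≤ ((n : ℝ) + 1 - v) ^ v := by
    have hb := one_add_mul_le_pow (a := -(((v : ℝ) - 1) / n)) (by
      have : ((v : ℝ) - 1) / n ≤ 1 := by rw [div_le_one (by linarith)]; linarith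
      linarith) v
    have : ((n : ℝ) + 1 - v) = n * (1 + -(((v : ℝ) - 1) / n)) := by field_simp; ring
    rw [this, mul_pow]
    refine mul_le_mul_of_nonneg_left (le_trans (le_of_eq ?_) hb) (by positivity)
    ring
  have h4 := mul_le_mul_of_nonneg_left (h3.trans (h2.trans h1.ge))
    (scale_nonneg (v := v) (n := n))
  rw [← mul_assoc, scale_mul_pow (by omega)] at h4
  set c := scale v n * #{φ : Fin v ↪ Fin n | edgeMap φ e = s} with hc
  rw [← mul_assoc, ← hc] at h4
  have h5 : (n : ℝ) ^ 2 * (1 - v * (v - 1) / n) = n * (n - v * (v - 1)) := by field_simp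
  rw [h5] at h4
  have h6 : n - (v : ℝ) * (v - 1) ≤ c * n / 2 := by
    by_contra hlt
    push Not at hlt
    nlinarith
  rw [sub_le_iff_le_add, ← sub_le_iff_le_add', le_div_iff₀ (by linarith)]
  nlinarith

lemma scale_mul_card_edgeMap_le_four (hn : 2 ≤ n) (e : EdgeIdx v) (s : EdgeIdx n) :
    scale v n * #{φ : Fin v ↪ Fin n | edgeMap φ e = s} ≤ 4 := by
  refine (scale_mul_card_edgeMap_le hn e s).trans ?_
  have hn' : (2 : ℝ) ≤ n := by exact_mod_cast hn
  have : 4 / (n : ℝ) ≤ 2 := by rw [div_le_iff₀ (by linarith)]; linarith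
  linarith

lemma scale_mul_card_edgeMap_pair_le (hn : 2 ≤ n) {e e' : EdgeIdx v} (h : e ≠ e')
    (s t : EdgeIdx n) :
    scale v n * #{φ : Fin v ↪ Fin n | edgeMap φ e = s ∧ edgeMap φ e' = t} ≤ 8 / n := by
  have hn' : (n : ℝ) ≠ 0 := by have : n ≠ 0 := by omega
                               exact_mod_cast this
  refine (mul_le_mul_of_nonneg_left (card_edgeMap_pair_le hn h s t) scale_nonneg).trans_eq ?_
  rw [scale, mul_left_comm, ← zpow_add₀ hn', show (2 - (v : ℤ) + (v - 3)) = -1 by ring, zpow_neg_one]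
  rfl

end Counts

section CondModel

variable {I : Type} [Fintype I] [DecidableEq I]

lemma abs_update_sub_le (F : (I → Bool) → ℝ) (t : I) (y : I → Bool) (b : Bool) :
    |F (Function.update y t b) - F y| ≤
      |F (Function.update y t true) - F (Function.update y t false)| := by
  obtain ⟨c, hc⟩ : ∃ c, y = Function.update y t c := ⟨y t, by simp⟩
  rw [hc]
  simp only [Function.update_idem]
  cases b <;> cases c <;> simp [abs_sub_comm]

/-- Weights whose log-ratios under flipping the coordinate `t` are `h t` have conditional
probabilities `sigmoid (h t)`. -/
lemma isCondModel_of_log_ratio {μ : (I → Bool) → ℝ} {h : I → (I → Bool) → ℝ}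
    (h0 : ∀ y, 0 ≤ μ y) (h1 : ∑ y, μ y = 1)
    (hh : ∀ t y b, h t (Function.update y t b) = h t y)
    (hμ : ∀ t y, μ (Function.update y t true) =
      Real.exp (h t y) * μ (Function.update y t false)) :
    IsCondModel μ fun t y => Real.sigmoid (h t y) where
  nonneg := h0
  sum_one := h1
  cond_nonneg t y := (Real.sigmoid_pos _).le
  cond_le_one t y := (Real.sigmoid_lt_one _).le
  cond_update t y b := by rw [hh]
  wexp_cond t g hg := by
    refine sum_involution (fun y _ => Function.update y t (!y t)) (fun y _ => ?_)
      (fun y _ _ heq => ?_) (fun y _ => mem_univ _) (fun y _ => by simp)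
    · have key : ∀ z : I → Bool, μ (Function.update z t true) * ((1 - Real.sigmoid (h t z)) * g z)
          + μ (Function.update z t false) * ((0 - Real.sigmoid (h t z)) * g z) = 0 := by
        intro z
        rw [hμ, Real.sigmoid_def, Real.exp_neg]
        have := Real.exp_pos (h t z)
        field_simp
        ring
      have := key y
      simp only [hg, hh, Function.update_self]
      cases hy : y t
      · have e : Function.update y t false = y := by rw [← hy]; simp
        rw [e] at this
        simp only [Bool.not_false, bval_true, bval_false]
        linarith
      · have e : Function.update y t true = y := by rw [← hy]; simp
        rw [e] at this
        simp only [Bool.not_true, bval_true, bval_false]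
        linarith
    · have := congrFun heq t
      simp at this

end CondModel

section Rooted

variable {v n : ℕ}

/-- The normalised number of copies of `A` in `G_y` in which the potential edge `e` is mapped
to `s`. -/
def rooted (e : EdgeIdx v) (s : EdgeIdx n) (A : Finset (EdgeIdx v)) (y : EdgeIdx n → Bool) : ℝ :=
  scale v n * ∑ φ : Fin v ↪ Fin n with edgeMap φ e = s, mono φ A y

lemma rooted_nonneg (e : EdgeIdx v) (s : EdgeIdx n) (A : Finset (EdgeIdx v))
    (y : EdgeIdx n → Bool) : 0 ≤ rooted e s A y :=
  mul_nonneg scale_nonneg (sum_nonneg fun _ _ => mono_nonneg _ _ _)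

lemma scale_mul_sum_le_card (P : (Fin v ↪ Fin n) → Prop) [DecidablePred P]
    (A : Finset (EdgeIdx v)) (y : EdgeIdx n → Bool) :
    scale v n * ∑ φ : Fin v ↪ Fin n with P φ, mono φ A y ≤
      scale v n * #{φ : Fin v ↪ Fin n | P φ} := by
  refine mul_le_mul_of_nonneg_left ?_ scale_nonneg
  refine (sum_le_card_nsmul _ _ 1 fun φ _ => mono_le_one φ A y).trans_eq ?_
  simp

lemma rooted_le_four (hn : 2 ≤ n) (e : EdgeIdx v) (s : EdgeIdx n) (A : Finset (EdgeIdx v))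
    (y : EdgeIdx n → Bool) : rooted e s A y ≤ 4 :=
  (scale_mul_sum_le_card _ A y).trans (scale_mul_card_edgeMap_le_four hn e s)

lemma rooted_monotone (e : EdgeIdx v) (s : EdgeIdx n) (A : Finset (EdgeIdx v)) :
    Monotone (rooted e s A) := fun _ _ h =>
  mul_le_mul_of_nonneg_left (sum_le_sum fun φ _ => mono_monotone φ A h) scale_nonneg

lemma abs_rooted_empty_sub_two_le (hn : 2 ≤ n) (e : EdgeIdx v) (s : EdgeIdx n)
    (y : EdgeIdx n → Bool) : |rooted e s ∅ y - 2| ≤ (2 * (v : ℝ) ^ 2 + 4) / n := by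
  have h : rooted e s ∅ y = scale v n * #{φ : Fin v ↪ Fin n | edgeMap φ e = s} := by
    simp [rooted]
  have h1 := scale_mul_card_edgeMap_le hn e s
  have h2 := le_scale_mul_card_edgeMap hn e s
  have h3 : (0 : ℝ) ≤ 4 / n := by positivity
  have h4 : 0 ≤ 2 * (v : ℝ) ^ 2 / n := by positivity
  rw [h, add_div, abs_le]
  constructor <;> linarith

lemma rooted_update_self {e : EdgeIdx v} {A : Finset (EdgeIdx v)} (he : e ∉ A) (s : EdgeIdx n)
    (y : EdgeIdx n → Bool) (b : Bool) : rooted e s A (Function.update y s b) = rooted e s A y := by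
  unfold rooted
  congr 1
  refine sum_congr rfl fun φ hφ => mono_update_of_forall_ne (fun e' he' heq => ?_) _ _
  have : edgeMap φ e = s := by simpa using hφ
  exact he (edgeMap_injective φ (this.trans heq.symm) ▸ he')

lemma rooted_update_sub (e : EdgeIdx v) (A : Finset (EdgeIdx v)) (s t : EdgeIdx n)
    (y : EdgeIdx n → Bool) :
    rooted e s A (Function.update y t true) - rooted e s A (Function.update y t false) =
      ∑ e' ∈ A, scale v n *
        ∑ φ : Fin v ↪ Fin n with edgeMap φ e = s ∧ edgeMap φ e' = t, mono φ (A.erase e') y := by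
  unfold rooted
  rw [← mul_sub, ← sum_sub_distrib, ← mul_sum]
  simp_rw [mono_update_sub]
  rw [sum_comm]
  congr 1
  refine sum_congr rfl fun e' _ => ?_
  rw [← filter_filter, sum_filter (fun φ => edgeMap φ e' = t)]

lemma rooted_update_sub_mem {e : EdgeIdx v} {A : Finset (EdgeIdx v)} (hn : 2 ≤ n) (he : e ∉ A)
    (s t : EdgeIdx n) (y : EdgeIdx n → Bool) :
    rooted e s A (Function.update y t true) - rooted e s A (Function.update y t false) ∈
      Set.Icc 0 (8 * #A / (n : ℝ)) := by
  rw [rooted_update_sub]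
  constructor
  · exact sum_nonneg fun e' _ => mul_nonneg scale_nonneg (sum_nonneg fun φ _ => mono_nonneg _ _ _)
  · refine (sum_le_card_nsmul _ _ (8 / (n : ℝ)) fun e' he' => ?_).trans_eq ?_
    · refine (scale_mul_sum_le_card _ _ y).trans (scale_mul_card_edgeMap_pair_le hn ?_ s t)
      rintro rfl
      exact he he'
    · rw [nsmul_eq_mul]; ring

lemma abs_rooted_update_sub_le {e : EdgeIdx v} {A : Finset (EdgeIdx v)} (hn : 2 ≤ n)
    (he : e ∉ A) (s t : EdgeIdx n) (y : EdgeIdx n → Bool) :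
    |rooted e s A (Function.update y t true) - rooted e s A (Function.update y t false)| ≤
      8 * #A / (n : ℝ) := by
  have := rooted_update_sub_mem hn he s t y
  rw [abs_of_nonneg this.1]
  exact this.2

lemma sum_rooted_update_sub (e : EdgeIdx v) (A : Finset (EdgeIdx v)) (t : EdgeIdx n)
    (y : EdgeIdx n → Bool) :
    ∑ s, (rooted e s A (Function.update y t true) - rooted e s A (Function.update y t false)) =
      ∑ e' ∈ A, rooted e' t (A.erase e') y := by
  simp_rw [rooted_update_sub]
  rw [sum_comm]
  refine sum_congr rfl fun e' _ => ?_
  rw [rooted, ← mul_sum]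
  congr 1
  have := sum_fiberwise_of_maps_to (s := univ.filter fun φ : Fin v ↪ Fin n => edgeMap φ e' = t)
    (t := univ) (g := fun φ => edgeMap φ e) (fun _ _ => mem_univ _)
    (fun φ => mono φ (A.erase e') y)
  rw [← this]
  refine sum_congr rfl fun s _ => ?_
  rw [filter_filter]
  congr 1
  ext φ
  simp [and_comm]

lemma homCount_update_sub (H : SimpleGraph (Fin v)) (t : EdgeIdx n) (y : EdgeIdx n → Bool) :
    scale v n * (homCount H (Function.update y t true) : ℝ) -
      scale v n * (homCount H (Function.update y t false) : ℝ) =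
      ∑ e ∈ edges H, rooted e t ((edges H).erase e) y := by
  rw [homCount_eq_sum, homCount_eq_sum, ← mul_sub, ← sum_sub_distrib]
  simp_rw [mono_update_sub]
  rw [sum_comm, mul_sum]
  refine sum_congr rfl fun e _ => ?_
  rw [rooted, sum_filter]

end Rooted

/-! ### The conditional probabilities of the ERGM -/

section Model

variable {k : ℕ} (β : Fin (k + 1) → ℝ) (v : Fin (k + 1) → ℕ)
  (H : ∀ j : Fin (k + 1), SimpleGraph (Fin (v j))) (n : ℕ)

/-- The increment of the Hamiltonian when the edge `s` is added. -/
def ergmField (s : EdgeIdx n) (y : EdgeIdx n → Bool) : ℝ :=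
  ∑ j, β j * ∑ e ∈ edges (H j), rooted e s ((edges (H j)).erase e) y

/-- The conditional probability of the edge `s` given all the others. -/
def ergmCond (s : EdgeIdx n) (y : EdgeIdx n → Bool) : ℝ := Real.sigmoid (ergmField β v H n s y)

lemma ergmField_update_self (s : EdgeIdx n) (y : EdgeIdx n → Bool) (b : Bool) :
    ergmField β v H n s (Function.update y s b) = ergmField β v H n s y :=
  sum_congr rfl fun j _ => by
    congr 1
    exact sum_congr rfl fun e _ => rooted_update_self (notMem_erase e _) _ _ _

/-- A bound for the total variation of the field. -/
def fieldConst : ℝ := ∑ j, |β j| * (#(edges (H j)) * (8 * #(edges (H j))))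

lemma fieldConst_nonneg : 0 ≤ fieldConst β v H := sum_nonneg fun j _ => by positivity

lemma abs_ergmField_update_sub_le (hn : 2 ≤ n) (s t : EdgeIdx n) (y : EdgeIdx n → Bool) :
    |ergmField β v H n s (Function.update y t true) -
      ergmField β v H n s (Function.update y t false)| ≤ fieldConst β v H / n := by
  unfold ergmField fieldConst
  rw [← sum_sub_distrib, sum_div]
  refine (abs_sum_le_sum_abs _ _).trans (sum_le_sum fun j _ => ?_)
  rw [← mul_sub, abs_mul, mul_div_assoc]
  refine mul_le_mul_of_nonneg_left ?_ (abs_nonneg _)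
  rw [← sum_sub_distrib, mul_div_assoc, ← nsmul_eq_mul]
  refine (abs_sum_le_sum_abs _ _).trans (sum_le_card_nsmul _ _ _ fun e he => ?_)
  refine (abs_rooted_update_sub_le hn (notMem_erase e (edges (H j))) s t y).trans ?_
  gcongr
  exact erase_subset _ _

lemma sum_ergmField_update_sub (t : EdgeIdx n) (y : EdgeIdx n → Bool) :
    ∑ s, (ergmField β v H n s (Function.update y t true) -
      ergmField β v H n s (Function.update y t false)) =
      ∑ j, β j * ∑ e ∈ edges (H j), ∑ e' ∈ (edges (H j)).erase e,
        rooted e' t (((edges (H j)).erase e).erase e') y := by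
  have h : ∀ s, ergmField β v H n s (Function.update y t true) -
      ergmField β v H n s (Function.update y t false) = ∑ j, β j * ∑ e ∈ edges (H j),
      (rooted e s ((edges (H j)).erase e) (Function.update y t true) -
        rooted e s ((edges (H j)).erase e) (Function.update y t false)) := fun s => by
    unfold ergmField
    rw [← sum_sub_distrib]
    exact sum_congr rfl fun j _ => by rw [← mul_sub, sum_sub_distrib]
  simp_rw [h]
  rw [sum_comm]
  refine sum_congr rfl fun j _ => ?_
  rw [← mul_sum, sum_comm]
  exact congrArg _ (sum_congr rfl fun e _ => sum_rooted_update_sub _ _ _ _)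

lemma ergmWeight_pos (y : EdgeIdx n → Bool) : 0 < ergmWeight β v H n y := Real.exp_pos _

lemma ergmZ_pos : 0 < ergmZ β v H n :=
  sum_pos (fun y _ => ergmWeight_pos β v H n y) univ_nonempty

lemma ergmWeight_update (t : EdgeIdx n) (y : EdgeIdx n → Bool) :
    ergmWeight β v H n (Function.update y t true) =
      Real.exp (ergmField β v H n t y) * ergmWeight β v H n (Function.update y t false) := by
  unfold ergmWeight
  rw [← Real.exp_add]
  congr 1
  unfold ergmField
  rw [← sub_eq_iff_eq_add, ← sum_sub_distrib]
  refine sum_congr rfl fun j _ => ?_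
  rw [← homCount_update_sub, scale]
  ring

lemma isCondModel_ergm : IsCondModel (ergmProb β v H n) (ergmCond β v H n) :=
  isCondModel_of_log_ratio
    (fun y => div_nonneg (ergmWeight_pos β v H n y).le (ergmZ_pos β v H n).le)
    (by simp only [ergmProb]; rw [← sum_div]; exact div_self (ergmZ_pos β v H n).ne')
    (ergmField_update_self β v H n)
    (fun t y => by simp only [ergmProb]; rw [ergmWeight_update, mul_div_assoc])

end Model

section Supermodular

variable {v n : ℕ}

lemma mono_add_le (φ : Fin v ↪ Fin n) (A : Finset (EdgeIdx v)) (a b : EdgeIdx n → Bool) :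
    mono φ A a + mono φ A b ≤ mono φ A (a ⊓ b) + mono φ A (a ⊔ b) := by
  have h1 : mono φ A (a ⊓ b) = mono φ A a * mono φ A b := by
    unfold mono
    rw [← prod_mul_distrib]
    refine prod_congr rfl fun e _ => ?_
    rw [Pi.inf_apply]
    cases a (edgeMap φ e) <;> cases b (edgeMap φ e) <;> simp
  have h2 := mono_monotone φ A (le_sup_left : a ≤ a ⊔ b)
  have h3 := mono_monotone φ A (le_sup_right : b ≤ a ⊔ b)
  rw [h1]
  rcases mono_eq_zero_or_one φ A a with h | h <;> rcases mono_eq_zero_or_one φ A b with h' | h' <;>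
    rw [h] at h2 ⊢ <;> rw [h'] at h3 ⊢ <;> linarith

lemma mono_singleton_add (φ : Fin v ↪ Fin n) (e : EdgeIdx v) (a b : EdgeIdx n → Bool) :
    mono φ {e} a + mono φ {e} b = mono φ {e} (a ⊓ b) + mono φ {e} (a ⊔ b) := by
  simp only [mono, prod_singleton, Pi.inf_apply, Pi.sup_apply]
  cases a (edgeMap φ e) <;> cases b (edgeMap φ e) <;> simp

lemma homCount_add_le (H : SimpleGraph (Fin v)) (a b : EdgeIdx n → Bool) :
    (homCount H a : ℝ) + homCount H b ≤ homCount H (a ⊓ b) + homCount H (a ⊔ b) := by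
  simp only [homCount_eq_sum]
  rw [← sum_add_distrib, ← sum_add_distrib]
  exact sum_le_sum fun φ _ => mono_add_le φ _ a b

lemma homCount_add_eq {H : SimpleGraph (Fin v)} (hH : eCount H = 1) (a b : EdgeIdx n → Bool) :
    (homCount H a : ℝ) + homCount H b = homCount H (a ⊓ b) + homCount H (a ⊔ b) := by
  rw [eCount_eq_card_edges] at hH
  obtain ⟨e, he⟩ := card_eq_one.1 hH
  simp only [homCount_eq_sum, he]
  rw [← sum_add_distrib, ← sum_add_distrib]
  exact sum_congr rfl fun φ _ => mono_singleton_add φ e a b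

lemma ergmProb_mul_le {k : ℕ} {β : Fin (k + 1) → ℝ} {v : Fin (k + 1) → ℕ}
    {H : ∀ j : Fin (k + 1), SimpleGraph (Fin (v j))} (hβ : ∀ j, j ≠ 0 → 0 < β j)
    (he0 : eCount (H 0) = 1) (n : ℕ) (a b : EdgeIdx n → Bool) :
    ergmProb β v H n a * ergmProb β v H n b ≤
      ergmProb β v H n (a ⊓ b) * ergmProb β v H n (a ⊔ b) := by
  unfold ergmProb
  rw [div_mul_div_comm, div_mul_div_comm]
  have := ergmZ_pos β v H n
  refine div_le_div_of_nonneg_right ?_ (by positivity)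
  unfold ergmWeight
  rw [← Real.exp_add, ← Real.exp_add, Real.exp_le_exp, ← sum_add_distrib, ← sum_add_distrib]
  refine sum_le_sum fun j _ => ?_
  rw [← mul_add, ← mul_add]
  by_cases hj : j = 0
  · subst hj
    rw [homCount_add_eq he0]
  · have := hβ j hj
    exact mul_le_mul_of_nonneg_left (homCount_add_le _ a b)
      (mul_nonneg this.le (zpow_nonneg (Nat.cast_nonneg _) _))

end Supermodular

/-! ### A pointwise law of large numbers for rooted subgraph counts -/

section RootedNoise

variable {v n : ℕ} {μ : (EdgeIdx n → Bool) → ℝ} {σ : EdgeIdx n → (EdgeIdx n → Bool) → ℝ}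

/-- The error made in `rooted e s A` when the indicator of the image of `e₁` is replaced with its
conditional probability. -/
def rootedNoise (σ : EdgeIdx n → (EdgeIdx n → Bool) → ℝ) (e e₁ : EdgeIdx v)
    (A : Finset (EdgeIdx v)) (s : EdgeIdx n) (y : EdgeIdx n → Bool) : ℝ :=
  scale v n * ∑ φ : Fin v ↪ Fin n with edgeMap φ e = s,
    mono φ (A.erase e₁) y * (bval (y (edgeMap φ e₁)) - σ (edgeMap φ e₁) y)

lemma rootedNoise_eq {e₁ : EdgeIdx v} {A : Finset (EdgeIdx v)} (h₁ : e₁ ∈ A) (e : EdgeIdx v)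
    (s : EdgeIdx n) (y : EdgeIdx n → Bool) :
    rootedNoise σ e e₁ A s y = rooted e s A y - scale v n *
      ∑ φ : Fin v ↪ Fin n with edgeMap φ e = s, mono φ (A.erase e₁) y * σ (edgeMap φ e₁) y := by
  rw [rootedNoise, rooted, ← mul_sub, ← sum_sub_distrib]
  congr 1
  exact sum_congr rfl fun φ _ => by rw [mul_sub, ← mono_erase φ h₁]

lemma abs_rootedNoise_update_sub_le (M : IsCondModel μ σ) (hn : 2 ≤ n) {L : ℝ}
    (hL : ∀ s t y, |σ s (Function.update y t true) - σ s (Function.update y t false)| ≤ L / n)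
    {e e₁ : EdgeIdx v} {A : Finset (EdgeIdx v)} (he : e ∉ A) (h₁ : e₁ ∈ A) (s t : EdgeIdx n)
    (y : EdgeIdx n → Bool) :
    |rootedNoise σ e e₁ A s (Function.update y t true) -
      rootedNoise σ e e₁ A s (Function.update y t false)| ≤ (16 * #A + 4 * L) / n := by
  rw [rootedNoise_eq h₁, rootedNoise_eq h₁]
  set y₁ := Function.update y t true with hy₁
  set y₀ := Function.update y t false with hy₀
  have hL0 : 0 ≤ L / n := (abs_nonneg _).trans (hL s t y)
  have h1 := abs_rooted_update_sub_le hn he s t y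
  have h2 := abs_rooted_update_sub_le hn (fun h => he (mem_of_mem_erase h) : e ∉ A.erase e₁) s t y
  have h2' : (8 * #(A.erase e₁) / n : ℝ) ≤ 8 * #A / n := by
    gcongr; exact erase_subset _ _
  have h3 := mul_le_mul_of_nonneg_right (scale_mul_card_edgeMap_le_four hn e s) hL0
  have hle : y₀ ≤ y₁ := by
    intro u
    by_cases hu : u = t
    · subst hu; simp [hy₁, hy₀]
    · simp [hy₁, hy₀, hu]
  have h4 : |scale v n * ∑ φ : Fin v ↪ Fin n with edgeMap φ e = s,
        mono φ (A.erase e₁) y₁ * σ (edgeMap φ e₁) y₁ - scale v n *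
        ∑ φ : Fin v ↪ Fin n with edgeMap φ e = s, mono φ (A.erase e₁) y₀ * σ (edgeMap φ e₁) y₀| ≤
      (rooted e s (A.erase e₁) y₁ - rooted e s (A.erase e₁) y₀) + 4 * (L / n) := by
    refine le_trans ?_ (add_le_add_right h3 _)
    rw [← mul_sub, ← sum_sub_distrib, abs_mul, abs_of_nonneg (scale_nonneg (v := v) (n := n)),
      rooted, rooted, ← mul_sub, ← sum_sub_distrib, mul_assoc, ← mul_add, ← nsmul_eq_mul,
      ← sum_const, ← sum_add_distrib]
    refine mul_le_mul_of_nonneg_left ((abs_sum_le_sum_abs _ _).trans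
      (sum_le_sum fun φ _ => ?_)) scale_nonneg
    have ha := mono_monotone φ (A.erase e₁) hle
    have ha0 := mono_nonneg φ (A.erase e₁) y₀
    have ha1 := mono_le_one φ (A.erase e₁) y₀
    have hc0 := M.cond_nonneg (edgeMap φ e₁) y₁
    have hc1 := M.cond_le_one (edgeMap φ e₁) y₁
    have hcc := abs_le.1 (hL (edgeMap φ e₁) t y)
    rw [← hy₁, ← hy₀] at hcc
    rw [abs_le]
    constructor <;> nlinarith
  have h5 := abs_sub_le_iff.1 h1
  rw [abs_of_nonneg (sub_nonneg.2 (rooted_monotone e s _ hle))] at h2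
  rw [abs_le] at h1 h4 ⊢
  have h6 : (16 * #A + 4 * L) / (n : ℝ) = 8 * #A / n + 8 * #A / n + 4 * (L / n) := by ring
  rw [h6]
  constructor <;> linarith

lemma wprob_rootedNoise_le (M : IsCondModel μ σ) (hn : 2 ≤ n) {L : ℝ}
    (hL : ∀ s t y, |σ s (Function.update y t true) - σ s (Function.update y t false)| ≤ L / n)
    {e e₁ : EdgeIdx v} {A : Finset (EdgeIdx v)} (he : e ∉ A) (h₁ : e₁ ∈ A) (s : EdgeIdx n)
    {K l : ℝ} (hK : 16 * #A + 4 * L ≤ K) (hKn : K ≤ n) (hl : 0 < l) (hln : l ^ 4 = 1 / n) (m : ℕ) :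
    wprob μ {y | l < |rootedNoise σ e e₁ A s y|} ≤ noiseConst 4 m * K ^ m * l ^ (2 * m) := by
  have hn0 : (0 : ℝ) < n := by have : 0 < n := by omega
                               exact_mod_cast this
  have hL0 : 0 ≤ L / n := (abs_nonneg _).trans (hL s s fun _ => false)
  have hL0' : 0 ≤ L := by rwa [le_div_iff₀ hn0, zero_mul] at hL0
  have hK0 : 0 ≤ K := le_trans (by positivity) hK
  have h := M.wexp_noise_pow_le (univ.filter fun φ : Fin v ↪ Fin n => edgeMap φ e = s)
    (κ := scale v n) (C := 4) (D := K / n) scale_nonneg (by positivity)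
    (by rwa [div_le_one hn0]) (scale_mul_card_edgeMap_le_four hn e s)
    (fun φ => edgeMap φ e₁) (fun φ => mono φ (A.erase e₁))
    (fun φ y => by rw [abs_of_nonneg (mono_nonneg _ _ _)]; exact mono_le_one _ _ _)
    (fun φ _ y b => mono_update_of_forall_ne (fun e' he' heq =>
      ne_of_mem_erase he' (edgeMap_injective φ heq)) y b)
    (G := rootedNoise σ e e₁ A s) (fun y => rfl)
    (fun t y => by
      rw [abs_sub_comm]
      refine (abs_update_sub_le _ t y false).trans
        ((abs_rootedNoise_update_sub_le M hn hL he h₁ s t y).trans ?_)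
      gcongr) m
  refine (wprob_abs_gt_le M.nonneg _ hl m).trans ?_
  rw [div_le_iff₀ (by positivity)]
  refine h.trans (le_of_eq ?_)
  have : K / n = K * l ^ 4 := by rw [hln]; ring
  rw [this]
  ring

/-- All the replacement errors for subgraphs on `v` vertices are at most `l`. -/
def NoiseLE (v : ℕ) (σ : EdgeIdx n → (EdgeIdx n → Bool) → ℝ) (l : ℝ) (y : EdgeIdx n → Bool) :
    Prop :=
  ∀ (e e₁ : EdgeIdx v) (A : Finset (EdgeIdx v)) (s : EdgeIdx n), e ∉ A → e₁ ∈ A →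
    |rootedNoise σ e e₁ A s y| ≤ l

/-- The number of choices of `(e, e₁, A)` in `NoiseLE`. -/
def noiseCard (v : ℕ) : ℕ := Fintype.card (EdgeIdx v × EdgeIdx v × Finset (EdgeIdx v))

lemma wprob_not_noiseLE_le (M : IsCondModel μ σ) (hn : 2 ≤ n) {L : ℝ}
    (hL : ∀ s t y, |σ s (Function.update y t true) - σ s (Function.update y t false)| ≤ L / n)
    {K l : ℝ} (hK : 16 * (Fintype.card (EdgeIdx v) : ℝ) + 4 * L ≤ K) (hKn : K ≤ n) (hl : 0 < l)
    (hln : l ^ 4 = 1 / n) :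
    wprob μ {y | ¬ NoiseLE v σ l y} ≤ noiseCard v * (noiseConst 4 16 * K ^ 16) * l ^ 24 := by
  classical
  have hn0 : (0 : ℝ) < n := by have : 0 < n := by omega
                               exact_mod_cast this
  set T : Finset ((EdgeIdx v × EdgeIdx v × Finset (EdgeIdx v)) × EdgeIdx n) :=
    univ.filter fun i => i.1.1 ∉ i.1.2.2 ∧ i.1.2.1 ∈ i.1.2.2 with hT
  have hsub : {y | ¬ NoiseLE v σ l y} ⊆
      ⋃ i ∈ T, {y | l < |rootedNoise σ i.1.1 i.1.2.1 i.1.2.2 i.2 y|} := by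
    intro y hy
    simp only [NoiseLE, Set.mem_ofPred_eq] at hy
    push Not at hy
    obtain ⟨e, e₁, A, s, he, h₁, hlt⟩ := hy
    exact Set.mem_iUnion₂.2 ⟨((e, e₁, A), s), by simp [hT, he, h₁], hlt⟩
  have hL0 : 0 ≤ L / n := by
    have hne : Nonempty (EdgeIdx n) := ⟨EdgeIdx.mk ⟨0, by omega⟩ ⟨1, by omega⟩ (by simp)⟩
    obtain ⟨s⟩ := hne
    exact (abs_nonneg _).trans (hL s s fun _ => false)
  have hL0' : 0 ≤ L := by rwa [le_div_iff₀ hn0, zero_mul] at hL0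
  have hK0 : 0 ≤ K := le_trans (by positivity) hK
  have hc : 0 ≤ noiseConst 4 16 := noiseConst_nonneg (by norm_num) 16
  refine (wprob_mono M.nonneg hsub).trans ((wprob_biUnion_le M.nonneg _ _).trans ?_)
  refine (sum_le_card_nsmul _ _ (noiseConst 4 16 * K ^ 16 * l ^ 32) fun i hi => ?_).trans ?_
  · have hi' := (mem_filter.1 hi).2
    refine wprob_rootedNoise_le M hn hL hi'.1 hi'.2 i.2 (le_trans ?_ hK) hKn hl hln 16
    have : (#i.1.2.2 : ℝ) ≤ Fintype.card (EdgeIdx v) := by exact_mod_cast card_le_univ _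
    linarith
  · rw [nsmul_eq_mul]
    have h1 : (#T : ℝ) ≤ noiseCard v * (n : ℝ) ^ 2 := by
      have h2 : #T ≤ noiseCard v * Fintype.card (EdgeIdx n) := by
        refine (card_le_univ _).trans_eq ?_
        rw [Fintype.card_prod]; rfl
      have h3 : (Fintype.card (EdgeIdx n) : ℝ) ≤ (n : ℝ) ^ 2 := by
        rw [card_edgeIdx]; nlinarith
      calc (#T : ℝ) ≤ noiseCard v * (Fintype.card (EdgeIdx n) : ℝ) := by exact_mod_cast h2
        _ ≤ _ := by gcongr
    refine (mul_le_mul_of_nonneg_right h1 (by positivity)).trans_eq ?_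
    have : (n : ℝ) ^ 2 * l ^ 32 = l ^ 24 := by
      rw [show l ^ 32 = (l ^ 4) ^ 2 * l ^ 24 by ring, hln]
      field_simp
    calc _ = noiseCard v * (noiseConst 4 16 * K ^ 16) * ((n : ℝ) ^ 2 * l ^ 32) := by ring
      _ = _ := by rw [this]

lemma rooted_le_of_noiseLE (hn : 2 ≤ n) {l r : ℝ} (hl : 0 ≤ l) (hr0 : 0 ≤ r) (hr1 : r ≤ 1)
    {y : EdgeIdx n → Bool} (hσ : ∀ s, σ s y ≤ r) (hy : NoiseLE v σ l y) (e : EdgeIdx v)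
    (s : EdgeIdx n) (A : Finset (EdgeIdx v)) (he : e ∉ A) :
    rooted e s A y ≤ 2 * r ^ #A + #A * l + (2 * (v : ℝ) ^ 2 + 4) / n := by
  have hc : 0 ≤ (2 * (v : ℝ) ^ 2 + 4) / n := by positivity
  induction A using Finset.induction_on with
  | empty =>
    have := (abs_le.1 (abs_rooted_empty_sub_two_le hn e s y)).2
    simp only [card_empty, pow_zero, Nat.cast_zero]
    linarith
  | insert e₁ A h₁ ih =>
    have ih := ih fun h => he (mem_insert_of_mem h)
    have h := (abs_le.1 (hy e e₁ (insert e₁ A) s he (mem_insert_self _ _))).2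
    rw [rootedNoise_eq (mem_insert_self _ _), erase_insert h₁] at h
    have h2 : scale v n * ∑ φ : Fin v ↪ Fin n with edgeMap φ e = s,
        mono φ A y * σ (edgeMap φ e₁) y ≤ rooted e s A y * r := by
      rw [rooted, mul_assoc, sum_mul]
      exact mul_le_mul_of_nonneg_left (sum_le_sum fun φ _ =>
        mul_le_mul_of_nonneg_left (hσ _) (mono_nonneg _ _ _)) scale_nonneg
    rw [card_insert_of_notMem h₁, pow_succ, Nat.cast_succ]
    have h3 := mul_le_mul_of_nonneg_right ih hr0
    have h4 : 0 ≤ (#A : ℝ) * l := by positivity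
    nlinarith

lemma le_rooted_of_noiseLE (hn : 2 ≤ n) {l r : ℝ} (hl : 0 ≤ l) (hr0 : 0 ≤ r) (hr1 : r ≤ 1)
    {y : EdgeIdx n → Bool} (hσ : ∀ s, r ≤ σ s y) (hy : NoiseLE v σ l y) (e : EdgeIdx v)
    (s : EdgeIdx n) (A : Finset (EdgeIdx v)) (he : e ∉ A) :
    2 * r ^ #A - #A * l - (2 * (v : ℝ) ^ 2 + 4) / n ≤ rooted e s A y := by
  have hc : 0 ≤ (2 * (v : ℝ) ^ 2 + 4) / n := by positivity
  induction A using Finset.induction_on with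
  | empty =>
    have := (abs_le.1 (abs_rooted_empty_sub_two_le hn e s y)).1
    simp only [card_empty, pow_zero, Nat.cast_zero]
    linarith
  | insert e₁ A h₁ ih =>
    have ih := ih fun h => he (mem_insert_of_mem h)
    have h := (abs_le.1 (hy e e₁ (insert e₁ A) s he (mem_insert_self _ _))).1
    rw [rootedNoise_eq (mem_insert_self _ _), erase_insert h₁] at h
    have h2 : rooted e s A y * r ≤ scale v n * ∑ φ : Fin v ↪ Fin n with edgeMap φ e = s,
        mono φ A y * σ (edgeMap φ e₁) y := by
      rw [rooted, mul_assoc, sum_mul]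
      exact mul_le_mul_of_nonneg_left (sum_le_sum fun φ _ =>
        mul_le_mul_of_nonneg_left (hσ _) (mono_nonneg _ _ _)) scale_nonneg
    rw [card_insert_of_notMem h₁, pow_succ, Nat.cast_succ]
    have h3 := mul_le_mul_of_nonneg_right ih hr0
    have h4 : 0 ≤ (#A : ℝ) * l := by positivity
    nlinarith

end RootedNoise

section FixedPoint

/-- At a unique fixed point with derivative less than one, the distance to the fixed point is
controlled by the defect `a - f a`. -/
lemma exists_linear_defect {f : ℝ → ℝ} (hf : Differentiable ℝ f) {p : ℝ}
    (hp : p ∈ Set.Ioo (0 : ℝ) 1) (hfix : f p = p)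
    (huniq : ∀ q ∈ Set.Ioo (0 : ℝ) 1, f q = q → q = p) (hsub : deriv f p < 1)
    (h0 : 0 < f 0) (h1 : f 1 < 1) :
    ∃ c > 0, ∀ a ∈ Set.Icc (0 : ℝ) 1,
      (p ≤ a → c * (a - p) ≤ a - f a) ∧ (a ≤ p → c * (p - a) ≤ f a - a) := by
  set F : ℝ → ℝ := fun a => a - f a with hF
  have hFd : Differentiable ℝ F := differentiable_id.sub hf
  have hFp : F p = 0 := by simp [hF, hfix]
  have hmul : ∀ a, dslope F p a * (a - p) = F a := by
    intro a
    have := sub_smul_dslope F p a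
    rw [hFp, sub_zero, smul_eq_mul, mul_comm] at this
    exact this
  have hcont : Continuous (dslope F p) := by
    rw [← continuousOn_univ, continuousOn_dslope Filter.univ_mem]
    exact ⟨hFd.continuous.continuousOn, hFd p⟩
  have hdp : 0 < dslope F p p := by
    rw [dslope_same, hF, deriv_fun_sub differentiableAt_fun_id (hf p), deriv_id'']
    linarith
  have hne : ∀ a ∈ Set.Icc (0 : ℝ) 1, dslope F p a ≠ 0 := by
    intro a ha hz
    have hFa : f a = a := by
      have := hmul a
      rw [hz, zero_mul] at this
      simp only [hF] at this
      linarith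
    rcases eq_or_lt_of_le ha.1 with h | h
    · rw [← h] at hFa; linarith
    rcases eq_or_lt_of_le ha.2 with h' | h'
    · rw [h'] at hFa; linarith
    have := huniq a ⟨h, h'⟩ hFa
    rw [this] at hz
    exact hdp.ne' hz
  have hpos : ∀ a ∈ Set.Icc (0 : ℝ) 1, 0 < dslope F p a := by
    intro a ha
    by_contra hle
    push Not at hle
    obtain ⟨b, hb, hb0⟩ := isPreconnected_Icc.intermediate_value ha
      ⟨hp.1.le, hp.2.le⟩ hcont.continuousOn ⟨hle, hdp.le⟩
    exact hne b hb hb0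
  obtain ⟨b, hb, hmin⟩ := isCompact_Icc.exists_isMinOn (Set.nonempty_Icc.2 zero_le_one)
    (hcont.continuousOn (s := Set.Icc (0 : ℝ) 1))
  refine ⟨dslope F p b, hpos b hb, fun a ha => ⟨fun hpa => ?_, fun hap => ?_⟩⟩
  · have h := hmul a
    simp only [hF] at h
    rw [← h]
    exact mul_le_mul_of_nonneg_right (hmin ha) (by linarith)
  · have h := hmul a
    have h' := mul_le_mul_of_nonneg_right (hmin ha) (sub_nonneg.2 hap)
    simp only [hF] at h h' ⊢
    linarith

lemma abs_sigmoid_sub_le (a b : ℝ) : |Real.sigmoid a - Real.sigmoid b| ≤ |a - b| := by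
  have := Convex.norm_image_sub_le_of_norm_deriv_le (f := Real.sigmoid) (C := 1) (s := Set.univ)
    (x := b) (y := a) (fun x _ => differentiable_sigmoid x) (fun x _ => by
      have h1 := Real.sigmoid_pos x
      have h2 := Real.sigmoid_lt_one x
      rw [Real.deriv_sigmoid, Real.norm_eq_abs, abs_le]
      constructor <;> nlinarith) convex_univ trivial trivial
  simpa using this

end FixedPoint

section LocalLaw

variable {k : ℕ} {β : Fin (k + 1) → ℝ} {v : Fin (k + 1) → ℕ}
  {H : ∀ j : Fin (k + 1), SimpleGraph (Fin (v j))} {n : ℕ}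

lemma phiFn_eq_sigmoid (a : ℝ) : phiFn β v H a = Real.sigmoid (2 * PhiFn β v H a) := by
  rw [phiFn, Real.sigmoid_def, Real.exp_neg]
  have := Real.exp_pos (2 * PhiFn β v H a)
  field_simp

variable (β v H) in
lemma differentiable_PhiFn : Differentiable ℝ (PhiFn β v H) := by
  unfold PhiFn; fun_prop

variable (β v H) in
lemma differentiable_phiFn : Differentiable ℝ (phiFn β v H) := by
  have : phiFn β v H = fun a => Real.sigmoid (2 * PhiFn β v H a) := funext phiFn_eq_sigmoid
  rw [this]
  exact differentiable_sigmoid.comp ((differentiable_PhiFn β v H).const_mul 2)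

lemma two_mul_PhiFn (a : ℝ) : 2 * PhiFn β v H a =
    ∑ j, β j * ∑ e ∈ edges (H j), 2 * a ^ #((edges (H j)).erase e) := by
  rw [PhiFn, mul_sum]
  refine sum_congr rfl fun j _ => ?_
  have : ∀ e ∈ edges (H j), 2 * a ^ #((edges (H j)).erase e) = 2 * a ^ (eCount (H j) - 1) :=
    fun e he => by rw [card_erase_of_mem he, eCount_eq_card_edges]
  rw [sum_congr rfl this, sum_const, nsmul_eq_mul, ← eCount_eq_card_edges]
  ring

/-- A bound for the error in the local law for the field. -/
def lawConst (β : Fin (k + 1) → ℝ) (v : Fin (k + 1) → ℕ)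
    (H : ∀ j : Fin (k + 1), SimpleGraph (Fin (v j))) : ℝ :=
  ∑ j, |β j| * (#(edges (H j)) * (#(edges (H j)) + (2 * (v j : ℝ) ^ 2 + 4)))

lemma lawConst_nonneg : 0 ≤ lawConst β v H := sum_nonneg fun j _ => by positivity

lemma abs_sum_rooted_sub_le {v n : ℕ} {A : Finset (EdgeIdx v)} {s : EdgeIdx n} {l r c : ℝ}
    (hl : 0 ≤ l) (y : EdgeIdx n → Bool) (hnl : 1 / (n : ℝ) ≤ l) (hc : 0 ≤ c)
    (h : ∀ e ∈ A, rooted e s (A.erase e) y ≤ 2 * r ^ #(A.erase e) + #(A.erase e) * l + c / n) :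
    ∑ e ∈ A, rooted e s (A.erase e) y ≤ ∑ e ∈ A, 2 * r ^ #(A.erase e) + #A * (#A + c) * l := by
  rw [← sub_le_iff_le_add', ← sum_sub_distrib, mul_assoc, ← nsmul_eq_mul]
  refine sum_le_card_nsmul _ _ _ fun e he => ?_
  have h1 := h e he
  have h2 : (#(A.erase e) : ℝ) * l ≤ #A * l := by gcongr; exact erase_subset _ _
  have h3 : c / n ≤ c * l := by
    rw [div_eq_mul_one_div]; exact mul_le_mul_of_nonneg_left hnl hc
  linarith

lemma le_sum_rooted_sub {v n : ℕ} {A : Finset (EdgeIdx v)} {s : EdgeIdx n} {l r c : ℝ}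
    (hl : 0 ≤ l) (y : EdgeIdx n → Bool) (hnl : 1 / (n : ℝ) ≤ l) (hc : 0 ≤ c)
    (h : ∀ e ∈ A, 2 * r ^ #(A.erase e) - #(A.erase e) * l - c / n ≤ rooted e s (A.erase e) y) :
    ∑ e ∈ A, 2 * r ^ #(A.erase e) - #A * (#A + c) * l ≤ ∑ e ∈ A, rooted e s (A.erase e) y := by
  rw [sub_le_iff_le_add', ← sub_le_iff_le_add, ← sum_sub_distrib, mul_assoc, ← nsmul_eq_mul]
  refine sum_le_card_nsmul _ _ _ fun e he => ?_
  have h1 := h e he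
  have h2 : (#(A.erase e) : ℝ) * l ≤ #A * l := by gcongr; exact erase_subset _ _
  have h3 : c / n ≤ c * l := by
    rw [div_eq_mul_one_div]; exact mul_le_mul_of_nonneg_left hnl hc
  linarith

lemma mul_le_add_abs_mul {b x a d : ℝ} (hb : 0 < b ∨ |x - a| ≤ d)
    (h : x ≤ a + d) : b * x ≤ b * a + |b| * d := by
  rcases hb with hb | hb
  · rw [abs_of_pos hb]; nlinarith
  · have := le_abs_self (b * (x - a))
    rw [abs_mul] at this
    have := mul_le_mul_of_nonneg_left hb (abs_nonneg b)
    linarith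

lemma sub_abs_mul_le_mul {b x a d : ℝ} (hb : 0 < b ∨ |x - a| ≤ d)
    (h : a - d ≤ x) : b * a - |b| * d ≤ b * x := by
  rcases hb with hb | hb
  · rw [abs_of_pos hb]; nlinarith
  · have := neg_abs_le (b * (x - a))
    rw [abs_mul] at this
    have := mul_le_mul_of_nonneg_left hb (abs_nonneg b)
    linarith

lemma abs_sum_rooted_zero_sub_le (hn : 2 ≤ n) (he0 : eCount (H 0) = 1) {l : ℝ}
    (hl : 0 ≤ l) (hnl : 1 / (n : ℝ) ≤ l) (s : EdgeIdx n) (y : EdgeIdx n → Bool) (r : ℝ) :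
    |∑ e ∈ edges (H 0), rooted e s ((edges (H 0)).erase e) y -
      ∑ e ∈ edges (H 0), 2 * r ^ #((edges (H 0)).erase e)| ≤
      #(edges (H 0)) * (#(edges (H 0)) + (2 * (v 0 : ℝ) ^ 2 + 4)) * l := by
  rw [eCount_eq_card_edges] at he0
  obtain ⟨e, he⟩ := card_eq_one.1 he0
  rw [he]
  simp only [sum_singleton, erase_singleton, card_empty, pow_zero, mul_one, card_singleton,
    Nat.cast_one, one_mul]
  refine (abs_rooted_empty_sub_two_le hn e s y).trans ?_
  rw [div_eq_mul_one_div]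
  have h1 : (0 : ℝ) ≤ 2 * (v 0 : ℝ) ^ 2 + 4 := by positivity
  have := mul_le_mul_of_nonneg_left hnl h1
  linarith

lemma ergmField_le (hβ : ∀ j, j ≠ 0 → 0 < β j) (he0 : eCount (H 0) = 1) (hn : 2 ≤ n) {l r : ℝ}
    (hl : 0 ≤ l) (hnl : 1 / (n : ℝ) ≤ l) (hr0 : 0 ≤ r) (hr1 : r ≤ 1) {y : EdgeIdx n → Bool}
    (hσ : ∀ s, ergmCond β v H n s y ≤ r) (hy : ∀ j, NoiseLE (v j) (ergmCond β v H n) l y)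
    (s : EdgeIdx n) : ergmField β v H n s y ≤ 2 * PhiFn β v H r + lawConst β v H * l := by
  rw [two_mul_PhiFn, ergmField, lawConst, sum_mul, ← sum_add_distrib]
  refine sum_le_sum fun j _ => ?_
  rw [mul_assoc]
  refine mul_le_add_abs_mul ?_ ?_
  · by_cases hj : j = 0
    · subst hj
      exact Or.inr (abs_sum_rooted_zero_sub_le hn he0 hl hnl s y r)
    · exact Or.inl (hβ j hj)
  · exact abs_sum_rooted_sub_le hl y hnl (by positivity) fun e _ =>
      rooted_le_of_noiseLE hn hl hr0 hr1 hσ (hy j) e s _ (notMem_erase e _)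

lemma le_ergmField (hβ : ∀ j, j ≠ 0 → 0 < β j) (he0 : eCount (H 0) = 1) (hn : 2 ≤ n) {l r : ℝ}
    (hl : 0 ≤ l) (hnl : 1 / (n : ℝ) ≤ l) (hr0 : 0 ≤ r) (hr1 : r ≤ 1) {y : EdgeIdx n → Bool}
    (hσ : ∀ s, r ≤ ergmCond β v H n s y) (hy : ∀ j, NoiseLE (v j) (ergmCond β v H n) l y)
    (s : EdgeIdx n) : 2 * PhiFn β v H r - lawConst β v H * l ≤ ergmField β v H n s y := by
  rw [two_mul_PhiFn, ergmField, lawConst, sum_mul, ← sum_sub_distrib]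
  refine sum_le_sum fun j _ => ?_
  rw [mul_assoc]
  refine sub_abs_mul_le_mul ?_ ?_
  · by_cases hj : j = 0
    · subst hj
      exact Or.inr (abs_sum_rooted_zero_sub_le hn he0 hl hnl s y r)
    · exact Or.inl (hβ j hj)
  · exact le_sum_rooted_sub hl y hnl (by positivity) fun e _ =>
      le_rooted_of_noiseLE hn hl hr0 hr1 hσ (hy j) e s _ (notMem_erase e _)

lemma edgeIdx_nonempty (hn : 2 ≤ n) : Nonempty (EdgeIdx n) :=
  ⟨EdgeIdx.mk ⟨0, by omega⟩ ⟨1, by omega⟩ (by simp)⟩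

lemma exists_extremal_cond (hβ : ∀ j, j ≠ 0 → 0 < β j) (he0 : eCount (H 0) = 1) (hn : 2 ≤ n)
    {l : ℝ} (hl : 0 ≤ l) (hnl : 1 / (n : ℝ) ≤ l) {p c : ℝ} (hc : 0 < c)
    (hcp : ∀ a ∈ Set.Icc (0 : ℝ) 1, (p ≤ a → c * (a - p) ≤ a - phiFn β v H a) ∧
      (a ≤ p → c * (p - a) ≤ phiFn β v H a - a))
    {y : EdgeIdx n → Bool} (hy : ∀ j, NoiseLE (v j) (ergmCond β v H n) l y) :
    ∃ r₀ ∈ Set.Icc (0 : ℝ) 1, ∃ r₁ ∈ Set.Icc (0 : ℝ) 1,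
      (∀ s, r₀ ≤ ergmCond β v H n s y ∧ ergmCond β v H n s y ≤ r₁) ∧
      p - lawConst β v H / c * l ≤ r₀ ∧ r₁ ≤ p + lawConst β v H / c * l := by
  have := edgeIdx_nonempty hn
  obtain ⟨s₀, hs₀⟩ := Finite.exists_min fun s => ergmCond β v H n s y
  obtain ⟨s₁, hs₁⟩ := Finite.exists_max fun s => ergmCond β v H n s y
  have hI : ∀ s, ergmCond β v H n s y ∈ Set.Icc (0 : ℝ) 1 := fun s =>
    ⟨(Real.sigmoid_pos _).le, (Real.sigmoid_lt_one _).le⟩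
  have hnn : 0 ≤ lawConst β v H / c * l := by have := lawConst_nonneg (β := β) (H := H); positivity
  have hLl : 0 ≤ lawConst β v H * l := by have := lawConst_nonneg (β := β) (H := H); positivity
  refine ⟨_, hI s₀, _, hI s₁, fun s => ⟨hs₀ s, hs₁ s⟩, ?_, ?_⟩
  · have h1 := Real.sigmoid_monotone (le_ergmField hβ he0 hn hl hnl (hI s₀).1 (hI s₀).2 hs₀ hy s₀)
    have h2 := abs_sigmoid_sub_le (2 * PhiFn β v H (ergmCond β v H n s₀ y))
      (2 * PhiFn β v H (ergmCond β v H n s₀ y) - lawConst β v H * l)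
    rw [← phiFn_eq_sigmoid, sub_sub_cancel, abs_of_nonneg hLl] at h2
    have h3 := (abs_le.1 h2).2
    change _ ≤ ergmCond β v H n s₀ y at h1
    by_cases hle : ergmCond β v H n s₀ y ≤ p
    · have h4 := (hcp _ (hI s₀)).2 hle
      have h5 : p - ergmCond β v H n s₀ y ≤ lawConst β v H * l / c := by
        rw [le_div_iff₀ hc]; linarith
      rw [div_mul_eq_mul_div]
      linarith
    · push Not at hle
      linarith
  · have h1 := Real.sigmoid_monotone (ergmField_le hβ he0 hn hl hnl (hI s₁).1 (hI s₁).2 hs₁ hy s₁)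
    have h2 := abs_sigmoid_sub_le (2 * PhiFn β v H (ergmCond β v H n s₁ y) + lawConst β v H * l)
      (2 * PhiFn β v H (ergmCond β v H n s₁ y))
    rw [← phiFn_eq_sigmoid, add_sub_cancel_left, abs_of_nonneg hLl] at h2
    have h3 := (abs_le.1 h2).2
    change ergmCond β v H n s₁ y ≤ _ at h1
    by_cases hle : p ≤ ergmCond β v H n s₁ y
    · have h4 := (hcp _ (hI s₁)).1 hle
      have h5 : ergmCond β v H n s₁ y - p ≤ lawConst β v H * l / c := by
        rw [le_div_iff₀ hc]; linarith
      rw [div_mul_eq_mul_div]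
      linarith
    · push Not at hle
      linarith

lemma pow_le_pow_add {a b d : ℝ} (ha : a ∈ Set.Icc (0 : ℝ) 1) (hb : b ∈ Set.Icc (0 : ℝ) 1)
    (hd : 0 ≤ d) (h : a ≤ b + d) (m : ℕ) : a ^ m ≤ b ^ m + m * d := by
  induction m with
  | zero => simp
  | succ m ih =>
    rw [pow_succ, pow_succ, Nat.cast_succ]
    have h1 := mul_le_mul_of_nonneg_right ih ha.1
    have h2 := mul_le_mul_of_nonneg_left h (pow_nonneg hb.1 m)
    have h3 : b ^ m * d ≤ d := mul_le_of_le_one_left hd (pow_le_one₀ hb.1 hb.2)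
    have h4 : (m * d) * a ≤ m * d := mul_le_of_le_one_right (by positivity) ha.2
    nlinarith

lemma abs_rooted_sub_le_of_noiseLE (hβ : ∀ j, j ≠ 0 → 0 < β j) (he0 : eCount (H 0) = 1)
    (hn : 2 ≤ n) {l : ℝ} (hl : 0 ≤ l) (hnl : 1 / (n : ℝ) ≤ l) {p c : ℝ}
    (hp : p ∈ Set.Ioo (0 : ℝ) 1) (hc : 0 < c)
    (hcp : ∀ a ∈ Set.Icc (0 : ℝ) 1, (p ≤ a → c * (a - p) ≤ a - phiFn β v H a) ∧
      (a ≤ p → c * (p - a) ≤ phiFn β v H a - a))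
    {y : EdgeIdx n → Bool} (hy : ∀ j, NoiseLE (v j) (ergmCond β v H n) l y)
    {w : ℕ} (hw : NoiseLE w (ergmCond β v H n) l y) (e : EdgeIdx w) (s : EdgeIdx n)
    (A : Finset (EdgeIdx w)) (he : e ∉ A) :
    |rooted e s A y - 2 * p ^ #A| ≤
      (Fintype.card (EdgeIdx w) * (2 * (lawConst β v H / c) + 1) + (2 * (w : ℝ) ^ 2 + 4)) * l := by
  obtain ⟨r₀, hr₀, r₁, hr₁, hσ, h0, h1⟩ := exists_extremal_cond hβ he0 hn hl hnl hc hcp hy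
  have hu := rooted_le_of_noiseLE hn hl hr₁.1 hr₁.2 (fun s => (hσ s).2) hw e s A he
  have hd := le_rooted_of_noiseLE hn hl hr₀.1 hr₀.2 (fun s => (hσ s).1) hw e s A he
  set b := lawConst β v H / c with hb
  have hb0 : 0 ≤ b := div_nonneg lawConst_nonneg hc.le
  have hp' : p ∈ Set.Icc (0 : ℝ) 1 := ⟨hp.1.le, hp.2.le⟩
  have h2 := pow_le_pow_add hr₁ hp' (by positivity) h1 #A
  have h3 := pow_le_pow_add hp' hr₀ (d := b * l) (by positivity) (by linarith) #A
  have h4 : (#A : ℝ) ≤ Fintype.card (EdgeIdx w) := by exact_mod_cast card_le_univ A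
  have h5 : (2 * (w : ℝ) ^ 2 + 4) / n ≤ (2 * (w : ℝ) ^ 2 + 4) * l := by
    rw [div_eq_mul_one_div]; exact mul_le_mul_of_nonneg_left hnl (by positivity)
  have h6 : (#A : ℝ) * ((2 * b + 1) * l) ≤ Fintype.card (EdgeIdx w) * ((2 * b + 1) * l) := by
    gcongr
  rw [abs_le]
  constructor <;> linarith

end LocalLaw

section Approximation

/-- A model on the cube in which, on an order-connected set `Γ` of overwhelming probability, the
conditional probabilities are close to `p`, their sum has increments close to `ρ`, and the
observable `F` has increments close to `κ`. -/
structure IsApproxAffine {I : Type} [Fintype I] [DecidableEq I] (p ρ κ C l : ℝ) (n : ℕ)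
    (μ : (I → Bool) → ℝ) (σ : I → (I → Bool) → ℝ) (Γ : Set (I → Bool)) (F : (I → Bool) → ℝ) :
    Prop where
  cond : IsCondModel μ σ
  supermodular : ∀ a b, μ a * μ b ≤ μ (a ⊓ b) * μ (a ⊔ b)
  two_le : 2 ≤ n
  l_pos : 0 < l
  l_pow : l ^ 4 = 1 / n
  card_ge : (n : ℝ) ^ 2 / 4 ≤ Fintype.card I
  card_le : (Fintype.card I : ℝ) ≤ (n : ℝ) ^ 2
  ordConnected : Γ.OrdConnected
  wprob_compl_le : wprob μ Γᶜ ≤ C * l ^ 24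
  sum_cond_update_le : ∀ t y,
    ∑ s, |σ s (Function.update y t true) - σ s (Function.update y t false)| ≤ C
  abs_cond_sub_le : ∀ s, ∀ y ∈ Γ, |σ s y - p| ≤ C * l
  abs_sum_cond_update_sub_le : ∀ t y, y t = false → y ∈ Γ → Function.update y t true ∈ Γ →
    |∑ s, (σ s (Function.update y t true) - σ s y) - ρ| ≤ C * l
  abs_le : ∀ y, |F y| ≤ C * (n : ℝ) ^ 2
  abs_update_sub_le : ∀ t y, y t = false → y ∈ Γ → Function.update y t true ∈ Γ →
    |F (Function.update y t true) - F y - κ| ≤ C * l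

end Approximation

section ErgmApproximation

lemma abs_sigmoid_sub_sub_mul_le {x a b d : ℝ} (ha : |a - x| ≤ d) (hb : |b - x| ≤ d) :
    |Real.sigmoid b - Real.sigmoid a -
      Real.sigmoid x * (1 - Real.sigmoid x) * (b - a)| ≤ d * |b - a| := by
  have hderiv : ∀ z : ℝ, HasDerivAt (fun z => Real.sigmoid z -
      Real.sigmoid x * (1 - Real.sigmoid x) * z) (Real.sigmoid z * (1 - Real.sigmoid z) -
      Real.sigmoid x * (1 - Real.sigmoid x)) z := fun z => by
    simpa using (Real.hasDerivAt_sigmoid z).fun_sub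
      ((hasDerivAt_id z).const_mul (Real.sigmoid x * (1 - Real.sigmoid x)))
  have := Convex.norm_image_sub_le_of_norm_hasDerivWithin_le (C := d)
    (s := Set.Icc (x - d) (x + d)) (x := a) (y := b)
    (fun z _ => (hderiv z).hasDerivWithinAt) (fun z hz => by
      have h1 := Real.sigmoid_pos z
      have h2 := Real.sigmoid_lt_one z
      have h3 := Real.sigmoid_pos x
      have h4 := Real.sigmoid_lt_one x
      have h5 := abs_sigmoid_sub_le z x
      have h6 : |z - x| ≤ d := by rw [abs_le]; constructor <;> linarith [hz.1, hz.2]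
      have h7 : |1 - Real.sigmoid z - Real.sigmoid x| ≤ 1 := by
        rw [abs_le]; constructor <;> linarith
      have h8 : Real.sigmoid z * (1 - Real.sigmoid z) - Real.sigmoid x * (1 - Real.sigmoid x) =
        (Real.sigmoid z - Real.sigmoid x) * (1 - Real.sigmoid z - Real.sigmoid x) := by ring
      rw [h8, Real.norm_eq_abs, abs_mul]
      have := mul_le_mul (h5.trans h6) h7 (abs_nonneg _) ((abs_nonneg _).trans h6)
      linarith) (convex_Icc _ _)
    (by rw [abs_le] at ha; constructor <;> linarith)
    (by rw [abs_le] at hb; constructor <;> linarith)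
  rw [Real.norm_eq_abs, Real.norm_eq_abs] at this
  refine le_trans (le_of_eq ?_) this
  congr 1
  ring

variable {k : ℕ} {β : Fin (k + 1) → ℝ} {v : Fin (k + 1) → ℕ}
  {H : ∀ j : Fin (k + 1), SimpleGraph (Fin (v j))} {n : ℕ}

lemma ergmField_update_sub_nonneg (hβ : ∀ j, j ≠ 0 → 0 < β j) (he0 : eCount (H 0) = 1)
    (hn : 2 ≤ n) (s t : EdgeIdx n) (y : EdgeIdx n → Bool) :
    0 ≤ ergmField β v H n s (Function.update y t true) -
      ergmField β v H n s (Function.update y t false) := by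
  rw [ergmField, ergmField, ← sum_sub_distrib]
  refine sum_nonneg fun j _ => ?_
  rw [← mul_sub, ← sum_sub_distrib]
  by_cases hj : j = 0
  · subst hj
    rw [eCount_eq_card_edges] at he0
    obtain ⟨e, he⟩ := card_eq_one.1 he0
    rw [he, sum_singleton, erase_singleton, rooted_update_sub]
    simp
  · exact mul_nonneg (hβ j hj).le (sum_nonneg fun e _ =>
      (rooted_update_sub_mem hn (notMem_erase e _) s t y).1)

lemma sum_ergmField_update_sub_le (hn : 2 ≤ n) (t : EdgeIdx n) (y : EdgeIdx n → Bool) :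
    ∑ s, (ergmField β v H n s (Function.update y t true) -
      ergmField β v H n s (Function.update y t false)) ≤
      ∑ j, |β j| * ((#(edges (H j)) : ℝ) * (#(edges (H j)) * 4)) := by
  rw [sum_ergmField_update_sub]
  refine sum_le_sum fun j _ => ?_
  refine mul_le_mul (le_abs_self _) ?_ (sum_nonneg fun e _ => sum_nonneg fun e' _ =>
    rooted_nonneg _ _ _ _) (abs_nonneg _)
  rw [← nsmul_eq_mul]
  refine sum_le_card_nsmul _ _ _ fun e he => ?_
  refine (sum_le_card_nsmul _ _ 4 fun e' _ => rooted_le_four hn e' t _ y).trans ?_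
  rw [nsmul_eq_mul]
  gcongr
  exact erase_subset _ _

lemma hasDerivAt_PhiFn (a : ℝ) : HasDerivAt (PhiFn β v H)
    (∑ j, β j * ∑ e ∈ edges (H j), ∑ e' ∈ (edges (H j)).erase e,
      a ^ #(((edges (H j)).erase e).erase e')) a := by
  unfold PhiFn
  refine HasDerivAt.fun_sum fun j _ => ?_
  have h1 : ∀ e ∈ edges (H j), ∑ e' ∈ (edges (H j)).erase e,
      a ^ #(((edges (H j)).erase e).erase e') =
      ((eCount (H j) - 1 : ℕ) : ℝ) * a ^ (eCount (H j) - 1 - 1) := fun e he => by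
    rw [eCount_eq_card_edges, ← card_erase_of_mem he, ← nsmul_eq_mul, ← sum_const]
    exact sum_congr rfl fun e' he' => by rw [card_erase_of_mem he']
  rw [sum_congr rfl h1, sum_const, nsmul_eq_mul, ← eCount_eq_card_edges, ← mul_assoc]
  exact (hasDerivAt_pow _ a).const_mul _

lemma deriv_phiFn {p : ℝ} (hfix : phiFn β v H p = p) :
    deriv (phiFn β v H) p = p * (1 - p) * (2 * deriv (PhiFn β v H) p) := by
  have h : phiFn β v H = fun a => Real.sigmoid (2 * PhiFn β v H a) := funext phiFn_eq_sigmoid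
  have h1 := (Real.hasDerivAt_sigmoid (2 * PhiFn β v H p)).comp p
    ((differentiable_PhiFn β v H p).hasDerivAt.const_mul 2)
  rw [← phiFn_eq_sigmoid, hfix] at h1
  rw [h]
  exact h1.deriv

/-- The configurations in which all rooted subgraph counts of the graphs on `w i` vertices are
within `d` of their mean-field values. -/
def localSet {ι : Type} (w : ι → ℕ) (n : ℕ) (p d : ℝ) : Set (EdgeIdx n → Bool) :=
  {y | ∀ i, ∀ (e : EdgeIdx (w i)) (s : EdgeIdx n) (A : Finset (EdgeIdx (w i))), e ∉ A →
    |rooted e s A y - 2 * p ^ #A| ≤ d}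

lemma ordConnected_localSet {ι : Type} (w : ι → ℕ) (n : ℕ) (p d : ℝ) :
    (localSet w n p d).OrdConnected := by
  refine ⟨fun a ha b hb y hy i e s A he => ?_⟩
  have h1 := rooted_monotone e s A hy.1
  have h2 := rooted_monotone e s A hy.2
  have h3 := abs_le.1 (ha i e s A he)
  have h4 := abs_le.1 (hb i e s A he)
  rw [abs_le]
  constructor <;> linarith

/-- The sum of the absolute coefficients of the field, counted with the number of edges of each
graph. -/
def coeffSum (β : Fin (k + 1) → ℝ) (v : Fin (k + 1) → ℕ)
    (H : ∀ j : Fin (k + 1), SimpleGraph (Fin (v j))) : ℝ :=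
  ∑ j, |β j| * (#(edges (H j)) * #(edges (H j)))

lemma coeffSum_nonneg : 0 ≤ coeffSum β v H := sum_nonneg fun j _ => by positivity

variable {ι : Type} {w : ι → ℕ} {p d : ℝ} {y : EdgeIdx n → Bool}

lemma abs_ergmField_sub_le (hw : ∀ j, ∃ i, w i = v j) (hy : y ∈ localSet w n p d)
    (s : EdgeIdx n) : |ergmField β v H n s y - 2 * PhiFn β v H p| ≤ coeffSum β v H * d := by
  rw [two_mul_PhiFn, ergmField, coeffSum, sum_mul, ← sum_sub_distrib]
  refine (abs_sum_le_sum_abs _ _).trans (sum_le_sum fun j _ => ?_)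
  rw [← mul_sub, ← sum_sub_distrib, abs_mul, mul_assoc]
  refine mul_le_mul_of_nonneg_left ?_ (abs_nonneg _)
  have hloc : ∀ (e : EdgeIdx (v j)) (s : EdgeIdx n) (A : Finset (EdgeIdx (v j))), e ∉ A →
      |rooted e s A y - 2 * p ^ #A| ≤ d := by
    obtain ⟨i, hi⟩ := hw j
    rw [← hi]
    exact hy i
  refine (abs_sum_le_sum_abs _ _).trans
    ((sum_le_card_nsmul _ _ d fun e _ => hloc e s _ (notMem_erase e _)).trans ?_)
  rw [nsmul_eq_mul]
  rcases (edges (H j)).eq_empty_or_nonempty with h | ⟨e, he⟩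
  · simp [h]
  have hd : 0 ≤ d := (abs_nonneg _).trans (hloc e s _ (notMem_erase e (edges (H j))))
  have h1 : (1 : ℝ) ≤ #(edges (H j)) := by exact_mod_cast card_pos.2 ⟨e, he⟩
  rw [mul_assoc]
  nlinarith [mul_nonneg (zero_le_one.trans h1) hd]

lemma abs_sum_ergmField_update_sub_le (hw : ∀ j, ∃ i, w i = v j) (hd : 0 ≤ d)
    (hy : y ∈ localSet w n p d) (t : EdgeIdx n) :
    |∑ s, (ergmField β v H n s (Function.update y t true) -
      ergmField β v H n s (Function.update y t false)) - 2 * deriv (PhiFn β v H) p| ≤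
      coeffSum β v H * d := by
  rw [sum_ergmField_update_sub, (hasDerivAt_PhiFn p).deriv, coeffSum, sum_mul, mul_sum,
    ← sum_sub_distrib]
  refine (abs_sum_le_sum_abs _ _).trans (sum_le_sum fun j _ => ?_)
  rw [mul_left_comm, ← mul_sub, mul_sum, ← sum_sub_distrib, abs_mul, mul_assoc, mul_assoc]
  refine mul_le_mul_of_nonneg_left ?_ (abs_nonneg _)
  have hloc : ∀ (e : EdgeIdx (v j)) (s : EdgeIdx n) (A : Finset (EdgeIdx (v j))), e ∉ A →
      |rooted e s A y - 2 * p ^ #A| ≤ d := by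
    obtain ⟨i, hi⟩ := hw j
    rw [← hi]
    exact hy i
  refine (abs_sum_le_sum_abs _ _).trans
    ((sum_le_card_nsmul _ _ (#(edges (H j)) * d) fun e _ => ?_).trans (by rw [nsmul_eq_mul]))
  rw [mul_sum, ← sum_sub_distrib]
  refine (abs_sum_le_sum_abs _ _).trans
    ((sum_le_card_nsmul _ _ d fun e' _ => hloc e' t _ (notMem_erase e' _)).trans ?_)
  rw [nsmul_eq_mul]
  gcongr
  exact erase_subset _ _

lemma abs_sum_ergmCond_update_sub_le (hβ : ∀ j, j ≠ 0 → 0 < β j) (he0 : eCount (H 0) = 1)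
    (hn : 2 ≤ n) (hfix : phiFn β v H p = p) (hw : ∀ j, ∃ i, w i = v j) (hd : 0 ≤ d)
    {t : EdgeIdx n} (hyt : y t = false)
    (hy : y ∈ localSet w n p d) (hyt' : Function.update y t true ∈ localSet w n p d) :
    |∑ s, (ergmCond β v H n s (Function.update y t true) - ergmCond β v H n s y) -
      deriv (phiFn β v H) p| ≤
      (coeffSum β v H * (coeffSum β v H * 4) + coeffSum β v H) * d := by
  have hyf : Function.update y t false = y := by rw [← hyt, Function.update_eq_self]
  have h1 := abs_sum_ergmField_update_sub_le (β := β) (H := H) hw hd hy t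
  have h2 := sum_ergmField_update_sub_le (β := β) (H := H) hn t y
  have h3 := fun s => ergmField_update_sub_nonneg hβ he0 hn s t y
  simp only [hyf] at h1 h2 h3
  set D : EdgeIdx n → ℝ := fun s =>
    ergmField β v H n s (Function.update y t true) - ergmField β v H n s y with hD
  have hp : Real.sigmoid (2 * PhiFn β v H p) = p := by rw [← phiFn_eq_sigmoid, hfix]
  have h4 : ∀ s, |ergmCond β v H n s (Function.update y t true) - ergmCond β v H n s y -
      p * (1 - p) * D s| ≤ coeffSum β v H * d * D s := fun s => by
    have := abs_sigmoid_sub_sub_mul_le (abs_ergmField_sub_le hw hy s)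
      (abs_ergmField_sub_le (β := β) (H := H) hw hyt' s)
    rw [hp, abs_of_nonneg (h3 s)] at this
    exact this
  have h5 : |∑ s, (ergmCond β v H n s (Function.update y t true) - ergmCond β v H n s y) -
      p * (1 - p) * ∑ s, D s| ≤ coeffSum β v H * d * ∑ s, D s := by
    rw [mul_sum, ← sum_sub_distrib, mul_sum]
    exact (abs_sum_le_sum_abs _ _).trans (sum_le_sum fun s _ => h4 s)
  have h6 : ∑ s, D s ≤ coeffSum β v H * 4 := by
    refine h2.trans (le_of_eq ?_)
    rw [coeffSum, sum_mul]
    exact sum_congr rfl fun j _ => by ring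
  have h7 : |p * (1 - p)| ≤ 1 := by
    rw [← hp, abs_le]
    constructor <;> nlinarith [Real.sigmoid_pos (2 * PhiFn β v H p),
      Real.sigmoid_lt_one (2 * PhiFn β v H p)]
  have h8 : |p * (1 - p) * (∑ s, D s - 2 * deriv (PhiFn β v H) p)| ≤ coeffSum β v H * d := by
    rw [abs_mul]
    exact (mul_le_of_le_one_left (abs_nonneg _) h7).trans h1
  have h9 : coeffSum β v H * d * ∑ s, D s ≤ coeffSum β v H * d * (coeffSum β v H * 4) :=
    mul_le_mul_of_nonneg_left h6 (mul_nonneg coeffSum_nonneg hd)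
  rw [deriv_phiFn hfix]
  rw [abs_le] at h5 h8 ⊢
  constructor <;> linarith

lemma sum_abs_ergmCond_update_sub_le (hβ : ∀ j, j ≠ 0 → 0 < β j) (he0 : eCount (H 0) = 1)
    (hn : 2 ≤ n) (t : EdgeIdx n) (y : EdgeIdx n → Bool) :
    ∑ s, |ergmCond β v H n s (Function.update y t true) -
      ergmCond β v H n s (Function.update y t false)| ≤ coeffSum β v H * 4 := by
  refine (sum_le_sum fun s _ => (abs_sigmoid_sub_le _ _).trans (le_of_eq
    (abs_of_nonneg (ergmField_update_sub_nonneg hβ he0 hn s t y)))).trans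
    ((sum_ergmField_update_sub_le hn t y).trans (le_of_eq ?_))
  rw [coeffSum, sum_mul]
  exact sum_congr rfl fun j _ => by ring

lemma abs_scale_mul_homCount_le {m : ℕ} (Hg : SimpleGraph (Fin m)) (hn : n ≠ 0)
    (y : EdgeIdx n → Bool) : |scale m n * (homCount Hg y : ℝ)| ≤ (n : ℝ) ^ 2 := by
  rw [abs_of_nonneg (mul_nonneg scale_nonneg (Nat.cast_nonneg _)), ← scale_mul_pow hn (v := m)]
  refine mul_le_mul_of_nonneg_left ?_ scale_nonneg
  rw [homCount_eq_sum]
  refine (sum_le_card_nsmul _ _ 1 fun φ _ => mono_le_one _ _ _).trans ?_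
  rw [nsmul_eq_mul, mul_one, card_univ, Fintype.card_embedding_eq]
  simp only [Fintype.card_fin]
  exact_mod_cast Nat.descFactorial_le_pow n m

lemma abs_homCount_update_sub_le {m : ℕ} (Hg : SimpleGraph (Fin m)) (hm : ∃ i, w i = m)
    (hy : y ∈ localSet w n p d) {t : EdgeIdx n} (hyt : y t = false) :
    |scale m n * (homCount Hg (Function.update y t true) : ℝ) - scale m n * (homCount Hg y : ℝ) -
      2 * eCount Hg * p ^ (eCount Hg - 1)| ≤ eCount Hg * d := by
  obtain ⟨i, rfl⟩ := hm
  have hyf : Function.update y t false = y := by rw [← hyt, Function.update_eq_self]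
  have h1 := homCount_update_sub Hg t y
  rw [hyf] at h1
  have h2 : 2 * (eCount Hg : ℝ) * p ^ (eCount Hg - 1) =
      ∑ e ∈ edges Hg, 2 * p ^ #((edges Hg).erase e) := by
    have : ∀ e ∈ edges Hg, 2 * p ^ #((edges Hg).erase e) = 2 * p ^ (eCount Hg - 1) :=
      fun e he => by rw [card_erase_of_mem he, eCount_eq_card_edges]
    rw [sum_congr rfl this, sum_const, nsmul_eq_mul, ← eCount_eq_card_edges]
    ring
  rw [h1, h2, ← sum_sub_distrib, eCount_eq_card_edges, ← nsmul_eq_mul]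
  exact (abs_sum_le_sum_abs _ _).trans
    (sum_le_card_nsmul _ _ d fun e _ => hy i e t _ (notMem_erase e _))

end ErgmApproximation

section ErgmApproximation

variable {k : ℕ} {β : Fin (k + 1) → ℝ} {v : Fin (k + 1) → ℕ}
  {H : ∀ j : Fin (k + 1), SimpleGraph (Fin (v j))}

lemma exists_wprob_compl_localSet_le (hβ : ∀ j, j ≠ 0 → 0 < β j) (he0 : eCount (H 0) = 1)
    {p : ℝ} (hp : p ∈ Set.Ioo (0 : ℝ) 1) (hfix : phiFn β v H p = p)
    (huniq : ∀ q ∈ Set.Ioo (0 : ℝ) 1, phiFn β v H q = q → q = p)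
    (hsub : deriv (phiFn β v H) p < 1) {ι : Type} [Fintype ι] (w : ι → ℕ)
    (hw : ∀ j, ∃ i, w i = v j) :
    ∃ C, 0 ≤ C ∧ ∃ n₀ : ℕ, ∀ n, 2 ≤ n → n₀ ≤ n → ∀ l : ℝ, 0 < l → l ^ 4 = 1 / n →
      wprob (ergmProb β v H n) (localSet w n p (C * l))ᶜ ≤ C * l ^ 24 := by
  have hφ0 : 0 < phiFn β v H 0 := by rw [phiFn_eq_sigmoid]; exact Real.sigmoid_pos _
  have hφ1 : phiFn β v H 1 < 1 := by rw [phiFn_eq_sigmoid]; exact Real.sigmoid_lt_one _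
  obtain ⟨c, hc, hcp⟩ := exists_linear_defect (differentiable_phiFn β v H) hp hfix huniq hsub
    hφ0 hφ1
  set B : ι → ℝ := fun i => Fintype.card (EdgeIdx (w i)) * (2 * (lawConst β v H / c) + 1) +
    (2 * (w i : ℝ) ^ 2 + 4) with hB
  have hlc : 0 ≤ lawConst β v H / c := div_nonneg lawConst_nonneg hc.le
  have hB0 : ∀ i, 0 ≤ B i := fun i => by positivity
  set K : ι → ℝ := fun i => 16 * (Fintype.card (EdgeIdx (w i)) : ℝ) + 4 * fieldConst β v H with hK
  have hK0 : ∀ i, 0 ≤ K i := fun i => by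
    have := fieldConst_nonneg β v H
    positivity
  set P : ι → ℝ := fun i => noiseCard (w i) * (noiseConst 4 16 * K i ^ 16) with hP
  have hP0 : ∀ i, 0 ≤ P i := fun i => by
    have := noiseConst_nonneg (C := 4) (by norm_num) 16
    have := hK0 i
    positivity
  obtain ⟨n₀, hn₀⟩ := exists_nat_ge (∑ i, K i)
  refine ⟨∑ i, B i + ∑ i, P i, add_nonneg (sum_nonneg fun i _ => hB0 i)
    (sum_nonneg fun i _ => hP0 i), n₀, fun n hn hnn l hl hln => ?_⟩
  have M := isCondModel_ergm β v H n
  have hn1 : (1 : ℝ) ≤ n := by exact_mod_cast (by omega : 1 ≤ n)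
  have hl1 : l ≤ 1 := by
    have h : l ^ 4 ≤ 1 := by rw [hln]; exact div_le_one_of_le₀ hn1 (by positivity)
    exact (pow_le_one_iff_of_nonneg hl.le (by norm_num)).1 h
  have hnl : 1 / (n : ℝ) ≤ l := by
    rw [← hln]; exact pow_le_of_le_one hl.le hl1 (by norm_num)
  have hKn : ∀ i, K i ≤ n := fun i =>
    (single_le_sum (fun i _ => hK0 i) (mem_univ i)).trans (hn₀.trans (by exact_mod_cast hnn))
  have hL : ∀ s t y, |ergmCond β v H n s (Function.update y t true) -
      ergmCond β v H n s (Function.update y t false)| ≤ fieldConst β v H / n := fun s t y =>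
    (abs_sigmoid_sub_le _ _).trans (abs_ergmField_update_sub_le β v H n hn s t y)
  have hsubset : (localSet w n p ((∑ i, B i + ∑ i, P i) * l))ᶜ ⊆
      ⋃ i ∈ (univ : Finset ι), {y | ¬ NoiseLE (w i) (ergmCond β v H n) l y} := by
    intro y hy
    by_contra hcon
    simp only [mem_univ, Set.iUnion_true, Set.mem_iUnion, Set.mem_ofPred_eq, not_exists,
      not_not] at hcon
    refine hy fun i e s A he => ?_
    have hv : ∀ j, NoiseLE (v j) (ergmCond β v H n) l y := fun j => by
      obtain ⟨i, hi⟩ := hw j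
      rw [← hi]
      exact hcon i
    refine (abs_rooted_sub_le_of_noiseLE hβ he0 hn hl.le hnl hp hc hcp hv (hcon i) e s A he).trans
      (mul_le_mul_of_nonneg_right ?_ hl.le)
    have h1 := single_le_sum (fun i _ => hB0 i) (mem_univ i)
    have h2 := sum_nonneg (s := univ) fun i _ => hP0 i
    linarith
  refine (wprob_mono M.nonneg hsubset).trans ((wprob_biUnion_le M.nonneg _ _).trans ?_)
  refine (sum_le_sum fun i _ => wprob_not_noiseLE_le M hn hL le_rfl (hKn i) hl hln).trans ?_
  rw [← sum_mul]
  refine mul_le_mul_of_nonneg_right ?_ (by positivity)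
  have h2 := sum_nonneg (s := univ) fun i _ => hB0 i
  linarith

lemma card_edgeIdx_mem (n : ℕ) (hn : 2 ≤ n) :
    (n : ℝ) ^ 2 / 4 ≤ Fintype.card (EdgeIdx n) ∧
      (Fintype.card (EdgeIdx n) : ℝ) ≤ (n : ℝ) ^ 2 := by
  have : (2 : ℝ) ≤ n := by exact_mod_cast hn
  rw [card_edgeIdx]
  constructor <;> nlinarith

theorem exists_isApproxAffine (hβ : ∀ j, j ≠ 0 → 0 < β j) (he0 : eCount (H 0) = 1)
    {p : ℝ} (hp : p ∈ Set.Ioo (0 : ℝ) 1) (hfix : phiFn β v H p = p)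
    (huniq : ∀ q ∈ Set.Ioo (0 : ℝ) 1, phiFn β v H q = q → q = p)
    (hsub : deriv (phiFn β v H) p < 1) {m : ℕ} (Hg : SimpleGraph (Fin m)) :
    ∃ C, ∀ n : ℕ, 2 ≤ n → ∀ l : ℝ, 0 < l → l ^ 4 = 1 / n → ∃ Γ,
      IsApproxAffine p (deriv (phiFn β v H) p) (2 * eCount Hg * p ^ (eCount Hg - 1)) C l n
        (ergmProb β v H n) (ergmCond β v H n) Γ fun y => scale m n * (homCount Hg y : ℝ) := by
  set w : Option (Fin (k + 1)) → ℕ := fun o => o.elim m v with hwdef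
  have hw : ∀ j, ∃ i, w i = v j := fun j => ⟨some j, rfl⟩
  have hm : ∃ i, w i = m := ⟨none, rfl⟩
  obtain ⟨c, hc, n₀, hn₀⟩ := exists_wprob_compl_localSet_le hβ he0 hp hfix huniq hsub w hw
  set b := coeffSum β v H with hb
  have hb0 : 0 ≤ b := coeffSum_nonneg
  set C : ℝ := c + b * 4 + b * c + (b * (b * 4) + b) * c + 1 + eCount Hg * c + (n₀ : ℝ) ^ 6 with hC
  have hCle : c ≤ C ∧ b * 4 ≤ C ∧ b * c ≤ C ∧ (b * (b * 4) + b) * c ≤ C ∧ 1 ≤ C ∧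
      eCount Hg * c ≤ C ∧ (n₀ : ℝ) ^ 6 ≤ C := by
    have h1 : 0 ≤ b * 4 := by positivity
    have h2 : 0 ≤ b * c := by positivity
    have h3 : 0 ≤ (b * (b * 4) + b) * c := by positivity
    have h4 : 0 ≤ eCount Hg * c := by positivity
    have h5 : 0 ≤ (n₀ : ℝ) ^ 6 := by positivity
    refine ⟨?_, ?_, ?_, ?_, ?_, ?_, ?_⟩ <;> linarith
  obtain ⟨hC1, hC2, hC3, hC4, hC5, hC6, hC7⟩ := hCle
  refine ⟨C, fun n hn l hl hln => ?_⟩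
  have M := isCondModel_ergm β v H n
  have hF : ∀ y : EdgeIdx n → Bool, |scale m n * (homCount Hg y : ℝ)| ≤ C * (n : ℝ) ^ 2 := fun y =>
    (abs_scale_mul_homCount_le Hg (by omega) y).trans
      (le_mul_of_one_le_left (by positivity) hC5)
  have hsum : ∀ t (y : EdgeIdx n → Bool), ∑ s, |ergmCond β v H n s (Function.update y t true) -
      ergmCond β v H n s (Function.update y t false)| ≤ C := fun t y =>
    (sum_abs_ergmCond_update_sub_le hβ he0 hn t y).trans hC2
  by_cases hnn : n₀ ≤ n
  · refine ⟨localSet w n p (c * l), M, ergmProb_mul_le hβ he0 n, hn, hl, hln,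
      (card_edgeIdx_mem n hn).1, (card_edgeIdx_mem n hn).2, ordConnected_localSet w n p _,
      (hn₀ n hn hnn l hl hln).trans (by gcongr), hsum, fun s y hy => ?_,
      fun t y hyt hy hyt' => ?_, hF, fun t y hyt hy _ => ?_⟩
    · have h1 := abs_ergmField_sub_le (β := β) (H := H) hw hy s
      have h2 := (abs_sigmoid_sub_le _ _).trans h1
      rw [← phiFn_eq_sigmoid, hfix, ← mul_assoc] at h2
      exact h2.trans (by gcongr)
    · refine (abs_sum_ergmCond_update_sub_le hβ he0 hn hfix hw (by positivity) hyt hy hyt').trans ?_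
      rw [← mul_assoc]
      gcongr
    · refine (abs_homCount_update_sub_le Hg hm hy hyt).trans ?_
      rw [← mul_assoc]
      gcongr
  · refine ⟨∅, M, ergmProb_mul_le hβ he0 n, hn, hl, hln, (card_edgeIdx_mem n hn).1,
      (card_edgeIdx_mem n hn).2, Set.ordConnected_empty, ?_, hsum, fun s y hy => hy.elim,
      fun t y hyt hy => hy.elim, hF, fun t y hyt hy => hy.elim⟩
    have h1 : wprob (ergmProb β v H n) (∅ : Set (EdgeIdx n → Bool))ᶜ = 1 := by
      rw [Set.compl_empty, wprob, Set.indicator_univ]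
      exact wexp_const M.sum_one 1
    have hn0 : (0 : ℝ) < n := by exact_mod_cast (by omega : 0 < n)
    have h2 : l ^ 24 = 1 / (n : ℝ) ^ 6 := by
      rw [show l ^ 24 = (l ^ 4) ^ 6 by ring, hln, div_pow, one_pow]
    rw [h1, h2, mul_one_div, le_div_iff₀ (by positivity), one_mul]
    refine le_trans ?_ hC7
    gcongr
    omega

end ErgmApproximation

section Moments

variable {I : Type} [Fintype I] [DecidableEq I] {p ρ κ C l : ℝ} {n : ℕ}
  {μ : (I → Bool) → ℝ} {σ : I → (I → Bool) → ℝ} {Γ : Set (I → Bool)} {F : (I → Bool) → ℝ}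

/-- The number of coordinates of `y` that are `true`. -/
def boolSum (y : I → Bool) : ℝ := ∑ s, bval (y s)

lemma boolSum_update_sub (t : I) {y : I → Bool} (hy : y t = false) :
    boolSum (Function.update y t true) - boolSum y = 1 := by
  rw [boolSum, boolSum, ← sum_sub_distrib, sum_eq_single t]
  · simp [hy]
  · intro s _ hs
    simp [Function.update_of_ne hs]
  · simp

lemma boolSum_nonneg (y : I → Bool) : 0 ≤ boolSum y := sum_nonneg fun _ _ => bval_nonneg _

lemma boolSum_le (y : I → Bool) : boolSum y ≤ Fintype.card I := by
  refine (sum_le_card_nsmul _ _ 1 fun s _ => bval_le_one _).trans ?_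
  simp

lemma wvar_le_wexp_sq (f : (I → Bool) → ℝ) : wvar μ f ≤ wexp μ fun y => f y ^ 2 := by
  rw [wvar]; linarith [sq_nonneg (wexp μ f)]

lemma add_sq_le_two (a b : ℝ) : (a + b) ^ 2 ≤ 2 * a ^ 2 + 2 * b ^ 2 := by
  nlinarith [sq_nonneg (a - b)]

lemma wvar_add_le (h0 : ∀ y, 0 ≤ μ y) (h1 : ∑ y, μ y = 1) (f g : (I → Bool) → ℝ) :
    wvar μ (fun y => f y + g y) ≤ 2 * wvar μ f + 2 * wvar μ g := by
  rw [← wexp_sq_sub_wexp h1, ← wexp_sq_sub_wexp h1 f, ← wexp_sq_sub_wexp h1 g,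
    ← wexp_const_mul, ← wexp_const_mul, ← wexp_add, wexp_add]
  refine wexp_mono h0 fun y => ?_
  rw [add_sub_add_comm]
  exact add_sq_le_two _ _

lemma wvar_const_mul (c : ℝ) (f : (I → Bool) → ℝ) :
    wvar μ (fun y => c * f y) = c ^ 2 * wvar μ f := by
  simp only [wvar, mul_pow, wexp_const_mul]
  ring

lemma IsCondModel.sum_cond_nonneg (M : IsCondModel μ σ) (y : I → Bool) : 0 ≤ ∑ s, σ s y :=
  sum_nonneg fun s _ => M.cond_nonneg s y

lemma IsCondModel.sum_cond_le (M : IsCondModel μ σ) (y : I → Bool) :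
    ∑ s, σ s y ≤ Fintype.card I := by
  refine (sum_le_card_nsmul _ _ 1 fun s _ => M.cond_le_one s y).trans ?_
  simp

lemma IsCondModel.wexp_boolSum_sub (M : IsCondModel μ σ) :
    wexp μ (fun y => boolSum y - ∑ s, σ s y) = 0 := by
  simp_rw [boolSum, ← sum_sub_distrib]
  rw [wexp_sum]
  exact sum_eq_zero fun s _ => by simpa using M.wexp_cond s (fun _ => 1) fun _ _ => rfl

/-- The constant in the bound for the variance of `boolSum`. -/
def varConst (ρ C : ℝ) : ℝ :=
  4 / (1 - ρ) ^ 2 * (3 * (2 * (1 + |ρ|) + C) ^ 2 * C + (1 + C)) + (2 * C / (1 - ρ)) ^ 8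

namespace IsApproxAffine

lemma n_pos (A : IsApproxAffine p ρ κ C l n μ σ Γ F) : (0 : ℝ) < n := by
  exact_mod_cast (by have := A.two_le; omega : 0 < n)

lemma C_nonneg (A : IsApproxAffine p ρ κ C l n μ σ Γ F) : 0 ≤ C := by
  have h := (abs_nonneg _).trans (A.abs_le fun _ => false)
  have := A.n_pos
  exact nonneg_of_mul_nonneg_left h (by positivity)

lemma l_le_one (A : IsApproxAffine p ρ κ C l n μ σ Γ F) : l ≤ 1 := by
  have hn : (1 : ℝ) ≤ n := by exact_mod_cast (by have := A.two_le; omega : 1 ≤ n)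
  have h : l ^ 4 ≤ 1 := by rw [A.l_pow]; exact div_le_one_of_le₀ hn (by positivity)
  exact (pow_le_one_iff_of_nonneg A.l_pos.le (by norm_num)).1 h

lemma n_mul_l_pow (A : IsApproxAffine p ρ κ C l n μ σ Γ F) : (n : ℝ) * l ^ 4 = 1 := by
  rw [A.l_pow, mul_one_div_cancel A.n_pos.ne']

lemma one_le_l_mul (A : IsApproxAffine p ρ κ C l n μ σ Γ F) : 1 ≤ l * n := by
  rw [← A.n_mul_l_pow, mul_comm]
  exact mul_le_mul_of_nonneg_right (pow_le_of_le_one A.l_pos.le A.l_le_one (by norm_num))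
    A.n_pos.le

lemma wexp_sq_boolSum_sub_le (A : IsApproxAffine p ρ κ C l n μ σ Γ F) :
    wexp μ (fun y => (boolSum y - ∑ s, σ s y) ^ 2) ≤ (1 + C) * (n : ℝ) ^ 2 := by
  have M := A.cond
  set G : (I → Bool) → ℝ := fun y => boolSum y - ∑ s, σ s y with hG
  have hGs : ∀ y, G y ^ 2 = ∑ t, (1 : ℝ) * (bval (y t) - σ t y) * G y := fun y => by
    rw [← sum_mul, sq]
    congr 1
    simp [hG, boolSum]
  change wexp μ (fun y => G y ^ 2) ≤ _
  rw [funext hGs, wexp_sum]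
  have hGD : ∀ t y, |G y - G (Function.update y t false)| ≤ 1 + C := fun t y => by
    cases hyt : y t
    · rw [show Function.update y t false = y by rw [← hyt, Function.update_eq_self]]
      rw [sub_self, abs_zero]
      have := A.C_nonneg
      positivity
    · have hy : Function.update (Function.update y t false) t true = y := by
        rw [Function.update_idem, ← hyt, Function.update_eq_self]
      have h1 := boolSum_update_sub t (y := Function.update y t false) (by simp)
      have h2 := A.sum_cond_update_le t y
      have h3 := abs_sum_le_sum_abs (fun s => σ s (Function.update y t true) -
        σ s (Function.update y t false)) univ
      rw [sum_sub_distrib] at h3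
      rw [hy] at h1
      rw [show Function.update y t true = y by rw [← hyt, Function.update_eq_self]] at h2 h3
      have h4 := _root_.abs_le.1 (h3.trans h2)
      have h5 : G y - G (Function.update y t false) =
        1 - (∑ s, σ s y - ∑ s, σ s (Function.update y t false)) := by simp only [hG]; linarith
      rw [h5, _root_.abs_le]
      constructor <;> linarith
  have hterm : ∀ t ∈ (univ : Finset I), wexp μ (fun y => (1 : ℝ) * (bval (y t) - σ t y) * G y) ≤
      1 + C := fun t _ => by
    rw [M.wexp_cond_mul t (w := fun _ => 1) (fun _ _ => rfl)]
    refine (wexp_mono M.nonneg (g := fun _ => 1 + C) fun y => ?_).trans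
      (wexp_const M.sum_one _).le
    rw [one_mul]
    refine (le_abs_self _).trans ?_
    rw [abs_mul]
    exact (mul_le_of_le_one_left (abs_nonneg _) (M.abs_bval_sub_le t y)).trans (hGD t y)
  refine (sum_le_card_nsmul _ _ _ hterm).trans ?_
  rw [nsmul_eq_mul, mul_comm]
  have := A.C_nonneg
  exact mul_le_mul_of_nonneg_left A.card_le (by positivity)

lemma wvar_le (A : IsApproxAffine p ρ κ C l n μ σ Γ F) {f : (I → Bool) → ℝ} {a b : ℝ} (ha : 0 ≤ a)
    (hb : 0 ≤ b) (hf : ∀ y, |f y| ≤ b * (n : ℝ) ^ 2)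
    (h : ∀ t y, y t = false → y ∈ Γ → Function.update y t true ∈ Γ →
      |f (Function.update y t true) - f y| ≤ a * l) :
    wvar μ f ≤ a ^ 2 * l ^ 2 * wvar μ boolSum + 3 * (2 * b + a) ^ 2 * C * l ^ 2 := by
  have M := A.cond
  have hl := A.l_pos
  have hl1 := A.l_le_one
  have hC := A.C_nonneg
  have h1 := wvar_le_of_update_le M.nonneg M.sum_one A.supermodular A.ordConnected
    (by positivity : 0 ≤ a * l) hf h
  rw [mul_pow] at h1
  refine h1.trans (add_le_add le_rfl ?_)
  have h2 : a * l * Fintype.card I ≤ a * (n : ℝ) ^ 2 :=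
    mul_le_mul (mul_le_of_le_one_right ha hl1) A.card_le (by positivity) ha
  have h3 : 0 ≤ a * l * Fintype.card I := by positivity
  calc 3 * (2 * (b * (n : ℝ) ^ 2) + a * l * Fintype.card I) ^ 2 * wprob μ Γᶜ
      ≤ 3 * (2 * (b * (n : ℝ) ^ 2) + a * (n : ℝ) ^ 2) ^ 2 * (C * l ^ 24) := by
        refine mul_le_mul ?_ A.wprob_compl_le (wprob_nonneg M.nonneg _) (by positivity)
        gcongr
    _ = 3 * (2 * b + a) ^ 2 * C * ((n * l ^ 4) ^ 4 * l ^ 8) := by ring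
    _ ≤ 3 * (2 * b + a) ^ 2 * C * l ^ 2 := by
        rw [A.n_mul_l_pow, one_pow, one_mul]
        exact mul_le_mul_of_nonneg_left (pow_le_pow_of_le_one hl.le hl1 (by norm_num))
          (by positivity)

lemma abs_sum_cond_sub_mul_boolSum_le (A : IsApproxAffine p ρ κ C l n μ σ Γ F) (y : I → Bool) :
    |∑ s, σ s y - ρ * boolSum y| ≤ (1 + |ρ|) * (n : ℝ) ^ 2 := by
  have M := A.cond
  refine (abs_sub _ _).trans ?_
  rw [abs_mul, abs_of_nonneg (M.sum_cond_nonneg y), abs_of_nonneg (boolSum_nonneg y), add_mul,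
    one_mul]
  exact add_le_add ((M.sum_cond_le y).trans A.card_le)
    (mul_le_mul_of_nonneg_left ((boolSum_le y).trans A.card_le) (abs_nonneg _))

/-- A variance bound for the residual `∑ s, σ s y - ρ * boolSum y`. -/
lemma wvar_sum_cond_sub_le (A : IsApproxAffine p ρ κ C l n μ σ Γ F) :
    wvar μ (fun y => ∑ s, σ s y - ρ * boolSum y) ≤
      C ^ 2 * l ^ 2 * wvar μ boolSum + 3 * (2 * (1 + |ρ|) + C) ^ 2 * C * l ^ 2 := by
  refine A.wvar_le A.C_nonneg (by positivity) A.abs_sum_cond_sub_mul_boolSum_le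
    fun t y hyt hy hy' => ?_
  have h1 := A.abs_sum_cond_update_sub_le t y hyt hy hy'
  have h2 := boolSum_update_sub t hyt
  rw [sum_sub_distrib] at h1
  refine le_trans (le_of_eq ?_) h1
  congr 1
  linear_combination -ρ * h2

lemma wvar_boolSum_le (A : IsApproxAffine p ρ κ C l n μ σ Γ F) (hρ : ρ < 1) :
    wvar μ boolSum ≤ varConst ρ C * (n : ℝ) ^ 2 := by
  have M := A.cond
  have hl := A.l_pos
  have hl1 := A.l_le_one
  have hC := A.C_nonneg
  have hn := A.n_pos
  have hρ' : 0 < 1 - ρ := by linarith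
  set V := wvar μ (boolSum : (I → Bool) → ℝ) with hV
  have hV0 : 0 ≤ V := wvar_nonneg M.nonneg M.sum_one _
  have hn1 : (1 : ℝ) ≤ (n : ℝ) ^ 2 := by
    have : (1 : ℝ) ≤ n := by exact_mod_cast (by have := A.two_le; omega : 1 ≤ n)
    exact one_le_pow₀ this
  have h1 : (1 - ρ) ^ 2 * V ≤ 2 * (C ^ 2 * l ^ 2 * V + 3 * (2 * (1 + |ρ|) + C) ^ 2 * C * l ^ 2) +
      2 * ((1 + C) * (n : ℝ) ^ 2) := by
    rw [hV, ← wvar_const_mul]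
    have : (fun y : I → Bool => (1 - ρ) * boolSum y) = fun y =>
        (∑ s, σ s y - ρ * boolSum y) + (boolSum y - ∑ s, σ s y) := by
      funext y; ring
    rw [this]
    refine (wvar_add_le M.nonneg M.sum_one _ _).trans (add_le_add ?_ ?_)
    · exact mul_le_mul_of_nonneg_left A.wvar_sum_cond_sub_le (by norm_num)
    · exact mul_le_mul_of_nonneg_left ((wvar_le_wexp_sq _).trans A.wexp_sq_boolSum_sub_le)
        (by norm_num)
  have hQ : 0 ≤ 3 * (2 * (1 + |ρ|) + C) ^ 2 * C := by positivity
  rw [varConst, add_mul]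
  by_cases hsmall : 2 * C * l ≤ 1 - ρ
  · refine le_trans ?_ (le_add_of_nonneg_right (by positivity))
    rw [div_mul_eq_mul_div, div_mul_eq_mul_div, le_div_iff₀ (by positivity)]
    have h2 : (2 * C * l) ^ 2 ≤ (1 - ρ) ^ 2 := pow_le_pow_left₀ (by positivity) hsmall 2
    have h3 := mul_le_mul_of_nonneg_right h2 hV0
    have h4 : 3 * (2 * (1 + |ρ|) + C) ^ 2 * C * l ^ 2 ≤
        3 * (2 * (1 + |ρ|) + C) ^ 2 * C * (n : ℝ) ^ 2 :=
      mul_le_mul_of_nonneg_left ((pow_le_one₀ hl.le hl1).trans hn1) hQ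
    linarith
  · push Not at hsmall
    refine le_trans ?_ (le_add_of_nonneg_left (by positivity))
    have h2 : 1 ≤ 2 * C / (1 - ρ) * l := by
      rw [div_mul_eq_mul_div, one_le_div hρ']; exact hsmall.le
    have h3 : (n : ℝ) ≤ (2 * C / (1 - ρ)) ^ 4 := by
      calc (n : ℝ) ≤ n * (2 * C / (1 - ρ) * l) ^ 4 :=
            le_mul_of_one_le_right hn.le (one_le_pow₀ h2)
        _ = (2 * C / (1 - ρ)) ^ 4 * (n * l ^ 4) := by ring
        _ = _ := by rw [A.n_mul_l_pow, mul_one]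
    have h4 : V ≤ ((n : ℝ) ^ 2) ^ 2 := by
      refine (wvar_le_wexp_sq _).trans ((wexp_mono M.nonneg
        (g := fun _ => ((n : ℝ) ^ 2) ^ 2) fun y => ?_).trans (wexp_const M.sum_one _).le)
      exact pow_le_pow_left₀ (boolSum_nonneg y) ((boolSum_le y).trans A.card_le) 2
    refine h4.trans ?_
    rw [sq ((n : ℝ) ^ 2)]
    refine mul_le_mul_of_nonneg_right ?_ (by positivity)
    calc (n : ℝ) ^ 2 ≤ ((2 * C / (1 - ρ)) ^ 4) ^ 2 := pow_le_pow_left₀ hn.le h3 2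
      _ = _ := by ring

lemma wexp_sq_le (A : IsApproxAffine p ρ κ C l n μ σ Γ F) {f : (I → Bool) → ℝ} {a b : ℝ}
    (hf : ∀ y, |f y| ≤ b * (n : ℝ) ^ 2) (h : ∀ y ∈ Γ, |f y| ≤ a * l * (n : ℝ) ^ 2) :
    wexp μ (fun y => f y ^ 2) ≤ (a ^ 2 + b ^ 2 * C) * (l * (n : ℝ) ^ 2) ^ 2 := by
  have M := A.cond
  have hl := A.l_pos
  have hl1 := A.l_le_one
  have hC := A.C_nonneg
  have h1 : ∀ y, f y ^ 2 ≤ (a * l * (n : ℝ) ^ 2) ^ 2 +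
      (b * (n : ℝ) ^ 2) ^ 2 * Γᶜ.indicator 1 y := fun y => by
    by_cases hy : y ∈ Γ
    · rw [Set.indicator_of_notMem (by simpa using hy), mul_zero, add_zero, ← sq_abs]
      exact pow_le_pow_left₀ (abs_nonneg _) (h y hy) 2
    · rw [Set.indicator_of_mem (by simpa using hy), Pi.one_apply, mul_one, ← sq_abs (f y)]
      exact (pow_le_pow_left₀ (abs_nonneg _) (hf y) 2).trans
        (le_add_of_nonneg_left (by positivity))
  refine (wexp_mono M.nonneg h1).trans ?_
  rw [wexp_add, wexp_const M.sum_one, wexp_const_mul]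
  have h2 : wprob μ Γᶜ ≤ C * l ^ 2 := A.wprob_compl_le.trans
    (mul_le_mul_of_nonneg_left (pow_le_pow_of_le_one hl.le hl1 (by norm_num)) hC)
  have h3 := mul_le_mul_of_nonneg_left h2 (sq_nonneg (b * (n : ℝ) ^ 2))
  rw [wprob] at h3
  linarith

lemma wvar_sub_mul_boolSum_le (A : IsApproxAffine p ρ κ C l n μ σ Γ F) :
    wvar μ (fun y => F y - κ * boolSum y) ≤
      C ^ 2 * l ^ 2 * wvar μ boolSum + 3 * (2 * (C + |κ|) + C) ^ 2 * C * l ^ 2 := by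
  refine A.wvar_le A.C_nonneg (add_nonneg A.C_nonneg (abs_nonneg _)) (fun y => ?_)
    fun t y hyt hy hy' => ?_
  · refine (abs_sub _ _).trans ?_
    rw [abs_mul, abs_of_nonneg (boolSum_nonneg y), add_mul]
    exact add_le_add (A.abs_le y)
      (mul_le_mul_of_nonneg_left ((boolSum_le y).trans A.card_le) (abs_nonneg _))
  · have h1 := A.abs_update_sub_le t y hyt hy hy'
    have h2 := boolSum_update_sub t hyt
    refine le_trans (le_of_eq ?_) h1
    congr 1
    linear_combination -κ * h2

lemma wexp_sq_sum_sub_mul_le (A : IsApproxAffine p ρ κ C l n μ σ Γ F)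
    (hp : p ∈ Set.Icc (0 : ℝ) 1) {w : I → (I → Bool) → ℝ} (hw : ∀ s y, |w s y| ≤ 1) :
    wexp μ (fun y => (∑ s, (σ s y - p) * w s y) ^ 2) ≤
      (C ^ 2 + C) * (l * (n : ℝ) ^ 2) ^ 2 := by
  have M := A.cond
  have hl := A.l_pos
  have hC := A.C_nonneg
  have h1 : ∀ y, ∀ d, (∀ s, |σ s y - p| ≤ d) → |∑ s, (σ s y - p) * w s y| ≤ d * (n : ℝ) ^ 2 := by
    intro y d hd
    have hterm : ∀ s ∈ (univ : Finset I), |(σ s y - p) * w s y| ≤ |σ s y - p| := fun s _ => by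
      rw [abs_mul]
      exact mul_le_of_le_one_right (abs_nonneg _) (hw s y)
    by_cases hI : Nonempty I
    · have hd0 : 0 ≤ d := (abs_nonneg _).trans (hd hI.some)
      refine (abs_sum_le_sum_abs _ _).trans ((sum_le_card_nsmul _ _ d fun s hs =>
        (hterm s hs).trans (hd s)).trans ?_)
      rw [nsmul_eq_mul, mul_comm]
      exact mul_le_mul_of_nonneg_left A.card_le hd0
    · have := A.card_ge
      have h2 := A.n_pos
      rw [not_nonempty_iff] at hI
      rw [Fintype.card_eq_zero, Nat.cast_zero] at this
      nlinarith
  refine (A.wexp_sq_le (a := C) (b := 1) (fun y => h1 y 1 fun s => ?_) fun y hy => h1 y _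
    fun s => A.abs_cond_sub_le s y hy).trans (le_of_eq (by ring))
  rw [_root_.abs_le]
  constructor <;> linarith [M.cond_nonneg s y, M.cond_le_one s y, hp.1, hp.2]

lemma wexp_sq_sum_one_sub_cond_mul_le (A : IsApproxAffine p ρ κ C l n μ σ Γ F)
    (hp : p ∈ Set.Icc (0 : ℝ) 1) :
    wexp μ (fun y => (∑ s, (1 - σ s y) * bval (y s) - p * (1 - p) * Fintype.card I) ^ 2) ≤
      (6 * (C ^ 2 + C) + 4 * (1 + C)) * (l * (n : ℝ) ^ 2) ^ 2 := by
  have M := A.cond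
  have hl := A.l_pos
  have hC := A.C_nonneg
  have h1 := A.wexp_sq_sum_sub_mul_le hp (w := fun s y => bval (y s)) fun s y => by
    rw [abs_of_nonneg (bval_nonneg _)]; exact bval_le_one _
  have h2 := A.wexp_sq_sum_sub_mul_le hp (w := fun s y => 1) fun s y => by simp
  have h3 := A.wexp_sq_boolSum_sub_le
  have h4 : (1 + C) * (n : ℝ) ^ 2 ≤ (1 + C) * (l * (n : ℝ) ^ 2) ^ 2 := by
    refine mul_le_mul_of_nonneg_left ?_ (by positivity)
    have := one_le_pow₀ (n := 2) A.one_le_l_mul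
    calc (n : ℝ) ^ 2 ≤ (l * n) ^ 2 * (n : ℝ) ^ 2 := le_mul_of_one_le_left (by positivity) this
      _ = _ := by ring
  have h5 : ∀ y, (∑ s, (1 - σ s y) * bval (y s) - p * (1 - p) * Fintype.card I) ^ 2 ≤
      2 * (∑ s, (σ s y - p) * bval (y s)) ^ 2 + (4 * (boolSum y - ∑ s, σ s y) ^ 2 +
        4 * (∑ s, (σ s y - p) * 1) ^ 2) := fun y => by
    set a := ∑ s, (σ s y - p) * bval (y s) with ha
    set b := boolSum y - ∑ s, σ s y with hb
    set c := ∑ s, (σ s y - p) * 1 with hc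
    have hc' : c = ∑ s, σ s y - p * Fintype.card I := by
      rw [hc]; simp [sum_sub_distrib, mul_comm]
    have ha' : ∑ s, (1 - σ s y) * bval (y s) = (1 - p) * boolSum y - a := by
      rw [ha, boolSum, mul_sum, ← sum_sub_distrib]
      exact sum_congr rfl fun s _ => by ring
    have heq : ∑ s, (1 - σ s y) * bval (y s) - p * (1 - p) * Fintype.card I =
        (1 - p) * (b + c) + -a := by rw [ha', hb, hc']; ring
    rw [heq]
    have h6 := add_sq_le_two ((1 - p) * (b + c)) (-a)
    have h7 : ((1 - p) * (b + c)) ^ 2 ≤ (b + c) ^ 2 := by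
      rw [mul_pow]
      exact mul_le_of_le_one_left (sq_nonneg _) (pow_le_one₀ (by linarith [hp.2])
        (by linarith [hp.1]))
    have h8 := add_sq_le_two b c
    rw [neg_sq] at h6
    linarith
  refine (wexp_mono M.nonneg h5).trans ?_
  rw [wexp_add, wexp_add, wexp_const_mul, wexp_const_mul, wexp_const_mul]
  linarith

end IsApproxAffine
end Moments

section Stein

lemma integrable_exp_neg_sq_div_two : Integrable fun x : ℝ => Real.exp (-x ^ 2 / 2) := by
  have := integrable_exp_neg_mul_sq (b := 1 / 2) (by norm_num)
  refine this.congr (ae_of_all _ fun x => ?_)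
  simp only
  congr 1; ring

lemma integrable_abs_add_mul_exp (m : ℝ) :
    Integrable fun x : ℝ => (|x| + m) * Real.exp (-x ^ 2 / 2) := by
  have h := (integrable_mul_exp_neg_mul_sq (b := 1 / 2) (by norm_num)).norm
  have h1 : Integrable fun x : ℝ => |x| * Real.exp (-x ^ 2 / 2) := by
    refine h.congr (ae_of_all _ fun x => ?_)
    simp only [norm_mul, Real.norm_eq_abs, Real.abs_exp]
    congr 2; ring
  simp_rw [add_mul]
  exact h1.add (integrable_exp_neg_sq_div_two.const_mul m)

lemma integral_Ioi_mul_exp_neg_sq_div_two (w : ℝ) :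
    ∫ x in Set.Ioi w, x * Real.exp (-x ^ 2 / 2) = Real.exp (-w ^ 2 / 2) := by
  have hd : ∀ x ∈ Set.Ici w, HasDerivAt (fun x : ℝ => -Real.exp (-x ^ 2 / 2))
      (x * Real.exp (-x ^ 2 / 2)) x := fun x _ => by
    have h1 : HasDerivAt (fun x : ℝ => -x ^ 2 / 2) (-x) x := by
      have := ((hasDerivAt_pow 2 x).neg).div_const 2
      refine this.congr_deriv ?_
      push_cast; ring
    refine (h1.exp.fun_neg).congr_deriv ?_
    ring
  have hint : Integrable fun x : ℝ => x * Real.exp (-x ^ 2 / 2) := by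
    refine (integrable_mul_exp_neg_mul_sq (b := 1 / 2) (by norm_num)).congr
      (ae_of_all _ fun x => ?_)
    simp only
    congr 2; ring
  have ht : Filter.Tendsto (fun x : ℝ => -Real.exp (-x ^ 2 / 2)) Filter.atTop (nhds (-0)) := by
    refine (Real.tendsto_exp_atBot.comp ?_).neg
    have : Filter.Tendsto (fun x : ℝ => x ^ 2 / 2) Filter.atTop Filter.atTop :=
      (Filter.tendsto_pow_atTop (by norm_num)).atTop_div_const (by norm_num)
    refine (Filter.tendsto_neg_atTop_atBot.comp this).congr fun x => ?_
    simp only [Function.comp_apply]; ring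
  rw [integral_Ioi_of_hasDerivAt_of_tendsto' hd hint.integrableOn ht]
  simp

variable {f : ℝ → ℝ} {m : ℝ}

lemma integrable_mul_exp_of_abs_le (hf : Continuous f) (hfm : ∀ x, |f x| ≤ |x| + m) :
    Integrable fun x => f x * Real.exp (-x ^ 2 / 2) := by
  refine (integrable_abs_add_mul_exp m).mono'
    (by fun_prop : Continuous fun x => f x * Real.exp (-x ^ 2 / 2)).aestronglyMeasurable
    (ae_of_all _ fun x => ?_)
  rw [Real.norm_eq_abs, abs_mul, Real.abs_exp]
  exact mul_le_mul_of_nonneg_right (hfm x) (Real.exp_pos _).le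

lemma abs_integral_Ioi_mul_exp_le (hm : 0 ≤ m)
    (hfm : ∀ x, |f x| ≤ |x| + m) {w : ℝ} (hw : 1 ≤ w) :
    |∫ x in Set.Ioi w, f x * Real.exp (-x ^ 2 / 2)| ≤ (1 + m) * Real.exp (-w ^ 2 / 2) := by
  rw [← integral_Ioi_mul_exp_neg_sq_div_two, ← integral_const_mul]
  have hint : Integrable fun x : ℝ => (1 + m) * (x * Real.exp (-x ^ 2 / 2)) := by
    refine ((integrable_mul_exp_neg_mul_sq (b := 1 / 2) (by norm_num)).congr
      (ae_of_all _ fun x => ?_)).const_mul _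
    simp only
    congr 2; ring
  rw [← Real.norm_eq_abs]
  refine norm_integral_le_of_norm_le hint.integrableOn ?_
  refine (ae_restrict_iff' measurableSet_Ioi).2 (ae_of_all _ fun x hx => ?_)
  have hx1 : 1 ≤ x := hw.trans (le_of_lt hx)
  rw [Real.norm_eq_abs, abs_mul, Real.abs_exp, ← mul_assoc]
  refine mul_le_mul_of_nonneg_right ((hfm x).trans ?_) (Real.exp_pos _).le
  rw [abs_of_nonneg (by linarith)]
  nlinarith

/-- A bound for the solution of Stein's equation. -/
def steinConst (m : ℝ) : ℝ :=
  1 + m + Real.exp (1 / 2) * ∫ x : ℝ, (|x| + m) * Real.exp (-x ^ 2 / 2)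

lemma steinConst_nonneg (hm : 0 ≤ m) : 0 ≤ steinConst m := by
  have : 0 ≤ ∫ x : ℝ, (|x| + m) * Real.exp (-x ^ 2 / 2) :=
    integral_nonneg fun x => by positivity
  unfold steinConst
  positivity

lemma exists_stein_solution (hf : Continuous f) (hm : 0 ≤ m) (hfm : ∀ x, |f x| ≤ |x| + m)
    (hf0 : ∫ x, f x * Real.exp (-x ^ 2 / 2) = 0) :
    ∃ g : ℝ → ℝ, (∀ w, HasDerivAt g (w * g w + f w) w) ∧ ∀ w, |g w| ≤ steinConst m := by
  have hint := integrable_mul_exp_of_abs_le hf hfm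
  have hcont : Continuous fun x => f x * Real.exp (-x ^ 2 / 2) := by fun_prop
  set h : ℝ → ℝ := fun x => f x * Real.exp (-x ^ 2 / 2) with hh
  have hG : ∀ w, HasDerivAt (fun w => ∫ x in Set.Iic w, h x) (h w) w := fun w => by
    have h1 : (fun w => ∫ x in Set.Iic w, h x) =
        fun w => (∫ x in (0 : ℝ)..w, h x) + ∫ x in Set.Iic 0, h x := by
      funext w
      rw [← intervalIntegral.integral_Iic_sub_Iic hint.integrableOn hint.integrableOn]
      ring
    rw [h1]
    exact (hcont.integral_hasStrictDerivAt 0 w).hasDerivAt.add_const _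
  have hE : ∀ w : ℝ, Real.exp (w ^ 2 / 2) * Real.exp (-w ^ 2 / 2) = 1 := fun w => by
    rw [← Real.exp_add, ← Real.exp_zero]; congr 1; ring
  refine ⟨fun w => Real.exp (w ^ 2 / 2) * ∫ x in Set.Iic w, h x, fun w => ?_, fun w => ?_⟩
  · have h1 : HasDerivAt (fun x : ℝ => x ^ 2 / 2) w w := by
      have := (hasDerivAt_pow 2 w).div_const 2
      refine this.congr_deriv ?_
      push_cast; ring
    refine (h1.exp.fun_mul (hG w)).congr_deriv ?_
    simp only [hh]
    linear_combination f w * hE w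
  · have htot : 0 ≤ ∫ x : ℝ, (|x| + m) * Real.exp (-x ^ 2 / 2) :=
      integral_nonneg fun x => by positivity
    have hbig : ∀ a : ℝ, |a| ≤ (1 + m) * Real.exp (-w ^ 2 / 2) →
        |Real.exp (w ^ 2 / 2) * a| ≤ steinConst m := fun a ha => by
      rw [abs_mul, Real.abs_exp]
      refine (mul_le_mul_of_nonneg_left ha (Real.exp_pos _).le).trans ?_
      rw [mul_left_comm, hE, mul_one, steinConst]
      exact le_add_of_nonneg_right (by positivity)
    rcases le_total 1 w with hw | hw
    · have h2 : ∫ x in Set.Iic w, h x = -∫ x in Set.Ioi w, h x := by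
        have := intervalIntegral.integral_Iic_add_Ioi (b := w) hint.integrableOn hint.integrableOn
        rw [hf0] at this
        linarith
      simp only [h2]
      refine hbig _ ?_
      rw [abs_neg]
      exact abs_integral_Ioi_mul_exp_le hm hfm hw
    rcases le_total w (-1) with hw' | hw'
    · refine hbig _ ?_
      have h2 : ∫ x in Set.Iic w, h x = ∫ x in Set.Ioi (-w), f (-x) * Real.exp (-x ^ 2 / 2) := by
        rw [← integral_comp_neg_Iic]
        simp [hh]
      rw [h2]
      have := abs_integral_Ioi_mul_exp_le (f := fun x => f (-x)) hm
        (fun x => by simpa using hfm (-x)) (w := -w) (by linarith)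
      rwa [neg_sq] at this
    · rw [abs_mul, Real.abs_exp, steinConst]
      refine le_trans ?_ (le_add_of_nonneg_left (by positivity))
      refine mul_le_mul (Real.exp_le_exp.2 (by nlinarith)) ?_ (abs_nonneg _) (Real.exp_pos _).le
      rw [← Real.norm_eq_abs]
      refine (norm_integral_le_of_norm_le (integrable_abs_add_mul_exp m).integrableOn
        (ae_of_all _ fun x => ?_)).trans (setIntegral_le_integral (integrable_abs_add_mul_exp m)
        (ae_of_all _ fun x => by simp only [Pi.zero_apply]; positivity))
      rw [Real.norm_eq_abs, abs_mul, Real.abs_exp]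
      exact mul_le_mul_of_nonneg_right (hfm x) (Real.exp_pos _).le

lemma integrable_abs_gaussianReal : Integrable (fun x : ℝ => |x|) (gaussianReal 0 1) :=
  ((memLp_id_gaussianReal (μ := 0) (v := 1) 1).integrable le_rfl).abs

lemma LipschitzWith.abs_sub_integral_gaussianReal_le {ψ : ℝ → ℝ} (hψ : LipschitzWith 1 ψ) :
    Integrable ψ (gaussianReal 0 1) ∧
      ∀ x, |ψ x - ∫ z, ψ z ∂(gaussianReal 0 1)| ≤ |x| + ∫ z : ℝ, |z| ∂(gaussianReal 0 1) := by
  have hlip : ∀ x y, |ψ x - ψ y| ≤ |x - y| := fun x y => by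
    simpa [Real.dist_eq] using hψ.dist_le_mul x y
  have hint : Integrable ψ (gaussianReal 0 1) := by
    refine (integrable_abs_gaussianReal.add (integrable_const |ψ 0|)).mono'
      hψ.continuous.aestronglyMeasurable (ae_of_all _ fun x => ?_)
    have h1 := hlip x 0
    have h2 := abs_sub_abs_le_abs_sub (ψ x) (ψ 0)
    rw [sub_zero] at h1
    simp only [Real.norm_eq_abs, Pi.add_apply]
    linarith
  refine ⟨hint, fun x => ?_⟩
  have h1 : ψ x - ∫ z, ψ z ∂(gaussianReal 0 1) = ∫ z, (ψ x - ψ z) ∂(gaussianReal 0 1) := by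
    rw [integral_sub (integrable_const _) hint]; simp
  have h2 : |x| + ∫ z : ℝ, |z| ∂(gaussianReal 0 1) = ∫ z, (|x| + |z|) ∂(gaussianReal 0 1) := by
    rw [integral_add (integrable_const _) integrable_abs_gaussianReal]; simp
  rw [h1, h2, ← Real.norm_eq_abs]
  refine norm_integral_le_of_norm_le ((integrable_const _).add integrable_abs_gaussianReal)
    (ae_of_all _ fun z => ?_)
  exact (hlip x z).trans (abs_sub x z)

theorem exists_stein_bound : ∃ K, 0 ≤ K ∧ ∀ ψ : ℝ → ℝ, LipschitzWith 1 ψ → ∃ g g' : ℝ → ℝ,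
    (∀ w, g' w = w * g w + (ψ w - ∫ z, ψ z ∂(gaussianReal 0 1))) ∧ (∀ w, |g w| ≤ K) ∧
    (∀ w, |g' w| ≤ K * (1 + |w|)) ∧
    ∀ w h, 0 ≤ h → |g w - g (w - h) - h * g' w| ≤ K * h ^ 2 * (1 + |w| + h) ^ 2 := by
  set m : ℝ := ∫ z : ℝ, |z| ∂(gaussianReal 0 1) with hm
  have hm0 : 0 ≤ m := integral_nonneg fun x => abs_nonneg x
  set B := steinConst m with hB
  have hB0 : 0 ≤ B := steinConst_nonneg hm0
  refine ⟨2 * (B + 1 + m), by positivity, fun ψ hψ => ?_⟩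
  obtain ⟨hint, hψm⟩ := hψ.abs_sub_integral_gaussianReal_le
  set c := ∫ z, ψ z ∂(gaussianReal 0 1) with hc
  have hlip : ∀ x y, |ψ x - ψ y| ≤ |x - y| := fun x y => by
    simpa [Real.dist_eq] using hψ.dist_le_mul x y
  have hf0 : ∫ x, (ψ x - c) * Real.exp (-x ^ 2 / 2) = 0 := by
    have h1 : ∫ x, (ψ x - c) ∂(gaussianReal 0 1) = 0 := by
      rw [integral_sub hint (integrable_const _)]; simp [hc]
    rw [integral_gaussianReal_eq_integral_smul (by norm_num)] at h1
    have h2 : ∀ x : ℝ, gaussianPDFReal 0 1 x • (ψ x - c) =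
        (√(2 * Real.pi))⁻¹ * ((ψ x - c) * Real.exp (-x ^ 2 / 2)) := fun x => by
      simp [gaussianPDFReal, smul_eq_mul]; ring
    simp_rw [h2] at h1
    rw [integral_const_mul] at h1
    exact (mul_eq_zero.1 h1).resolve_left (by positivity)
  obtain ⟨g, hg, hgB⟩ := exists_stein_solution (f := fun x => ψ x - c)
    (hψ.continuous.sub continuous_const) hm0 hψm hf0
  have hg' : ∀ w, |w * g w + (ψ w - c)| ≤ (B + 1 + m) * (1 + |w|) := fun w => by
    refine (abs_add_le _ _).trans ?_
    rw [abs_mul]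
    have h1 := mul_le_mul_of_nonneg_left (hgB w) (abs_nonneg w)
    have h2 := hψm w
    have h3 : 0 ≤ m * |w| := by positivity
    linarith
  refine ⟨g, fun w => w * g w + (ψ w - c), fun w => rfl, fun w => (hgB w).trans (by linarith),
    fun w => (hg' w).trans ?_, fun w h hh => ?_⟩
  · have : 0 ≤ (B + 1 + m) * (1 + |w|) := by positivity
    linarith
  have hseg : ∀ x ∈ Set.Icc (w - h) w, |x| ≤ |w| + h := fun x hx => by
    rw [abs_le]
    constructor <;> linarith [hx.1, hx.2, neg_abs_le w, le_abs_self w]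
  have hw : w ∈ Set.Icc (w - h) w := ⟨by linarith, le_rfl⟩
  have hwh : w - h ∈ Set.Icc (w - h) w := ⟨le_rfl, by linarith⟩
  set Q := B + 1 + m with hQ
  have hQ0 : 0 ≤ Q := by positivity
  set R := 1 + |w| + h with hR
  have hR1 : 1 ≤ R := by have := abs_nonneg w; linarith
  have hgsub : ∀ x ∈ Set.Icc (w - h) w, |g x - g w| ≤ Q * R * h := fun x hx => by
    have h1 := Convex.norm_image_sub_le_of_norm_hasDerivWithin_le (f := g) (C := Q * R)
      (fun z _ => (hg z).hasDerivWithinAt) (fun z hz => (hg' z).trans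
        (mul_le_mul_of_nonneg_left (by linarith [hseg z hz]) hQ0)) (convex_Icc (w - h) w) hw hx
    rw [Real.norm_eq_abs, Real.norm_eq_abs] at h1
    refine h1.trans (mul_le_mul_of_nonneg_left ?_ (by positivity))
    rw [abs_le]
    constructor <;> linarith [hx.1, hx.2]
  have hg'sub : ∀ x ∈ Set.Icc (w - h) w,
      |x * g x + (ψ x - c) - (w * g w + (ψ w - c))| ≤ 2 * Q * h * R ^ 2 := fun x hx => by
    have hxw : |x - w| ≤ h := by
      rw [abs_le]
      constructor <;> linarith [hx.1, hx.2]
    have h1 : x * g x + (ψ x - c) - (w * g w + (ψ w - c)) =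
        x * (g x - g w) + ((x - w) * g w + (ψ x - ψ w)) := by ring
    have h2 : |x * (g x - g w)| ≤ R * (Q * R * h) := by
      rw [abs_mul]
      exact mul_le_mul (by linarith [hseg x hx]) (hgsub x hx) (abs_nonneg _) (by linarith)
    have h3 : |(x - w) * g w| ≤ h * B := by
      rw [abs_mul]
      exact mul_le_mul hxw (hgB w) (abs_nonneg _) hh
    have h4 := (hlip x w).trans hxw
    rw [h1]
    refine (abs_add_le _ _).trans ((add_le_add h2 ((abs_add_le _ _).trans
      (add_le_add h3 h4))).trans ?_)
    have h5 : 1 ≤ R ^ 2 := one_le_pow₀ hR1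
    have h6 : h * (B + 1) ≤ h * Q * R ^ 2 := by
      have : h * (B + 1) ≤ h * Q := mul_le_mul_of_nonneg_left (by linarith) hh
      exact this.trans (le_mul_of_one_le_right (by positivity) h5)
    linarith
  have hfin := Convex.norm_image_sub_le_of_norm_hasDerivWithin_le
    (f := fun x => g x - x * (w * g w + (ψ w - c))) (C := 2 * Q * h * R ^ 2)
    (fun z _ => ((hg z).sub ((hasDerivAt_id z).mul_const _)).hasDerivWithinAt)
    (fun z hz => by simpa using hg'sub z hz) (convex_Icc (w - h) w) hwh hw
  rw [Real.norm_eq_abs, Real.norm_eq_abs, sub_sub_cancel, abs_of_nonneg hh] at hfin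
  calc |g w - g (w - h) - h * (w * g w + (ψ w - c))|
      = |g w - w * (w * g w + (ψ w - c)) - (g (w - h) - (w - h) * (w * g w + (ψ w - c)))| := by
        congr 1; ring
    _ ≤ 2 * Q * h * R ^ 2 * h := hfin
    _ = 2 * Q * h ^ 2 * R ^ 2 := by ring

end Stein

section Wasserstein

variable {I : Type} [Fintype I] [DecidableEq I] {p ρ κ C l : ℝ} {n : ℕ}
  {μ : (I → Bool) → ℝ} {σ : I → (I → Bool) → ℝ} {Γ : Set (I → Bool)} {F : (I → Bool) → ℝ}

/-- The exchange identity behind the application of Stein's method to `boolSum`. -/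
lemma IsCondModel.wexp_boolSum_sub_mul (M : IsCondModel μ σ) (φ : ℝ → ℝ) :
    wexp μ (fun y => (boolSum y - ∑ s, σ s y) * φ (boolSum y)) =
      wexp μ (fun y => (∑ s, (1 - σ s y) * bval (y s)) *
        (φ (boolSum y) - φ (boolSum y - 1))) := by
  have h1 : ∀ y, (boolSum y - ∑ s, σ s y) * φ (boolSum y) =
      ∑ s, 1 * (bval (y s) - σ s y) * φ (boolSum y) := fun y => by
    rw [← sum_mul, boolSum, ← sum_sub_distrib]
    simp
  simp_rw [h1, sum_mul]
  rw [wexp_sum, wexp_sum]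
  refine sum_congr rfl fun s _ => ?_
  rw [M.wexp_cond_mul s (w := fun _ => 1) (fun _ _ => rfl)]
  congr 1
  funext y
  cases hys : y s
  · rw [show Function.update y s false = y by rw [← hys, Function.update_eq_self]]
    simp
  · have h2 := boolSum_update_sub s (y := Function.update y s false) (by simp)
    rw [Function.update_idem, show Function.update y s true = y by
      rw [← hys, Function.update_eq_self]] at h2
    rw [show boolSum (Function.update y s false) = boolSum y - 1 by linarith]
    simp

lemma abs_wexp_mul_le (h0 : ∀ y, 0 ≤ μ y) {f g : (I → Bool) → ℝ} {b : ℝ} (hg : ∀ y, |g y| ≤ b) :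
    |wexp μ (fun y => f y * g y)| ≤ b * wexp μ (fun y => |f y|) := by
  refine (abs_wexp_le h0 _).trans ?_
  rw [← wexp_const_mul]
  refine wexp_mono h0 fun y => ?_
  rw [abs_mul, mul_comm]
  exact mul_le_mul_of_nonneg_right (hg y) (abs_nonneg _)

lemma wexp_abs_sub_wexp_le (h0 : ∀ y, 0 ≤ μ y) (h1 : ∑ y, μ y = 1) {f : (I → Bool) → ℝ} {a : ℝ}
    (ha : 0 ≤ a) (h : wvar μ f ≤ a ^ 2) : wexp μ (fun y => |f y - wexp μ f|) ≤ a :=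
  wexp_le_sqrt h0 h1 _ ha (by rwa [wexp_sq_sub_wexp h1])

lemma IsApproxAffine.wexp_one_add_abs_sq_le (A : IsApproxAffine p ρ κ C l n μ σ Γ F) (hρ : ρ < 1)
    {c sg : ℝ} (hc : 0 < c) (hsg : c * n ≤ sg) :
    wexp μ (fun y => (1 + |(boolSum y - wexp μ boolSum) / sg| + 1 / sg) ^ 2) ≤
      2 * (1 + 1 / c) ^ 2 + 2 * (varConst ρ C / c ^ 2) := by
  have M := A.cond
  have hn := A.n_pos
  have hn1 : (1 : ℝ) ≤ n := by exact_mod_cast (by have := A.two_le; omega : 1 ≤ n)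
  have hcn : 0 < c * n := by positivity
  have hsg0 : 0 < sg := hcn.trans_le hsg
  have h1 : 1 / sg ≤ 1 / c :=
    one_div_le_one_div_of_le hc ((le_mul_of_one_le_right hc.le hn1).trans hsg)
  have h2 : ∀ y : I → Bool, (1 + |(boolSum y - wexp μ boolSum) / sg| + 1 / sg) ^ 2 ≤
      2 * (1 + 1 / c) ^ 2 + 2 / sg ^ 2 * (boolSum y - wexp μ boolSum) ^ 2 := fun y => by
    have h3 := add_sq_le_two (1 + 1 / c) |(boolSum y - wexp μ boolSum) / sg|
    rw [sq_abs, div_pow] at h3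
    have h4 : (1 + |(boolSum y - wexp μ boolSum) / sg| + 1 / sg) ^ 2 ≤
        (1 + 1 / c + |(boolSum y - wexp μ boolSum) / sg|) ^ 2 :=
      pow_le_pow_left₀ (by positivity) (by linarith) 2
    refine h4.trans (h3.trans (le_of_eq ?_))
    ring
  refine (wexp_mono M.nonneg h2).trans ?_
  rw [wexp_add, wexp_const M.sum_one, wexp_const_mul, wexp_sq_sub_wexp M.sum_one]
  refine add_le_add le_rfl ?_
  rw [div_mul_eq_mul_div, mul_div_assoc]
  refine mul_le_mul_of_nonneg_left ?_ (by norm_num)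
  rw [div_le_div_iff₀ (by positivity) (by positivity)]
  have hV : 0 ≤ varConst ρ C := by
    have := (wvar_nonneg M.nonneg M.sum_one boolSum).trans (A.wvar_boolSum_le hρ)
    exact nonneg_of_mul_nonneg_left this (by positivity)
  calc wvar μ boolSum * c ^ 2 ≤ varConst ρ C * (n : ℝ) ^ 2 * c ^ 2 :=
        mul_le_mul_of_nonneg_right (A.wvar_boolSum_le hρ) (by positivity)
    _ = varConst ρ C * (c * n) ^ 2 := by ring
    _ ≤ varConst ρ C * sg ^ 2 := mul_le_mul_of_nonneg_left
        (pow_le_pow_left₀ hcn.le hsg 2) hV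

/-- The square root of a bound for the normalised variance of an observable with small increments
and sup norm at most `b * n ^ 2`. -/
def residualConst (ρ C b : ℝ) : ℝ :=
  √(C ^ 2 * varConst ρ C + 3 * (2 * b + C) ^ 2 * C)

lemma IsApproxAffine.le_sq_residualConst (A : IsApproxAffine p ρ κ C l n μ σ Γ F) (hρ : ρ < 1)
    (b : ℝ) : C ^ 2 * l ^ 2 * wvar μ boolSum + 3 * (2 * b + C) ^ 2 * C * l ^ 2 ≤
      (residualConst ρ C b * (l * n)) ^ 2 := by
  have hn1 : (1 : ℝ) ≤ (n : ℝ) ^ 2 := by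
    have : (1 : ℝ) ≤ n := by exact_mod_cast (by have := A.two_le; omega : 1 ≤ n)
    exact one_le_pow₀ this
  have hC := A.C_nonneg
  have hV : 0 ≤ varConst ρ C := by
    have := (wvar_nonneg A.cond.nonneg A.cond.sum_one boolSum).trans (A.wvar_boolSum_le hρ)
    have h2 := A.n_pos
    exact nonneg_of_mul_nonneg_left this (by positivity)
  rw [mul_pow, residualConst, Real.sq_sqrt (by positivity), add_mul]
  refine add_le_add ?_ ?_
  · calc C ^ 2 * l ^ 2 * wvar μ boolSum ≤ C ^ 2 * l ^ 2 * (varConst ρ C * (n : ℝ) ^ 2) :=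
          mul_le_mul_of_nonneg_left (A.wvar_boolSum_le hρ) (by positivity)
      _ = _ := by ring
  · refine mul_le_mul_of_nonneg_left ?_ (by positivity)
    rw [mul_pow]
    exact le_mul_of_one_le_right (sq_nonneg l) hn1

/-- The error in the normal approximation of the standardised `boolSum`. -/
lemma IsApproxAffine.abs_wexp_boolSum_le (A : IsApproxAffine p ρ κ C l n μ σ Γ F)
    (hp : p ∈ Set.Ioo (0 : ℝ) 1) (hρ : ρ < 1) {c sg K : ℝ} (hc : 0 < c) (hsg : c * n ≤ sg)
    (hsg2 : (1 - ρ) * sg ^ 2 = p * (1 - p) * Fintype.card I) (hK : 0 ≤ K) {g g' : ℝ → ℝ}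
    (hg : ∀ w, |g w| ≤ K) (hg' : ∀ w, |g' w| ≤ K * (1 + |w|))
    (hgg : ∀ w h, 0 ≤ h → |g w - g (w - h) - h * g' w| ≤ K * h ^ 2 * (1 + |w| + h) ^ 2) :
    |wexp μ (fun y => g' ((boolSum y - wexp μ boolSum) / sg) -
      (boolSum y - wexp μ boolSum) / sg * g ((boolSum y - wexp μ boolSum) / sg))| ≤
      K * (residualConst ρ C (1 + |ρ|) + (2 * (1 + 1 / c) ^ 2 + 2 * (varConst ρ C / c ^ 2)) / c ^ 2 +
        (6 * (C ^ 2 + C) + 4 * (1 + C) + (2 * (1 + 1 / c) ^ 2 + 2 * (varConst ρ C / c ^ 2))) / c) /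
        ((1 - ρ) * c) * l := by
  have M := A.cond
  have hn := A.n_pos
  have hl := A.l_pos
  have hcn : 0 < c * n := by positivity
  have hsg0 : 0 < sg := hcn.trans_le hsg
  have hρ' : 0 < 1 - ρ := by linarith
  have hU := A.wexp_one_add_abs_sq_le hρ hc hsg
  have hK3 := A.wexp_sq_sum_one_sub_cond_mul_le ⟨hp.1.le, hp.2.le⟩
  set U := 2 * (1 + 1 / c) ^ 2 + 2 * (varConst ρ C / c ^ 2) with hUdef
  set K3 := 6 * (C ^ 2 + C) + 4 * (1 + C) with hK3def
  set R := residualConst ρ C (1 + |ρ|) with hR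
  have hR0 : 0 ≤ R := Real.sqrt_nonneg _
  set m := wexp μ (boolSum : (I → Bool) → ℝ) with hm
  set W : (I → Bool) → ℝ := fun y => (boolSum y - m) / sg with hW
  set h := 1 / sg with hh
  have hh0 : 0 ≤ h := by positivity
  set T : (I → Bool) → ℝ := fun y => ∑ s, σ s y with hT
  set B : (I → Bool) → ℝ := fun y => ∑ s, (1 - σ s y) * bval (y s) with hB
  set f : (I → Bool) → ℝ := fun y => T y - ρ * boolSum y with hf
  have hhn : h * n ≤ 1 / c := by
    rw [hh, one_div_mul_eq_div, div_le_div_iff₀ hsg0 hc]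
    linarith
  have hU0 : 0 ≤ U := (wexp_nonneg M.nonneg fun y => sq_nonneg (1 + |W y| + h)).trans hU
  have hK30 : 0 ≤ K3 := by have := A.C_nonneg; positivity
  have hln : 1 ≤ l * n := A.one_le_l_mul
  -- the residual term
  have hfvar : wvar μ f ≤ (R * (l * n)) ^ 2 :=
    A.wvar_sum_cond_sub_le.trans (A.le_sq_residualConst hρ _)
  have hE1 : |wexp μ (fun y => (f y - wexp μ f) * g (W y))| ≤ K * (R * (l * n)) :=
    (abs_wexp_mul_le M.nonneg fun y => hg _).trans (mul_le_mul_of_nonneg_left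
      (wexp_abs_sub_wexp_le M.nonneg M.sum_one (by positivity) hfvar) hK)
  -- the mean of the residual
  have hfm : wexp μ f = (1 - ρ) * m := by
    have h1 := M.wexp_boolSum_sub
    rw [wexp_sub] at h1
    rw [hf, wexp_sub, wexp_const_mul]
    linear_combination -h1
  -- the linear term
  have hlin : (1 - ρ) * sg * wexp μ (fun y => W y * g (W y)) =
      wexp μ (fun y => (f y - wexp μ f) * g (W y)) +
        wexp μ (fun y => B y * (g (W y) - g (W y - h))) := by
    have h1 := M.wexp_boolSum_sub_mul fun x => g ((x - m) / sg)
    have h2 : (fun y : I → Bool => B y * (g (W y) - g (W y - h))) = fun y =>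
        (∑ s, (1 - σ s y) * bval (y s)) *
          (g ((boolSum y - m) / sg) - g ((boolSum y - 1 - m) / sg)) := by
      funext y
      simp only [hB, hW, hh]
      congr 3
      ring
    rw [h2, ← h1, ← wexp_add, ← wexp_const_mul]
    congr 1
    funext y
    have h3 : sg * W y = boolSum y - m := by
      simp only [hW]
      field_simp
    rw [hfm]
    simp only [hf]
    change _ = _ + (boolSum y - T y) * g (W y)
    linear_combination (1 - ρ) * g (W y) * h3
  -- the second order remainder
  have hB0 : ∀ y, 0 ≤ B y := fun y => sum_nonneg fun s _ =>
    mul_nonneg (by linarith [M.cond_le_one s y]) (bval_nonneg _)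
  have hBn : ∀ y, B y ≤ (n : ℝ) ^ 2 := fun y => by
    refine le_trans ?_ ((boolSum_le y).trans A.card_le)
    exact sum_le_sum fun s _ => mul_le_of_le_one_left (bval_nonneg _)
      (by linarith [M.cond_nonneg s y])
  have hE2 : |wexp μ (fun y => B y * (g (W y) - g (W y - h) - h * g' (W y)))| ≤
      K * (U / c ^ 2) := by
    refine (abs_wexp_le M.nonneg _).trans ?_
    have h1 : ∀ y, |B y * (g (W y) - g (W y - h) - h * g' (W y))| ≤
        K * (h * n) ^ 2 * (1 + |W y| + h) ^ 2 := fun y => by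
      rw [abs_mul, abs_of_nonneg (hB0 y)]
      refine (mul_le_mul (hBn y) (hgg (W y) h hh0) (abs_nonneg _) (by positivity)).trans
        (le_of_eq ?_)
      ring
    refine (wexp_mono M.nonneg h1).trans ?_
    rw [wexp_const_mul]
    calc K * (h * n) ^ 2 * wexp μ (fun y => (1 + |W y| + h) ^ 2) ≤ K * (1 / c) ^ 2 * U := by
          refine mul_le_mul (mul_le_mul_of_nonneg_left (pow_le_pow_left₀ (by positivity) hhn 2) hK)
            hU (wexp_nonneg M.nonneg fun y => sq_nonneg _) (by positivity)
      _ = _ := by ring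
  -- the fluctuation of the conditional variance
  have hE3 : |wexp μ (fun y => (B y - p * (1 - p) * Fintype.card I) * g' (W y))| ≤
      K * (l * (n : ℝ) ^ 2 * (K3 + U)) := by
    refine (abs_wexp_le M.nonneg _).trans ?_
    have hln2 : 0 < l * (n : ℝ) ^ 2 := by positivity
    have h1 : ∀ y, |(B y - p * (1 - p) * Fintype.card I) * g' (W y)| ≤
        K * (1 / (l * (n : ℝ) ^ 2) * (B y - p * (1 - p) * Fintype.card I) ^ 2 +
          l * (n : ℝ) ^ 2 * (1 + |W y| + h) ^ 2) := fun y => by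
      set x := B y - p * (1 - p) * Fintype.card I with hx
      set a := l * (n : ℝ) ^ 2 with ha
      rw [abs_mul]
      have h2 : |g' (W y)| ≤ K * (1 + |W y| + h) :=
        (hg' _).trans (mul_le_mul_of_nonneg_left (by linarith) hK)
      refine (mul_le_mul_of_nonneg_left h2 (abs_nonneg _)).trans ?_
      rw [mul_left_comm]
      refine mul_le_mul_of_nonneg_left ?_ hK
      rw [one_div_mul_eq_div, ← sub_nonneg, ← sq_abs x]
      have h3 : |x| ^ 2 / a + a * (1 + |W y| + h) ^ 2 - |x| * (1 + |W y| + h) =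
          ((|x| - a * (1 + |W y| + h)) ^ 2 + |x| * (a * (1 + |W y| + h))) / a := by
        field_simp
        ring
      rw [h3]
      positivity
    refine (wexp_mono M.nonneg h1).trans ?_
    rw [wexp_const_mul, wexp_add, wexp_const_mul, wexp_const_mul]
    refine mul_le_mul_of_nonneg_left ?_ hK
    rw [mul_add]
    refine add_le_add ?_ (mul_le_mul_of_nonneg_left hU hln2.le)
    rw [one_div_mul_eq_div, div_le_iff₀ hln2]
    refine hK3.trans (le_of_eq ?_)
    ring
  have hsplit : wexp μ (fun y => B y * (g (W y) - g (W y - h))) =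
      wexp μ (fun y => B y * (g (W y) - g (W y - h) - h * g' (W y))) +
        (h * wexp μ (fun y => (B y - p * (1 - p) * Fintype.card I) * g' (W y)) +
          (1 - ρ) * sg * wexp μ (fun y => g' (W y))) := by
    rw [← wexp_const_mul, ← wexp_const_mul, ← wexp_add, ← wexp_add]
    congr 1
    funext y
    have h1 : h * sg = 1 := by rw [hh]; field_simp
    rw [← hsg2]
    linear_combination ((1 - ρ) * sg * g' (W y)) * h1
  rw [wexp_sub, div_mul_eq_mul_div, le_div_iff₀ (by positivity)]
  set D := wexp μ (fun y => g' (W y)) - wexp μ (fun y => W y * g (W y)) with hD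
  have hDeq : (1 - ρ) * sg * D = -(wexp μ (fun y => (f y - wexp μ f) * g (W y)) +
      wexp μ (fun y => B y * (g (W y) - g (W y - h) - h * g' (W y))) +
      h * wexp μ (fun y => (B y - p * (1 - p) * Fintype.card I) * g' (W y))) := by
    rw [hD, mul_sub, hlin, hsplit]
    ring
  have hE3' : |h * wexp μ (fun y => (B y - p * (1 - p) * Fintype.card I) * g' (W y))| ≤
      K * ((K3 + U) / c) * (l * n) := by
    rw [abs_mul, abs_of_nonneg hh0]
    refine (mul_le_mul_of_nonneg_left hE3 hh0).trans ?_
    calc h * (K * (l * (n : ℝ) ^ 2 * (K3 + U))) = (h * n) * (K * (K3 + U) * (l * n)) := by ring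
      _ ≤ 1 / c * (K * (K3 + U) * (l * n)) := mul_le_mul_of_nonneg_right hhn (by positivity)
      _ = _ := by ring
  have hE2' : K * (U / c ^ 2) ≤ K * (U / c ^ 2) * (l * n) :=
    le_mul_of_one_le_right (by positivity) hln
  have habs : |(1 - ρ) * sg * D| ≤ K * (R + U / c ^ 2 + (K3 + U) / c) * (l * n) := by
    rw [hDeq, abs_neg]
    refine (abs_add_le _ _).trans ((add_le_add (abs_add_le _ _) le_rfl).trans ?_)
    linarith
  rw [abs_mul, abs_of_pos (by positivity)] at habs
  have hfin : (1 - ρ) * (c * n) * |D| ≤ (1 - ρ) * sg * |D| := by gcongr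
  refine le_of_mul_le_mul_right ?_ hn
  calc |D| * ((1 - ρ) * c) * n = (1 - ρ) * (c * n) * |D| := by ring
    _ ≤ _ := hfin.trans habs
    _ = _ := by ring

theorem exists_wasserstein_bound (hp : p ∈ Set.Ioo (0 : ℝ) 1) (hρ : ρ < 1) (hκ : 0 < κ) (C : ℝ) :
    ∃ K, 0 ≤ K ∧ ∀ {I : Type} [Fintype I] [DecidableEq I] {l : ℝ} {n : ℕ} {μ : (I → Bool) → ℝ}
      {σ : I → (I → Bool) → ℝ} {Γ : Set (I → Bool)} {F : (I → Bool) → ℝ},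
      IsApproxAffine p ρ κ C l n μ σ Γ F → ∀ ψ : ℝ → ℝ, LipschitzWith 1 ψ →
      |wexp μ (fun y => ψ ((F y - wexp μ F) /
        (κ * √(Fintype.card I * p * (1 - p) / (1 - ρ))))) - ∫ z, ψ z ∂(gaussianReal 0 1)| ≤
        K * l := by
  obtain ⟨K, hK, hstein⟩ := exists_stein_bound
  have hp0 := hp.1
  have hp1 : 0 < 1 - p := by linarith [hp.2]
  have hρ' : 0 < 1 - ρ := by linarith
  set c := √(p * (1 - p) / (1 - ρ) / 4) with hcdef
  have hc : 0 < c := by positivity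
  set K₁ := K * (residualConst ρ C (1 + |ρ|) +
    (2 * (1 + 1 / c) ^ 2 + 2 * (varConst ρ C / c ^ 2)) / c ^ 2 +
    (6 * (C ^ 2 + C) + 4 * (1 + C) + (2 * (1 + 1 / c) ^ 2 + 2 * (varConst ρ C / c ^ 2))) / c) /
    ((1 - ρ) * c) with hK₁
  set K₂ := residualConst ρ C (C + |κ|) / (κ * c) with hK₂
  refine ⟨|K₁ + K₂|, abs_nonneg _, fun {I} _ _ {l n μ σ Γ F} A ψ hψ => ?_⟩
  obtain ⟨g, g', hgeq, hg, hg', hgg⟩ := hstein ψ hψ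
  have M := A.cond
  have hn := A.n_pos
  have hl := A.l_pos
  set sg := √(Fintype.card I * p * (1 - p) / (1 - ρ)) with hsgdef
  have hsg : c * n ≤ sg := by
    rw [hcdef, hsgdef]
    refine Real.le_sqrt_of_sq_le ?_
    rw [mul_pow, Real.sq_sqrt (by positivity)]
    calc p * (1 - p) / (1 - ρ) / 4 * (n : ℝ) ^ 2 = (n : ℝ) ^ 2 / 4 * (p * (1 - p) / (1 - ρ)) := by
          ring
      _ ≤ Fintype.card I * (p * (1 - p) / (1 - ρ)) :=
          mul_le_mul_of_nonneg_right A.card_ge (by positivity)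
      _ = _ := by ring
  have hsg0 : 0 < sg := lt_of_lt_of_le (by positivity) hsg
  have hsg2 : (1 - ρ) * sg ^ 2 = p * (1 - p) * Fintype.card I := by
    rw [hsgdef, Real.sq_sqrt (by positivity)]
    field_simp
  have h1 := A.abs_wexp_boolSum_le hp hρ hc hsg hsg2 hK hg hg' hgg
  have h2 : (fun y : I → Bool => g' ((boolSum y - wexp μ boolSum) / sg) -
      (boolSum y - wexp μ boolSum) / sg * g ((boolSum y - wexp μ boolSum) / sg)) =
      fun y => ψ ((boolSum y - wexp μ boolSum) / sg) - ∫ z, ψ z ∂(gaussianReal 0 1) := by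
    funext y
    rw [hgeq]
    ring
  rw [h2, wexp_sub, wexp_const M.sum_one] at h1
  set f : (I → Bool) → ℝ := fun y => F y - κ * boolSum y with hf
  have hfvar : wvar μ f ≤ (residualConst ρ C (C + |κ|) * (l * n)) ^ 2 :=
    A.wvar_sub_mul_boolSum_le.trans (A.le_sq_residualConst hρ _)
  have hR0 : 0 ≤ residualConst ρ C (C + |κ|) := Real.sqrt_nonneg _
  have h3 := wexp_abs_sub_wexp_le M.nonneg M.sum_one (by positivity) hfvar
  have h4 : |wexp μ (fun y => ψ ((F y - wexp μ F) / (κ * sg))) -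
      wexp μ (fun y => ψ ((boolSum y - wexp μ boolSum) / sg))| ≤ K₂ * l := by
    rw [← wexp_sub]
    refine (abs_wexp_le M.nonneg _).trans ?_
    have h5 : ∀ y, |ψ ((F y - wexp μ F) / (κ * sg)) - ψ ((boolSum y - wexp μ boolSum) / sg)| ≤
        1 / (κ * sg) * |f y - wexp μ f| := fun y => by
      have h6 := hψ.dist_le_mul ((F y - wexp μ F) / (κ * sg)) ((boolSum y - wexp μ boolSum) / sg)
      rw [Real.dist_eq, Real.dist_eq, NNReal.coe_one, one_mul] at h6
      refine h6.trans (le_of_eq ?_)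
      have h7 : 1 / (κ * sg) * |f y - wexp μ f| = |1 / (κ * sg) * (f y - wexp μ f)| := by
        rw [abs_mul, abs_of_pos (show 0 < 1 / (κ * sg) by positivity)]
      rw [h7]
      congr 1
      rw [hf, wexp_sub, wexp_const_mul]
      field_simp
      ring
    refine (wexp_mono M.nonneg h5).trans ?_
    rw [wexp_const_mul]
    refine (mul_le_mul_of_nonneg_left h3 (by positivity)).trans ?_
    rw [hK₂, one_div_mul_eq_div, div_mul_eq_mul_div, div_le_div_iff₀ (by positivity)
      (by positivity)]
    have : residualConst ρ C (C + |κ|) * l * κ * (c * n) ≤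
        residualConst ρ C (C + |κ|) * l * κ * sg :=
      mul_le_mul_of_nonneg_left hsg (by positivity)
    linarith
  have h5 : (K₁ + K₂) * l ≤ |K₁ + K₂| * l :=
    mul_le_mul_of_nonneg_right (le_abs_self _) hl.le
  refine (abs_sub_le _ (wexp μ (fun y => ψ ((boolSum y - wexp μ boolSum) / sg))) _).trans ?_
  linarith

end Wasserstein

/-- **Corollary 3.4**: CLT with rate `n^{-1/4}`, in the Wasserstein distance, for general
standardized subgraph counts of an ERGM in the subcritical region. -/
theorem ergm_subgraph_count_clt {k : ℕ} (β : Fin (k + 1) → ℝ) (v : Fin (k + 1) → ℕ)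
    (H : ∀ j : Fin (k + 1), SimpleGraph (Fin (v j)))
    -- `β₂, …, β_k > 0`
    (hβ : ∀ j : Fin (k + 1), j ≠ 0 → 0 < β j)
    -- `H₁` is a single edge
    (hv0 : v 0 = 2) (he0 : eCount (H 0) = 1)
    -- the graphs have no isolated vertices
    (hnoiso : ∀ (j : Fin (k + 1)) (a : Fin (v j)), ∃ b, (H j).Adj a b)
    -- `H₂, …, H_k` have at least two edges
    (hedges : ∀ j : Fin (k + 1), j ≠ 0 → 2 ≤ eCount (H j))
    -- the subcritical region: unique fixed point `p ∈ (0,1)` with `φ_β'(p) < 1`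
    (p : ℝ) (hp : p ∈ Set.Ioo (0 : ℝ) 1)
    (hfix : phiFn β v H p = p)
    (huniq : ∀ q ∈ Set.Ioo (0 : ℝ) 1, phiFn β v H q = q → q = p)
    (hsub : deriv (phiFn β v H) p < 1)
    -- the fixed subgraph `H` with `v` vertices and `e ≥ 1` edges
    (vH : ℕ) (Hg : SimpleGraph (Fin vH)) (hHe : 1 ≤ eCount Hg) :
    ∃ C : ℝ, 0 < C ∧ ∀ n : ℕ, 2 ≤ n → ∀ ψ : ℝ → ℝ, LipschitzWith 1 ψ →
      |(∑ y : EdgeIdx n → Bool, ergmProb β v H n y *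
            ψ (((homCount Hg y : ℝ) -
                  ergmExp β v H n (fun y' => (homCount Hg y' : ℝ))) /
                (2 * (n : ℝ) ^ ((vH : ℤ) - 2) * (eCount Hg : ℝ) *
                  p ^ (eCount Hg - 1) * Real.sqrt (sigmaSq β v H p n)))) -
          ∫ z, ψ z ∂(gaussianReal 0 1)| ≤ C * (n : ℝ) ^ (-(1 / 4 : ℝ)) := by
  obtain ⟨C, hC⟩ := exists_isApproxAffine hβ he0 hp hfix huniq hsub Hg
  have he : (0 : ℝ) < eCount Hg := by exact_mod_cast hHe
  have hp0 := hp.1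
  obtain ⟨K, hK, hW⟩ := exists_wasserstein_bound hp hsub
    (show 0 < 2 * (eCount Hg : ℝ) * p ^ (eCount Hg - 1) by positivity) C
  refine ⟨K + 1, by positivity, fun n hn ψ hψ => ?_⟩
  have hn0 : (0 : ℝ) < n := by exact_mod_cast (by omega : 0 < n)
  have hl : (0 : ℝ) < (n : ℝ) ^ (-(1 / 4 : ℝ)) := Real.rpow_pos_of_pos hn0 _
  have hl4 : ((n : ℝ) ^ (-(1 / 4 : ℝ))) ^ 4 = 1 / n := by
    rw [← Real.rpow_natCast, ← Real.rpow_mul hn0.le]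
    norm_num [Real.rpow_neg_one]
  obtain ⟨Γ, A⟩ := hC n hn _ hl hl4
  refine le_trans (le_of_eq ?_) ((hW A ψ hψ).trans
    (mul_le_mul_of_nonneg_right (by linarith) hl.le))
  have hσ : sigmaSq β v H p n = Fintype.card (EdgeIdx n) * p * (1 - p) /
      (1 - deriv (phiFn β v H) p) := by
    rw [sigmaSq, card_edgeIdx, deriv_phiFn hfix]
    ring
  rw [wexp_const_mul, hσ]
  have hs : scale vH n = ((n : ℝ) ^ ((vH : ℤ) - 2))⁻¹ := by
    rw [scale, ← zpow_neg, neg_sub]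
  congr 2
  refine sum_congr rfl fun y _ => ?_
  congr 2
  change _ = (scale vH n * _ - scale vH n * ergmExp β v H n fun y' => (homCount Hg y' : ℝ)) / _
  have hz : (n : ℝ) ^ ((vH : ℤ) - 2) ≠ 0 := zpow_ne_zero _ hn0.ne'
  rw [← mul_sub, hs, inv_mul_eq_div, div_div]
  congr 1
  ring
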